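/- arXiv:math/0502331 — 2 statements merged into one kernel-verified Lean document; each statement's English description precedes it below -/
import Mathlib

section
/- Let I,J,M,N ⊆ {1,…,n} with |I| = |J| and |M| = |N|. (a) If r([I|J],[M|N]) ≠ 0, then I ≥ J, I∩M = J∩N, and I∪M = J∪N. (b) If I ≥ J, I∩M = J∩N, and I∪M = J∪N, then r([I|J],[M|N]) = q^{|I∩M|} q̂^{|I∖J|} (−q)^{λ} ξ_q(I∖J; J∖I), where λ = ℓ((J∖N)∪(M∖I); I∖J) − ℓ((J∖N)∪(M∖I); J∖I). -/
/-!
The idea is to expand the second minor `[M|N]` along its columns and to check that the closed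
formula obeys the resulting recursion.

*Comultiplication of minors.* Let `Λ` be the quantum exterior algebra on `e_1, …, e_n`. The covectors
`Σ_i X_{ij} ⊗ e_i` in `A ⊗ Λ` square to zero and `(-q)`-commute (`T_sq`, `T_comm`), and by the Laplace
expansion `qMinor_insert` the minors `[I|J]` are the coefficients of their ordered products
(`T_qMinor`). This gives `Δ[I|J] = Σ_K [I|K] ⊗ [K|J]` (`comul_qMinor`).

*Pairing with a generator.* By induction on the columns of `J`, the scalar `r([K|J], X_{mx})` is `q`
or `1` for `K = J`, `m = x` (according to whether `m ∈ J`), it is `q̂ (-q)^{-c}` when `m < x` and `K`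
arises from `J` by replacing `m ∈ J` by `x ∉ J`, with `c` the number of elements of `J` strictly
between `m` and `x`, and it is `0` otherwise (`r_qMinor_X`).

*Recursion.* Let `a` be the least element of `N`. Expanding `[M|N]` along the column `a` and using
`r(u, bc) = Σ r(u₁, c) r(u₂, b)` expresses `r([I|J],[M|N])` by the values at
`(I, J, M \ a, N \ a)` if `a ∈ M`, and at `(I, (J \ m) ∪ a, M \ m, N \ a)` for `m ∈ M ∩ J`, `m < a`,
if `a ∉ J` (`r_rec`).

*The closed formula.* The conditions `J ≤ I`, `I ∩ M = J ∩ N`, `I ∪ M = J ∪ N` say that counting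
functions satisfy `#{y ∈ I : y < x} ≤ #{y ∈ J : y < x}` and that the multisets `I + M` and `J + N`
agree (`adm_iff`). In this form they hold for an index tuple if and only if they hold in each term
of its recursion (`adm_diag`, `adm_move`), so vanishing follows by induction. When they hold, the elements
of `M` below `a` are those of `J \ I` below `a`; let `S` be their number. If `a ∈ M ∩ J`, only the
diagonal term occurs. If `a ∈ M \ J`, then `ξ` does not change, and the terms are the value times
`(-q)^{2S}` and `q̂ (-q)^{2b+1}` for `0 ≤ b < S`, which telescope to `1` (`geom_key`). If `a ∉ M`, then
`a` is the least element of `I \ J`, the first factor of `ξ` is `[S]_{-q}`, and the terms are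
`(-q)^{2b-S+1}` for `0 ≤ b < S` times the remaining factors, with sum `[S]_{-q}` times them
(`negqInt_reflect`).
-/

open scoped TensorProduct
open scoped Classical

noncomputable section

namespace QMat

variable (k : Type*) [Field k] (n : ℕ) (q : k)

/-- Defining relations of the quantized coordinate ring `O_q(M_n(k))`. -/
inductive Rel : FreeAlgebra k (Fin n × Fin n) → FreeAlgebra k (Fin n × Fin n) → Prop
  | col {i l j : Fin n} (h : i < l) :
      Rel (FreeAlgebra.ι k (i, j) * FreeAlgebra.ι k (l, j))
        (q • (FreeAlgebra.ι k (l, j) * FreeAlgebra.ι k (i, j)))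
  | row {i j m : Fin n} (h : j < m) :
      Rel (FreeAlgebra.ι k (i, j) * FreeAlgebra.ι k (i, m))
        (q • (FreeAlgebra.ι k (i, m) * FreeAlgebra.ι k (i, j)))
  | swap {i j l m : Fin n} (h1 : i < l) (h2 : m < j) :
      Rel (FreeAlgebra.ι k (i, j) * FreeAlgebra.ι k (l, m))
        (FreeAlgebra.ι k (l, m) * FreeAlgebra.ι k (i, j))
  | mixed {i j l m : Fin n} (h1 : i < l) (h2 : j < m) :
      Rel (FreeAlgebra.ι k (i, j) * FreeAlgebra.ι k (l, m))
        (FreeAlgebra.ι k (l, m) * FreeAlgebra.ι k (i, j)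
          + (q - q⁻¹) • (FreeAlgebra.ι k (i, m) * FreeAlgebra.ι k (l, j)))

/-- The quantized coordinate ring `A = O_q(M_n(k))`. -/
abbrev A : Type _ := RingQuot (Rel k n q)

/-- The generator `X_{ij}` of `O_q(M_n(k))`. -/
def X (i j : Fin n) : A k n q :=
  RingQuot.mkAlgHom k (Rel k n q) (FreeAlgebra.ι k (i, j))

/-- The number of inversions `ℓ(σ)` of a permutation of `Fin t`. -/
def inversions {t : ℕ} (σ : Equiv.Perm (Fin t)) : ℕ :=
  (Finset.univ.filter fun p : Fin t × Fin t => p.1 < p.2 ∧ σ p.2 < σ p.1).card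

/-- The quantum minor `[I|J]` (with junk value `0` when `|I| ≠ |J|`). -/
def qMinor (I J : Finset (Fin n)) : A k n q :=
  if h : I.card = J.card then
    ∑ σ : Equiv.Perm (Fin I.card),
      ((-q) ^ inversions σ) •
        (List.ofFn fun l : Fin I.card =>
          X k n q (↑((I.orderIsoOfFin rfl) (σ l))) (↑((J.orderIsoOfFin h.symm) l))).prod
  else 0

/-- `ℓ(S;T) = #{(s,t) ∈ S×T : s > t}`. -/
def ell (S T : Finset (Fin n)) : ℕ :=
  ((S ×ˢ T).filter fun p => p.2 < p.1).card

/-- The `(-q)`-integer `[d]_{-q} = (-q)^{d-1} + (-q)^{d-3} + ⋯ + (-q)^{-(d-1)}`. -/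
def negqInt (d : ℕ) : k :=
  ∑ s ∈ Finset.range d, (-q) ^ ((d : ℤ) - 1 - 2 * (s : ℤ))

/-- `ξ_q(I;J) = [d₁]_{-q}⋯[d_m]_{-q}` where `d_l = |[1,r_l] ∩ J| - l + 1` for
`I = {r₁ < ⋯ < r_m}` (with junk value `1` when `|I| ≠ |J|`). -/
def xiq (I J : Finset (Fin n)) : k :=
  if _h : I.card = J.card then
    ∏ l : Fin I.card,
      negqInt k q
        ((J.filter fun x => x ≤ (↑((I.orderIsoOfFin rfl) l) : Fin n)).card - (l : ℕ))
  else 1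

/-- The componentwise order `I ≤ J` on index sets of the same cardinality:
writing `I = {i₁ < ⋯ < i_t}` and `J = {j₁ < ⋯ < j_t}`, we require `i_l ≤ j_l` for all `l`. -/
def setLE (I J : Finset (Fin n)) : Prop :=
  I.card = J.card ∧
    ∀ (h : I.card = J.card) (l : Fin I.card),
      (↑((I.orderIsoOfFin rfl) l) : Fin n) ≤ (↑((J.orderIsoOfFin h.symm) l) : Fin n)

/-- `S^♮ = (X ∩ Y) ⊔ ((X ∪ Y) ∖ S)` relative to the pair `(X, Y)`. -/
def snat (X Y S : Finset (Fin n)) : Finset (Fin n) :=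
  (X ∩ Y) ∪ ((X ∪ Y) \ S)

/-- `S_≤(X,Y) = {S ⊆ X ∪ Y : X ∩ Y ⊆ S, |S| = |X|, S ≤ X}`. -/
def sLE (X Y : Finset (Fin n)) : Finset (Finset (Fin n)) :=
  (X ∪ Y).powerset.filter fun S => X ∩ Y ⊆ S ∧ S.card = X.card ∧ setLE n S X

/-- `S_<(X,Y) = {S ⊆ X ∪ Y : X ∩ Y ⊆ S, |S| = |X|, S < X}`. -/
def sLT (X Y : Finset (Fin n)) : Finset (Finset (Fin n)) :=
  (sLE n X Y).filter fun S => S ≠ X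

/-- `S_≥(X,Y) = {T ⊆ X ∪ Y : X ∩ Y ⊆ T, |T| = |X|, T ≥ X}`. -/
def sGE (X Y : Finset (Fin n)) : Finset (Finset (Fin n)) :=
  (X ∪ Y).powerset.filter fun T => X ∩ Y ⊆ T ∧ T.card = X.card ∧ setLE n X T

/-- `S_>(X,Y) = {T ⊆ X ∪ Y : X ∩ Y ⊆ T, |T| = |X|, T > X}`. -/
def sGT (X Y : Finset (Fin n)) : Finset (Finset (Fin n)) :=
  (sGE n X Y).filter fun T => T ≠ X

/-- `L(S,X,Y) = ℓ((S∖S^♮)∪(Y∖X); X∖S) − ℓ((S∖S^♮)∪(Y∖X); S∖X)`. -/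
def Lfun (S X Y : Finset (Fin n)) : ℤ :=
  (ell n ((S \ snat n X Y S) ∪ (Y \ X)) (X \ S) : ℤ)
    - (ell n ((S \ snat n X Y S) ∪ (Y \ X)) (S \ X) : ℤ)

/-- `L^♮(T,X,Y) = ℓ((T^♮∖T)∪(X∖Y); T∖X) − ℓ((T^♮∖T)∪(X∖Y); X∖T)`. -/
def Lnat (T X Y : Finset (Fin n)) : ℤ :=
  (ell n ((snat n X Y T \ T) ∪ (X \ Y)) (T \ X) : ℤ)
    - (ell n ((snat n X Y T \ T) ∪ (X \ Y)) (X \ T) : ℤ)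

/-- The form `A ⊗ A → k` given on pure tensors by `x ⊗ y ↦ f(x) g(y)`. -/
def biform (f g : A k n q →ₗ[k] k) : (A k n q ⊗[k] A k n q) →ₗ[k] k :=
  (TensorProduct.lid k k).toLinearMap ∘ₗ TensorProduct.map f g

/-- Opposite multiplication `A ⊗ A → A`, `x ⊗ y ↦ y * x`. -/
def mulRev : (A k n q ⊗[k] A k n q) →ₗ[k] A k n q :=
  (LinearMap.mul' k (A k n q)) ∘ₗ (TensorProduct.comm k (A k n q) (A k n q)).toLinearMap

/-- `Σ (a₁ ⊗ b₁) ⊗ (a₂ ⊗ b₂)`, the regrouped double Sweedler decomposition of `a` and `b`. -/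
def sweedler2 (Δ : A k n q →ₐ[k] A k n q ⊗[k] A k n q) (a b : A k n q) :
    (A k n q ⊗[k] A k n q) ⊗[k] (A k n q ⊗[k] A k n q) :=
  (TensorProduct.tensorTensorTensorComm k (A k n q) (A k n q) (A k n q) (A k n q))
    (Δ a ⊗ₜ[k] Δ b)

/-- `Δ` is the standard comultiplication: `Δ(X_{ij}) = Σ_l X_{il} ⊗ X_{lj}`. -/
def IsComul (Δ : A k n q →ₐ[k] A k n q ⊗[k] A k n q) : Prop :=
  ∀ i j : Fin n, Δ (X k n q i j) = ∑ l : Fin n, X k n q i l ⊗ₜ[k] X k n q l j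

/-- `ε` is the standard counit: `ε(X_{ij}) = δ_{ij}`. -/
def IsCounit (ε : A k n q →ₐ[k] k) : Prop :=
  ∀ i j : Fin n, ε (X k n q i j) = if i = j then 1 else 0

/-- The bilinear form `r` satisfies the coquasitriangularity conditions (1.7)(i)-(iv)
together with the prescribed values (1.9) on the generators. -/
def IsRForm (Δ : A k n q →ₐ[k] A k n q ⊗[k] A k n q) (ε : A k n q →ₐ[k] k)
    (r : A k n q →ₗ[k] A k n q →ₗ[k] k) : Prop :=
  -- (i) `Σ r(a₁,b₁) a₂ b₂ = Σ r(a₂,b₂) b₁ a₁`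
  (∀ a b : A k n q,
      (TensorProduct.lid k (A k n q))
          ((TensorProduct.map (TensorProduct.lift r) (LinearMap.mul' k (A k n q)))
            (sweedler2 k n q Δ a b)) =
        (TensorProduct.rid k (A k n q))
          ((TensorProduct.map (mulRev k n q) (TensorProduct.lift r))
            (sweedler2 k n q Δ a b))) ∧
  -- (ii) `r(ab, c) = Σ r(a,c₁) r(b,c₂)`
  (∀ a b c : A k n q, r (a * b) c = biform k n q (r a) (r b) (Δ c)) ∧
  -- (iii) `r(a, bc) = Σ r(a₁,c) r(a₂,b)`
  (∀ a b c : A k n q, r a (b * c) = biform k n q (r.flip c) (r.flip b) (Δ a)) ∧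
  -- (iv) `r(a,1) = r(1,a) = ε(a)`
  (∀ a : A k n q, r a 1 = ε a ∧ r 1 a = ε a) ∧
  -- values on generators
  (∀ i j l m : Fin n,
      r (X k n q i j) (X k n q l m) =
        if i = j ∧ l = m ∧ i = l then q
        else if i = j ∧ l = m then 1
        else if l = j ∧ m = i ∧ j < i then q - q⁻¹
        else 0)

/-- `Σ f(a₁,b₁) g(a₂,b₂)`, the convolution-type pairing of two bilinear forms. -/
def convPair (Δ : A k n q →ₐ[k] A k n q ⊗[k] A k n q)
    (f g : A k n q →ₗ[k] A k n q →ₗ[k] k) (a b : A k n q) : k :=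
  (TensorProduct.lid k k)
    ((TensorProduct.map (TensorProduct.lift f) (TensorProduct.lift g))
      (sweedler2 k n q Δ a b))

end QMat

open QMat

namespace QMinorPairing

/-! ### Laplace expansion along the first column -/

/-- `below S x = #{y ∈ S : y < x}`; for `x ∈ S` this is the (zero-based) rank of `x` in `S`. -/
def below {n : ℕ} (S : Finset (Fin n)) (x : Fin n) : ℕ := (S.filter fun y => y < x).card

section Minor

variable {k : Type*} [Field k] {n : ℕ} {q : k}

/-- The quantum determinant of the array `X (f a) (g b)`, with rows and columns listed by
arbitrary families `f`, `g` rather than by index sets. -/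
def qsum (k : Type*) [Field k] {n : ℕ} (q : k) (t : ℕ) (f g : Fin t → Fin n) : A k n q :=
  ∑ σ : Equiv.Perm (Fin t), ((-q) ^ inversions σ) •
    (List.ofFn fun l : Fin t => X k n q (f (σ l)) (g l)).prod

lemma inversions_eq_sum {t : ℕ} (σ : Equiv.Perm (Fin t)) :
    inversions σ = ∑ a, ∑ b, if a < b ∧ σ b < σ a then 1 else 0 := by
  unfold inversions
  rw [Finset.card_filter, ← Finset.univ_product_univ, Finset.sum_product]

/-- The permutation of `Fin (t+1)` sending `0` to `p` and inducing `τ` on the rest, after the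
order-preserving identification of the complement of `p` with `Fin t`. -/
def consPerm {t : ℕ} (p : Fin (t + 1)) (τ : Equiv.Perm (Fin t)) : Equiv.Perm (Fin (t + 1)) :=
  Equiv.ofBijective (Fin.cons p (fun l => p.succAbove (τ l)) : Fin (t + 1) → Fin (t + 1)) (by
    rw [← Finite.injective_iff_bijective, Fin.cons_injective_iff]
    refine ⟨?_, fun a b h => ?_⟩
    · rintro ⟨l, hl⟩
      exact Fin.succAbove_ne p _ hl
    · exact τ.injective (Fin.succAbove_right_injective h))

@[simp] lemma consPerm_zero {t : ℕ} (p : Fin (t + 1)) (τ : Equiv.Perm (Fin t)) :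
    consPerm p τ 0 = p := rfl

@[simp] lemma consPerm_succ {t : ℕ} (p : Fin (t + 1)) (τ : Equiv.Perm (Fin t)) (l : Fin t) :
    consPerm p τ l.succ = p.succAbove (τ l) := rfl

lemma consPerm_bijective (t : ℕ) :
    Function.Bijective (fun x : Fin (t + 1) × Equiv.Perm (Fin t) => consPerm x.1 x.2) := by
  rw [Fintype.bijective_iff_injective_and_card]
  constructor
  · rintro ⟨p, τ⟩ ⟨p', τ'⟩ h
    have h0 : p = p' := by
      have := congrArg (fun s : Equiv.Perm (Fin (t + 1)) => s 0) h
      simpa using this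
    subst h0
    have h1 : τ = τ' := by
      ext l
      have := congrArg (fun s : Equiv.Perm (Fin (t + 1)) => s l.succ) h
      have h2 : p.succAbove (τ l) = p.succAbove (τ' l) := by simpa using this
      rw [Fin.succAbove_right_injective h2]
    rw [h1]
  · simp [Fintype.card_perm, Nat.factorial_succ]

/-- Placing `p` first creates `p` new inversions; together with `consPerm_bijective` this gives the
Laplace expansion. -/
lemma inversions_consPerm {t : ℕ} (p : Fin (t + 1)) (τ : Equiv.Perm (Fin t)) :
    inversions (consPerm p τ) = p + inversions τ := by
  rw [inversions_eq_sum, inversions_eq_sum, Fin.sum_univ_succ]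
  congr 1
  · rw [Fin.sum_univ_succ]
    simp only [lt_irrefl, false_and, if_false, zero_add, Fin.succ_pos, true_and, consPerm_zero,
      consPerm_succ]
    rw [Equiv.sum_comp τ (fun l => if p.succAbove l < p then 1 else 0)]
    have h := Fin.sum_univ_succAbove (fun x : Fin (t + 1) => if x < p then 1 else 0) p
    simp only [lt_irrefl, if_false, zero_add] at h
    rw [← h, ← Finset.card_filter]
    have : (Finset.univ.filter fun x : Fin (t + 1) => x < p) = Finset.Iio p := by
      ext; simp
    rw [this, Fin.card_Iio]
  · refine Finset.sum_congr rfl fun a _ => ?_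
    rw [Fin.sum_univ_succ]
    simp [Fin.succAbove_lt_succAbove_iff]

/-- Laplace expansion along the first column, for arrays indexed by arbitrary families. -/
lemma qsum_succ (t : ℕ) (f g : Fin (t + 1) → Fin n) :
    qsum k q (t + 1) f g = ∑ p : Fin (t + 1), ((-q) ^ (p : ℕ)) •
      (X k n q (f p) (g 0) * qsum k q t (fun l => f (p.succAbove l)) (fun l => g l.succ)) := by
  unfold qsum
  rw [← (consPerm_bijective t).sum_comp, Fintype.sum_prod_type]
  refine Finset.sum_congr rfl fun p _ => ?_
  rw [Finset.mul_sum, Finset.smul_sum]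
  refine Finset.sum_congr rfl fun τ _ => ?_
  simp only [inversions_consPerm, List.ofFn_succ, consPerm_zero, consPerm_succ, List.prod_cons]
  rw [pow_add, mul_smul, mul_smul_comm]

lemma qMinor_eq_qsum (t : ℕ) (I J : Finset (Fin n)) (hI : I.card = t) (hJ : J.card = t) :
    qMinor k n q I J = qsum k q t (I.orderEmbOfFin hI) (J.orderEmbOfFin hJ) := by
  subst hI
  unfold qMinor qsum
  rw [dif_pos hJ.symm]
  rfl

lemma below_orderEmb {t : ℕ} (I : Finset (Fin n)) (hI : I.card = t) (p : Fin t) :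
    below I (I.orderEmbOfFin hI p) = p := by
  unfold below
  have : (I.filter fun y => y < I.orderEmbOfFin hI p)
      = (Finset.Iio p).map (I.orderEmbOfFin hI).toEmbedding := by
    ext y
    simp only [Finset.mem_filter, Finset.mem_map, Finset.mem_Iio, RelEmbedding.coe_toEmbedding]
    constructor
    · rintro ⟨hy, hlt⟩
      have : y ∈ Set.range (I.orderEmbOfFin hI) := by simpa using hy
      obtain ⟨a, rfl⟩ := this
      exact ⟨a, by simpa using hlt, rfl⟩
    · rintro ⟨a, ha, rfl⟩
      exact ⟨Finset.orderEmbOfFin_mem _ _ _, by simpa using ha⟩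
  rw [this, Finset.card_map, Fin.card_Iio]

/-- Laplace expansion along the first column. No cardinality hypothesis is needed, since both
sides vanish when the minors are not square. -/
lemma qMinor_insert (I J : Finset (Fin n)) (j : Fin n) (hj : ∀ x ∈ J, j < x) :
    qMinor k n q I (insert j J) = ∑ i ∈ I, ((-q) ^ below I i) •
      (X k n q i j * qMinor k n q (I.erase i) J) := by
  have hjJ : j ∉ J := fun h => lt_irrefl _ (hj j h)
  have hc : (insert j J).card = J.card + 1 := Finset.card_insert_of_notMem hjJ
  by_cases hI : I.card = J.card + 1
  · rw [qMinor_eq_qsum (J.card + 1) I _ hI hc, qsum_succ]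
    have hmap : I = Finset.univ.map (I.orderEmbOfFin hI).toEmbedding := by
      ext y; simp
    have hz : (insert j J).orderEmbOfFin hc 0 = j ∧
        ∀ l, (insert j J).orderEmbOfFin hc (Fin.succ l) = J.orderEmbOfFin rfl l := by
      have hu := Finset.orderEmbOfFin_unique hc
        (f := (Fin.cons j (J.orderEmbOfFin rfl) : Fin (J.card + 1) → Fin n))
        (by intro x; refine Fin.cases ?_ (fun l => ?_) x <;> simp)
        (by
          rw [Fin.strictMono_iff_lt_succ]
          intro i
          by_cases hi : (i : ℕ) = 0
          · have : i.castSucc = 0 := by ext; simpa using hi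
            rw [this]; simp only [Fin.cons_zero, Fin.cons_succ]
            exact hj _ (Finset.orderEmbOfFin_mem _ _ _)
          · obtain ⟨i', hi'⟩ : ∃ i', i.castSucc = Fin.succ i' :=
              ⟨⟨i - 1, by omega⟩, by ext; simp; omega⟩
            rw [hi', Fin.cons_succ, Fin.cons_succ]
            apply (J.orderEmbOfFin rfl).strictMono
            rw [Fin.lt_def]
            have := congrArg Fin.val hi'
            simp at this; omega)
      refine ⟨?_, fun l => ?_⟩
      · rw [← hu]; rfl
      · rw [← hu]; rfl
    conv_rhs => rw [show (∑ i ∈ I, ((-q) ^ below I i) •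
      (X k n q i j * qMinor k n q (I.erase i) J)) = ∑ i ∈ Finset.univ.map
        (I.orderEmbOfFin hI).toEmbedding, ((-q) ^ below I i) •
      (X k n q i j * qMinor k n q (I.erase i) J) by rw [← hmap]]
    rw [Finset.sum_map]
    refine Finset.sum_congr rfl fun p _ => ?_
    simp only [RelEmbedding.coe_toEmbedding]
    have hmem : I.orderEmbOfFin hI p ∈ I := Finset.orderEmbOfFin_mem _ _ _
    have hce : (I.erase (I.orderEmbOfFin hI p)).card = J.card := by
      rw [Finset.card_erase_of_mem hmem, hI]; rfl
    have hu := Finset.orderEmbOfFin_unique hce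
      (f := fun l => I.orderEmbOfFin hI (p.succAbove l))
      (by
        intro x
        refine Finset.mem_erase.2 ⟨?_, Finset.orderEmbOfFin_mem _ _ _⟩
        intro h
        exact Fin.succAbove_ne p x ((I.orderEmbOfFin hI).injective h))
      ((I.orderEmbOfFin hI).strictMono.comp (Fin.strictMono_succAbove p))
    rw [below_orderEmb, qMinor_eq_qsum J.card _ J hce rfl, hz.1, ← hu]
    simp only [hz.2]
  · rw [qMinor, dif_neg (by omega), Finset.sum_eq_zero]
    intro i hi
    have : (I.erase i).card ≠ J.card := by
      rw [Finset.card_erase_of_mem hi]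
      have := Finset.card_pos.2 ⟨i, hi⟩
      omega
    rw [qMinor, dif_neg this, mul_zero, smul_zero]

/-- For `I ≠ ∅` the value comes from the convention `[I|∅] = 0`. -/
lemma qMinor_empty (I : Finset (Fin n)) :
    qMinor k n q I ∅ = if I = ∅ then 1 else 0 := by
  split_ifs with h
  · subst h
    rw [qMinor_eq_qsum 0 ∅ ∅ rfl rfl]
    simp [qsum, inversions]
  · rw [qMinor, dif_neg]
    simpa using h

end Minor

/-! ### Counting below a point -/

section Counting

variable {n : ℕ}

lemma below_insert {S : Finset (Fin n)} {a : Fin n} (h : a ∉ S) (x : Fin n) :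
    below (insert a S) x = below S x + if a < x then 1 else 0 := by
  unfold below
  rw [Finset.filter_insert]
  split_ifs
  · rw [Finset.card_insert_of_notMem (by simp [h])]
  · rfl

lemma below_erase {S : Finset (Fin n)} {a : Fin n} (h : a ∈ S) (x : Fin n) :
    below (S.erase a) x + (if a < x then 1 else 0) = below S x := by
  conv_rhs => rw [← Finset.insert_erase h]
  rw [below_insert (Finset.notMem_erase a S)]

lemma below_erase_le {S : Finset (Fin n)} {a x : Fin n} (h : x ≤ a) :
    below (S.erase a) x = below S x := by
  by_cases ha : a ∈ S
  · rw [← below_erase ha, if_neg (not_lt.2 h), add_zero]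
  · rw [Finset.erase_eq_of_notMem ha]

lemma below_insert_le {S : Finset (Fin n)} {a x : Fin n} (h : x ≤ a) :
    below (insert a S) x = below S x := by
  by_cases ha : a ∈ S
  · rw [Finset.insert_eq_of_mem ha]
  · rw [below_insert ha, if_neg (not_lt.2 h), add_zero]

lemma below_eq_zero {S : Finset (Fin n)} {x : Fin n} (h : ∀ y ∈ S, x ≤ y) : below S x = 0 := by
  unfold below
  rw [Finset.card_eq_zero, Finset.filter_eq_empty_iff]
  exact fun y hy => not_lt.2 (h y hy)

lemma below_eq_card {S : Finset (Fin n)} {x : Fin n} (h : ∀ y ∈ S, y < x) :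
    below S x = S.card := by
  unfold below
  rw [Finset.filter_true_of_mem h]

lemma sum_below_eq {M : Type*} [AddCommMonoid M] (φ : ℕ → M) (S : Finset (Fin n)) :
    ∑ i ∈ S, φ (below S i) = ∑ a ∈ Finset.range S.card, φ a := by
  induction S using Finset.induction_on_max with
  | empty => simp
  | insert a s h ih =>
    have ha : a ∉ s := fun h' => lt_irrefl _ (h a h')
    rw [Finset.sum_insert ha, Finset.card_insert_of_notMem ha, Finset.sum_range_succ,
      below_insert_le le_rfl, below_eq_card h, ← ih, add_comm]
    congr 1
    exact Finset.sum_congr rfl fun i hi => by rw [below_insert_le (h i hi).le]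

/-- Summation over the elements of `S` below `x` reindexed by their rank in `S`. -/
lemma sum_below_filter {M : Type*} [AddCommMonoid M] (φ : ℕ → M) (S : Finset (Fin n))
    (x : Fin n) :
    ∑ i ∈ S with i < x, φ (below S i) = ∑ a ∈ Finset.range (below S x), φ a := by
  unfold below
  rw [← sum_below_eq]
  refine Finset.sum_congr rfl fun i hi => ?_
  congr 1
  unfold below
  rw [Finset.filter_filter]
  congr 1
  ext y
  simp only [Finset.mem_filter] at hi ⊢
  exact ⟨fun h => ⟨h.1, h.2.trans hi.2, h.2⟩, fun h => ⟨h.1, h.2.2⟩⟩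

/-- A sum over ordered pairs of distinct elements, grouped by unordered pairs. -/
lemma sum_off_diag {M : Type*} [AddCommMonoid M] (I : Finset (Fin n)) (h : Fin n → Fin n → M) :
    ∑ i ∈ I, ∑ i' ∈ I.erase i, h i i'
      = ∑ i ∈ I, ∑ i' ∈ I, if i < i' then h i i' + h i' i else 0 := by
  have h1 : ∀ i ∈ I, ∑ i' ∈ I.erase i, h i i'
      = ∑ i' ∈ I, (if i < i' then h i i' else 0) + ∑ i' ∈ I, (if i' < i then h i i' else 0) := by
    intro i hi
    rw [← Finset.sum_add_distrib, ← Finset.sum_erase_add _ _ hi]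
    simp only [lt_irrefl, if_false, add_zero]
    refine Finset.sum_congr rfl fun i' hi' => ?_
    rcases lt_or_gt_of_ne (Finset.ne_of_mem_erase hi') with h | h
    · simp [h, h.not_gt]
    · simp [h, h.not_gt]
  rw [Finset.sum_congr rfl h1, Finset.sum_add_distrib]
  conv_lhs => rw [add_comm, Finset.sum_comm, add_comm]
  rw [← Finset.sum_add_distrib]
  refine Finset.sum_congr rfl fun i _ => ?_
  rw [← Finset.sum_add_distrib]
  refine Finset.sum_congr rfl fun i' _ => ?_
  split_ifs <;> simp

/-- Reindexing by the bijection `K ↦ insert l K` from the sets avoiding `l` to the sets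
containing `l`. -/
lemma sum_insert_erase {M : Type*} [AddCommMonoid M] (l : Fin n)
    (G : Finset (Fin n) → Finset (Fin n) → M) :
    (∑ K : Finset (Fin n), if l ∈ K then 0 else G K (insert l K))
      = ∑ K : Finset (Fin n), if l ∈ K then G (K.erase l) K else 0 := by
  have : ∀ K : Finset (Fin n), (if l ∈ K then 0 else G K (insert l K))
      = if l ∉ K then G K (insert l K) else 0 := by
    intro K; split_ifs <;> simp_all
  simp only [this]
  rw [← Finset.sum_filter, ← Finset.sum_filter]
  refine Finset.sum_nbij' (fun K => insert l K) (fun K => K.erase l) ?_ ?_ ?_ ?_ ?_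
  · intro K; simp
  · intro K; simp
  · intro K hK; simp only [Finset.mem_filter] at hK; exact Finset.erase_insert hK.2
  · intro K hK; simp only [Finset.mem_filter] at hK; exact Finset.insert_erase hK.2
  · intro K hK
    simp only [Finset.mem_filter] at hK
    simp only [Finset.erase_insert hK.2]

end Counting

/-! ### The quantum exterior coaction -/

section Exterior

variable {k : Type*} [Field k] {n : ℕ} {q : k}

lemma X_col {i l : Fin n} (j : Fin n) (h : i < l) :
    X k n q i j * X k n q l j = q • (X k n q l j * X k n q i j) := by
  unfold X
  rw [← map_mul, ← map_mul, ← map_smul]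
  exact RingQuot.mkAlgHom_rel k (Rel.col h)

lemma X_swap {i j l m : Fin n} (h1 : i < l) (h2 : m < j) :
    X k n q i j * X k n q l m = X k n q l m * X k n q i j := by
  unfold X
  rw [← map_mul, ← map_mul]
  exact RingQuot.mkAlgHom_rel k (Rel.swap h1 h2)

lemma X_mixed {i j l m : Fin n} (h1 : i < l) (h2 : j < m) :
    X k n q i j * X k n q l m = X k n q l m * X k n q i j
      + (q - q⁻¹) • (X k n q i m * X k n q l j) := by
  unfold X
  rw [← map_mul, ← map_mul, ← map_mul, ← map_smul, ← map_add]
  exact RingQuot.mkAlgHom_rel k (Rel.mixed h1 h2)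

/-- Left multiplication by the covector `Σ_i X_{ij} ⊗ e_i` on `A ⊗ Λ`, where `Λ` is the quantum
exterior algebra on `e_1, …, e_n`; an element `Σ_I w_I ⊗ e_I` of `A ⊗ Λ` is encoded by its
coefficient family `w`. -/
def T (k : Type*) [Field k] {n : ℕ} (q : k) (j : Fin n) (w : Finset (Fin n) → A k n q) :
    Finset (Fin n) → A k n q :=
  fun I => ∑ i ∈ I, ((-q) ^ below I i) • (X k n q i j * w (I.erase i))

lemma T_zero (j : Fin n) : T k q j 0 = 0 := by
  ext I; simp [T]

lemma T_smul (j : Fin n) (c : k) (w : Finset (Fin n) → A k n q) :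
    T k q j (c • w) = c • T k q j w := by
  ext I
  simp only [T, Pi.smul_apply, Finset.smul_sum, mul_smul_comm]
  exact Finset.sum_congr rfl fun i _ => smul_comm _ _ _

/-- Two successive multiplications, with the terms for `(i, i')` and `(i', i)` collected: the sign
rule of `Λ` turns them into a single combination of `X_{ij} X_{i'j'}` and `X_{i'j} X_{ij'}`. -/
lemma T_T (j j' : Fin n) (w : Finset (Fin n) → A k n q) (I : Finset (Fin n)) :
    T k q j (T k q j' w) I = ∑ i ∈ I, ∑ i' ∈ I, if i < i' then
      ((-q) ^ (below I i + below (I.erase i) i')) •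
        ((X k n q i j * X k n q i' j' - q • (X k n q i' j * X k n q i j')) *
          w ((I.erase i).erase i')) else 0 := by
  simp only [T, Finset.mul_sum, Finset.smul_sum]
  rw [sum_off_diag]
  refine Finset.sum_congr rfl fun i hi => Finset.sum_congr rfl fun i' hi' => ?_
  split_ifs with h
  · have e1 : below (I.erase i') i = below I i := below_erase_le h.le
    have e2 : below I i' = below (I.erase i) i' + 1 := by
      rw [← below_erase hi, if_pos h]
    rw [e1, e2, Finset.erase_right_comm (a := i') (b := i), mul_smul_comm, mul_smul_comm,
      smul_smul, smul_smul, sub_mul, smul_sub, smul_mul_assoc, smul_smul, mul_assoc, mul_assoc,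
      sub_eq_add_neg, ← neg_smul]
    congr 2
    all_goals ring
  · rfl

/-- The column relation makes the covectors square to zero. -/
lemma T_sq (j : Fin n) (w : Finset (Fin n) → A k n q) : T k q j (T k q j w) = 0 := by
  ext I
  rw [T_T, Pi.zero_apply]
  refine Finset.sum_eq_zero fun i _ => Finset.sum_eq_zero fun i' _ => ?_
  split_ifs with h
  · rw [X_col j h, sub_self, zero_mul, smul_zero]
  · rfl

/-- The covectors for two columns `(-q)`-commute, by the relations between two columns. -/
lemma T_comm (hq : q ≠ 0) {j j' : Fin n} (h : j < j') (w : Finset (Fin n) → A k n q) :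
    T k q j' (T k q j w) = (-q) • T k q j (T k q j' w) := by
  ext I
  rw [Pi.smul_apply, T_T, T_T, Finset.smul_sum]
  refine Finset.sum_congr rfl fun i _ => ?_
  rw [Finset.smul_sum]
  refine Finset.sum_congr rfl fun i' _ => ?_
  split_ifs with hi
  · rw [smul_comm, ← smul_mul_assoc (-q)]
    congr 2
    rw [X_swap hi h, X_mixed hi h, X_swap hi h]
    match_scalars
    all_goals field_simp
    all_goals ring
  · rw [smul_zero]

/-- The family `I ↦ [I|J]` is the ordered product of the covectors of the columns in `J`. Hence
multiplying it by a further covector `l` gives `0` when `l ∈ J`, and otherwise moves `l` past the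
smaller columns at the cost of a power of `-q`. -/
lemma T_qMinor (hq : q ≠ 0) (J : Finset (Fin n)) (l : Fin n) :
    T k q l (fun I => qMinor k n q I J) = if l ∈ J then 0 else
      ((-q) ^ below J l) • fun I => qMinor k n q I (insert l J) := by
  have lap : ∀ (S : Finset (Fin n)) (j : Fin n), (∀ x ∈ S, j < x) →
      T k q j (fun I => qMinor k n q I S) = fun I => qMinor k n q I (insert j S) := by
    intro S j hj
    ext I
    rw [qMinor_insert I S j hj]
    rfl
  induction J using Finset.induction_on_min with
  | empty =>
    rw [lap _ _ (by simp), if_neg (by simp), below_eq_zero (by simp), pow_zero, one_smul]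
  | insert a s h ih =>
    have ha : a ∉ s := fun h' => lt_irrefl _ (h a h')
    rcases lt_trichotomy l a with hl | rfl | hl
    · have h2 : ∀ x ∈ insert a s, l < x := by
        intro x hx
        rcases Finset.mem_insert.1 hx with rfl | hx
        · exact hl
        · exact hl.trans (h x hx)
      rw [lap _ _ h2, if_neg (fun h' => lt_irrefl _ (h2 l h')),
        below_eq_zero (fun y hy => (h2 y hy).le), pow_zero, one_smul]
    · rw [← lap _ _ h, T_sq, if_pos (Finset.mem_insert_self _ _)]
    · rw [← lap _ _ h, T_comm hq hl, ih]
      by_cases hls : l ∈ s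
      · rw [if_pos hls, if_pos (Finset.mem_insert_of_mem hls), T_zero, smul_zero]
      · rw [if_neg hls, if_neg (by simp [hls, hl.ne']), T_smul, lap, smul_smul,
          below_insert ha, if_pos hl, pow_succ', Finset.insert_comm]
        intro x hx
        rcases Finset.mem_insert.1 hx with rfl | hx
        · exact hl
        · exact h x hx

variable {Δ : A k n q →ₐ[k] A k n q ⊗[k] A k n q} {ε : A k n q →ₐ[k] k}

/-- The quantum minors form a matrix coalgebra: `Δ[I|J] = Σ_K [I|K] ⊗ [K|J]`. -/
lemma comul_qMinor (hq : q ≠ 0) (hΔ : IsComul k n q Δ) (I J : Finset (Fin n)) :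
    Δ (qMinor k n q I J) = ∑ K, qMinor k n q I K ⊗ₜ[k] qMinor k n q K J := by
  induction J using Finset.induction_on_min generalizing I with
  | empty =>
    rw [Finset.sum_eq_single ∅]
    · rw [qMinor_empty, qMinor_empty, if_pos rfl]
      split_ifs <;> simp [Algebra.TensorProduct.one_def]
    · intro K _ hK
      rw [qMinor_empty K, if_neg hK, TensorProduct.tmul_zero]
    · simp
  | insert a s h ih =>
    -- multiplicativity of `Δ` applied to the Laplace expansion; the left legs assemble into `T`
    have step1 : Δ (qMinor k n q I (insert a s)) = ∑ l, ∑ K,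
        T k q l (fun I => qMinor k n q I K) I ⊗ₜ[k] (X k n q l a * qMinor k n q K s) := by
      rw [qMinor_insert I s a h]
      simp only [T, map_sum, map_smul, map_mul, hΔ _ _, ih, TensorProduct.sum_tmul,
        Finset.sum_mul, Finset.mul_sum, Finset.smul_sum,
        Algebra.TensorProduct.tmul_mul_tmul, TensorProduct.smul_tmul']
      rw [Finset.sum_comm]
      exact (Finset.sum_congr rfl fun _ _ => Finset.sum_comm).trans Finset.sum_comm
    have step2 : ∀ l, ∑ K,
        T k q l (fun I => qMinor k n q I K) I ⊗ₜ[k] (X k n q l a * qMinor k n q K s)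
        = ∑ K : Finset (Fin n), if l ∈ K then qMinor k n q I K ⊗ₜ[k]
          (((-q) ^ below K l) • (X k n q l a * qMinor k n q (K.erase l) s)) else 0 := by
      intro l
      have := sum_insert_erase l (fun K K' => qMinor k n q I K' ⊗ₜ[k]
          (((-q) ^ below K l) • (X k n q l a * qMinor k n q K s)))
      simp only [below_erase_le (le_refl l)] at this
      rw [← this]
      refine Finset.sum_congr rfl fun K _ => ?_
      rw [T_qMinor hq]
      split_ifs
      · rw [Pi.zero_apply, TensorProduct.zero_tmul]
      · rw [Pi.smul_apply, TensorProduct.smul_tmul]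
    rw [step1, Finset.sum_congr rfl fun l _ => step2 l, Finset.sum_comm]
    refine Finset.sum_congr rfl fun K _ => ?_
    rw [qMinor_insert K s a h, TensorProduct.tmul_sum, ← Finset.sum_filter]
    refine Finset.sum_congr ?_ fun _ _ => rfl
    ext; simp

lemma counit_qMinor (hε : IsCounit k n q ε) (I J : Finset (Fin n)) :
    ε (qMinor k n q I J) = if I = J then 1 else 0 := by
  induction J using Finset.induction_on_min generalizing I with
  | empty => rw [qMinor_empty]; split_ifs <;> simp
  | insert a s h ih =>
    have ha : a ∉ s := fun h' => lt_irrefl _ (h a h')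
    rw [qMinor_insert I s a h]
    simp only [map_sum, map_smul, map_mul, hε _ _, ih, smul_eq_mul,
      mul_ite, mul_one, mul_zero]
    simp only [← ite_and, and_comm (a := I.erase _ = s)]
    simp only [ite_and]
    rw [Finset.sum_ite_eq']
    by_cases haI : a ∈ I
    · rw [if_pos haI]
      by_cases hI : I.erase a = s
      · rw [if_pos hI, if_pos (by rw [← hI, Finset.insert_erase haI]), ← below_erase_le le_rfl, hI,
          below_eq_zero (fun y hy => (h y hy).le), pow_zero]
      · rw [if_neg hI, if_neg]
        rintro rfl
        exact hI (Finset.erase_insert ha)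
    · rw [if_neg haI, if_neg]
      rintro rfl
      exact haI (Finset.mem_insert_self _ _)

end Exterior

/-! ### Pairing a minor with a generator -/

section Pairing

/-- `mid S m x = #{y ∈ S : m < y < x}`. -/
def mid {n : ℕ} (S : Finset (Fin n)) (m x : Fin n) : ℕ :=
  (S.filter fun y => m < y ∧ y < x).card

lemma below_add_mid {n : ℕ} (S : Finset (Fin n)) {m x : Fin n} (hm : m < x) :
    below S m + (if m ∈ S then 1 else 0) + mid S m x = below S x := by
  have h1 : (if m ∈ S then 1 else 0) = (S.filter fun y => y = m).card := by
    rw [Finset.filter_eq']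
    split_ifs <;> simp
  unfold below mid
  rw [h1, ← Finset.card_union_of_disjoint, ← Finset.card_union_of_disjoint]
  · congr 1
    ext y
    simp only [Finset.mem_union, Finset.mem_filter]
    constructor
    · rintro ((⟨h, h'⟩ | ⟨h, rfl⟩) | ⟨h, h'⟩)
      · exact ⟨h, h'.trans hm⟩
      · exact ⟨h, hm⟩
      · exact ⟨h, h'.2⟩
    · rintro ⟨h, h'⟩
      rcases lt_trichotomy y m with h1 | h1 | h1
      · exact Or.inl (Or.inl ⟨h, h1⟩)
      · exact Or.inl (Or.inr ⟨h, h1⟩)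
      · exact Or.inr ⟨h, h1, h'⟩
  · rw [Finset.disjoint_left]
    intro y
    simp only [Finset.mem_union, Finset.mem_filter]
    rintro (⟨h, h'⟩ | ⟨h, rfl⟩) ⟨_, h'', _⟩
    · exact lt_asymm h' h''
    · exact lt_irrefl _ h''
  · rw [Finset.disjoint_left]
    intro y
    simp only [Finset.mem_filter]
    rintro ⟨h, h'⟩ ⟨_, rfl⟩
    exact lt_irrefl _ h'

lemma mid_insert_le {n : ℕ} (S : Finset (Fin n)) {a m : Fin n} (h : a ≤ m) (x : Fin n) :
    mid (insert a S) m x = mid S m x := by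
  unfold mid
  rw [Finset.filter_insert, if_neg]
  exact fun h' => absurd h'.1 (not_lt.2 h)

variable {k : Type*} [Field k] {n : ℕ} {q : k}

/-- The value of `r([K|J], X_{mx})`: it is diagonal for `m = x`, and for `m < x` it moves the
element `m` of `J` to `x`. -/
def gval (q : k) (K J : Finset (Fin n)) (m x : Fin n) : k :=
  (if K = J ∧ m = x then (if m ∈ J then q else 1) else 0)
  + (if m ∈ J ∧ x ∉ J ∧ m < x ∧ K = insert x (J.erase m) then
      (q - q⁻¹) * (-q) ^ (-(mid J m x : ℤ)) else 0)

/-- The telescoping geometric sum used when the least column of `[M|N]` belongs to `M`. -/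
lemma geom_key (hq : q ≠ 0) (s : ℕ) :
    (q - q⁻¹) * ∑ a ∈ Finset.range s, (-q) ^ (2 * (a : ℤ) + 1) = 1 - (-q) ^ (2 * (s : ℤ)) := by
  have hq' : -q ≠ 0 := neg_ne_zero.2 hq
  induction s with
  | zero => simp
  | succ s ih =>
    rw [Finset.sum_range_succ, mul_add, ih]
    have e1 : (-q) ^ (2 * (s : ℤ) + 1) = (-q) ^ (2 * (s : ℤ)) * (-q) := zpow_add_one₀ hq' _
    have e2 : (-q) ^ (2 * ((s + 1 : ℕ) : ℤ)) = (-q) ^ (2 * (s : ℤ)) * (-q) * (-q) := by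
      rw [← zpow_add_one₀ hq', ← zpow_add_one₀ hq']; congr 1
    rw [e1, e2]
    field_simp
    ring

/-- `(-q)^N + q̂ Σ_{a<N} (-q)^{2a-N+1} = (-q)^{-N}`. -/
lemma geom_one (hq : q ≠ 0) (N : ℕ) :
    (-q) ^ (N : ℤ) + (q - q⁻¹) * ∑ a ∈ Finset.range N, (-q) ^ (2 * (a : ℤ) - N + 1)
      = (-q) ^ (-(N : ℤ)) := by
  have hq' : -q ≠ 0 := neg_ne_zero.2 hq
  have h1 : ∑ a ∈ Finset.range N, (-q) ^ (2 * (a : ℤ) - N + 1)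
      = (-q) ^ (-(N : ℤ)) * ∑ a ∈ Finset.range N, (-q) ^ (2 * (a : ℤ) + 1) := by
    rw [Finset.mul_sum]
    refine Finset.sum_congr rfl fun a _ => ?_
    rw [← zpow_add₀ hq']; congr 1; ring
  rw [h1, mul_left_comm, geom_key hq, mul_sub, mul_one, ← zpow_add₀ hq',
    show -(N : ℤ) + 2 * N = N by ring]
  ring

variable {Δ : A k n q →ₐ[k] A k n q ⊗[k] A k n q} {ε : A k n q →ₐ[k] k}
  {r : A k n q →ₗ[k] A k n q →ₗ[k] k}

lemma r_mul_X (hΔ : IsComul k n q Δ) (hr : IsRForm k n q Δ ε r) (a b : A k n q) (m x : Fin n) :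
    r (a * b) (X k n q m x) = ∑ l, r a (X k n q m l) * r b (X k n q l x) := by
  rw [hr.2.1, hΔ]
  simp [biform]

lemma r_qMinor_mul (hq : q ≠ 0) (hΔ : IsComul k n q Δ) (hr : IsRForm k n q Δ ε r)
    (I J : Finset (Fin n)) (b c : A k n q) :
    r (qMinor k n q I J) (b * c) = ∑ K, r (qMinor k n q I K) c * r (qMinor k n q K J) b := by
  rw [hr.2.2.1, comul_qMinor hq hΔ]
  simp [biform]

/-- Contracting the values of `r` on generators against an arbitrary family. -/
lemma sum_r_X_X (hr : IsRForm k n q Δ ε r) (i a m : Fin n) (φ : Fin n → k) :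
    ∑ l, r (X k n q i a) (X k n q m l) * φ l =
      (if i = a then (if m = a then q else 1) * φ m else 0)
        + (if m = a ∧ a < i then (q - q⁻¹) * φ i else 0) := by
  have hv := hr.2.2.2.2
  by_cases hi : i = a
  · subst hi
    rw [Finset.sum_eq_single m]
    · rw [hv]
      by_cases hm : m = i
      · subst hm; simp
      · have : ¬ i = m := fun h => hm h.symm
        simp [hm, this]
    · intro l _ hl
      rw [hv, if_neg, if_neg, if_neg, zero_mul]
      · exact fun h => lt_irrefl _ h.2.2
      · exact fun h => hl h.2.symm
      · exact fun h => hl h.2.1.symm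
    · simp
  · rw [Finset.sum_eq_single i]
    · rw [hv]
      simp [hi]
    · intro l _ hl
      rw [hv, if_neg, if_neg, if_neg, zero_mul]
      · exact fun h => hl h.2.1
      · exact fun h => hi h.1
      · exact fun h => hi h.1
    · simp

/-- Induction on the least column `a` of `J`: the Laplace expansion of `[K|J]` writes the pairing as
a term in which `X_{ia}` acts diagonally plus, when `m = a`, a sum over the rows `i > a`; that sum
is collapsed to one power of `-q` by `geom_one`. -/
lemma r_qMinor_X (hq : q ≠ 0) (hΔ : IsComul k n q Δ) (hε : IsCounit k n q ε)
    (hr : IsRForm k n q Δ ε r) (K J : Finset (Fin n)) (m x : Fin n) :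
    r (qMinor k n q K J) (X k n q m x) = gval q K J m x := by
  induction J using Finset.induction_on_min generalizing K m x with
  | empty =>
    rw [qMinor_empty]
    by_cases hK : K = ∅
    · rw [if_pos hK, (hr.2.2.2.1 _).2, hε]
      simp [gval, hK]
    · simp [gval, hK]
  | insert a s h ih =>
    have ha : a ∉ s := fun h' => lt_irrefl _ (h a h')
    have step : r (qMinor k n q K (insert a s)) (X k n q m x) =
        (if a ∈ K then (-q) ^ below K a * ((if m = a then q else 1) * gval q (K.erase a) s m x)
          else 0)
        + (if m = a then ∑ i ∈ K with a < i,
            (-q) ^ below K i * ((q - q⁻¹) * gval q (K.erase i) s i x) else 0) := by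
      rw [qMinor_insert K s a h]
      simp only [map_sum, map_smul, LinearMap.sum_apply, LinearMap.smul_apply, r_mul_X hΔ hr, ih,
        sum_r_X_X hr, smul_eq_mul, mul_add, Finset.sum_add_distrib]
      congr 1
      · simp only [mul_ite, mul_zero]
        rw [Finset.sum_ite_eq']
      · by_cases hm : m = a
        · rw [if_pos hm, Finset.sum_filter]
          refine Finset.sum_congr rfl fun i _ => ?_
          simp [hm]
        · simp [hm]
    rw [step]
    by_cases hma : m = a
    · subst hma
      rw [if_pos rfl, if_pos rfl]
      have first : (if m ∈ K then (-q) ^ below K m * (q * gval q (K.erase m) s m x) else 0)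
          = if K = insert m s ∧ m = x then q else 0 := by
        by_cases hK : K = insert m s
        · subst hK
          rw [if_pos (Finset.mem_insert_self _ _), Finset.erase_insert ha, below_insert_le le_rfl,
            below_eq_zero (fun y hy => (h y hy).le)]
          by_cases hx : m = x <;> simp [gval, ha, hx]
          simp [← hx, ha]
        · have h0 : ¬ (K = insert m s ∧ m = x) := fun h' => hK h'.1
          rw [if_neg h0]
          split_ifs with hmK
          · have : K.erase m ≠ s := by
              rintro rfl
              exact hK (Finset.insert_erase hmK).symm
            simp [gval, this, ha]
          · rfl
      rw [first]
      unfold gval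
      congr 1
      · simp
      · by_cases hc : x ∉ insert m s ∧ m < x
        · obtain ⟨hxJ, hmx⟩ := hc
          have hxs : x ∉ s := fun h' => hxJ (Finset.mem_insert_of_mem h')
          by_cases hK : K = insert x s
          · subst hK
            have hmid : mid (insert m s) m x = below s x := by
              rw [mid_insert_le _ le_rfl]
              have := below_add_mid s hmx
              rw [if_neg ha, below_eq_zero (fun y hy => (h y hy).le)] at this
              omega
            -- the row `i = x` gives the first summand of `geom_one`, the rows `i < x` in `s` the sum
            rw [if_pos ⟨Finset.mem_insert_self _ _, hxJ, hmx, by rw [Finset.erase_insert ha]⟩,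
              hmid, ← geom_one hq]
            rw [Finset.filter_true_of_mem (by
              intro y hy
              rcases Finset.mem_insert.1 hy with rfl | hy
              · exact hmx
              · exact h y hy)]
            rw [Finset.sum_insert hxs, mul_add (q - q⁻¹) ((-q) ^ (below s x : ℤ))]
            congr 1
            · rw [below_insert_le le_rfl, Finset.erase_insert hxs]
              simp [hxs, mul_comm]
            · have e := sum_below_filter (fun a : ℕ => (-q) ^ (2 * (a : ℤ) - below s x + 1)) s x
              rw [← e, Finset.sum_filter, Finset.mul_sum, Finset.mul_sum]
              refine Finset.sum_congr rfl fun i hi => ?_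
              have hix : i ≠ x := fun h' => hxs (h' ▸ hi)
              by_cases hlt : i < x
              · have e1 : (insert x s).erase i = insert x (s.erase i) :=
                  Finset.erase_insert_of_ne hix.symm
                have e2 := below_add_mid s hlt
                rw [if_pos hi] at e2
                have hq' : -q ≠ 0 := neg_ne_zero.2 hq
                simp only [hix, hlt, hi, hxs, e1, below_insert_le hlt.le]
                simp only [and_false, if_false, not_false_eq_true, and_self, if_true, zero_add]
                rw [mul_left_comm, ← mul_assoc ((-q) ^ below s i), mul_comm ((-q) ^ below s i),
                  mul_assoc, ← zpow_natCast, ← zpow_add₀ hq']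
                congr 3
                rw [← e2]; push_cast; ring
              · simp [hix, hlt]
          · rw [if_neg (fun h' => hK (by rw [h'.2.2.2, Finset.erase_insert ha]))]
            refine Finset.sum_eq_zero fun i hi => ?_
            rw [Finset.mem_filter] at hi
            rw [if_neg, if_neg]
            · simp
            · rintro ⟨h1, h2, h3, h4⟩
              apply hK
              rw [← Finset.insert_erase hi.1, h4, Finset.insert_comm, Finset.insert_erase h1]
            · rintro ⟨h1, rfl⟩
              apply hK
              rw [← Finset.insert_erase hi.1, h1]
        · rw [if_neg (fun h' => hc ⟨h'.2.1, h'.2.2.1⟩)]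
          refine Finset.sum_eq_zero fun i hi => ?_
          rw [Finset.mem_filter] at hi
          rw [if_neg, if_neg]
          · simp
          · rintro ⟨h1, h2, h3, h4⟩
            have : m < x := hi.2.trans h3
            exact hc ⟨by simp [this.ne', h2], this⟩
          · rintro ⟨h1, rfl⟩
            refine hc ⟨?_, hi.2⟩
            simp only [Finset.mem_insert, not_or]
            exact ⟨hi.2.ne', by rw [← h1]; exact Finset.notMem_erase _ _⟩
    · rw [if_neg hma, if_neg hma, add_zero, one_mul]
      by_cases haK : a ∈ K
      · rw [if_pos haK]
        have hiff : K = insert a s ↔ K.erase a = s := by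
          constructor
          · rintro rfl; exact Finset.erase_insert ha
          · rintro rfl; exact (Finset.insert_erase haK).symm
        have hiff2 : K = insert x ((insert a s).erase m) ↔
            K.erase a = (insert x (insert a (s.erase m))).erase a := by
          rw [Finset.erase_insert_of_ne (Ne.symm hma)]
          constructor
          · intro h'; rw [← h']
          · intro h'
            rw [← Finset.insert_erase haK, h', Finset.insert_erase (by simp)]
        unfold gval
        rw [mul_add]
        congr 1
        · simp only [hiff, Finset.mem_insert, hma, false_or]
          by_cases hc : K.erase a = s ∧ m = x
          · have : below K a = 0 := by
              rw [← below_erase_le le_rfl, hc.1]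
              exact below_eq_zero (fun y hy => (h y hy).le)
            rw [if_pos hc, this, pow_zero, one_mul]
          · rw [if_neg hc, mul_zero]
        · by_cases hc : m ∈ s ∧ m < x
          · have hxa : a < x := (h m hc.1).trans hc.2
            have hset : (insert x (insert a (s.erase m))).erase a = insert x (s.erase m) := by
              rw [Finset.erase_insert_of_ne hxa.ne', Finset.erase_insert]
              exact fun h' => ha (Finset.mem_of_mem_erase h')
            rw [mid_insert_le _ (h m hc.1).le]
            simp only [hiff2, hset, Finset.mem_insert, hma, hxa.ne', false_or]
            split_ifs with hd
            · have : below K a = 0 := by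
                rw [← below_erase_le le_rfl, hd.2.2.2]
                refine below_eq_zero (fun y hy => ?_)
                rcases Finset.mem_insert.1 hy with rfl | hy
                · exact hxa.le
                · exact (h y (Finset.mem_of_mem_erase hy)).le
              rw [this, pow_zero, one_mul]
            · rw [mul_zero]
          · rw [if_neg (fun h' => hc ⟨h'.1, h'.2.2.1⟩), mul_zero, if_neg]
            rintro ⟨h1, h2, h3, h4⟩
            refine hc ⟨?_, h3⟩
            simpa [hma] using h1
      · rw [if_neg haK]
        symm
        unfold gval
        rw [if_neg, if_neg, add_zero]
        · rintro ⟨h1, h2, h3, h4⟩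
          apply haK
          rw [h4]
          simp [Ne.symm hma]
        · rintro ⟨h1, -⟩
          apply haK
          rw [h1]
          simp

/-- Expansion of the second minor along its first column `a`. In each term, splitting `[I|J]` by
`Δ` and inserting the one-generator pairing leaves either `J` unchanged (`m = a`) or `m` replaced by
`a` in `J` (`m < a`). -/
lemma r_rec (hq : q ≠ 0) (hΔ : IsComul k n q Δ) (hε : IsCounit k n q ε)
    (hr : IsRForm k n q Δ ε r) (I J M s : Finset (Fin n)) (a : Fin n) (h : ∀ x ∈ s, a < x) :
    r (qMinor k n q I J) (qMinor k n q M (insert a s)) =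
      (if a ∈ M then (-q) ^ below M a * ((if a ∈ J then q else 1) *
        r (qMinor k n q I J) (qMinor k n q (M.erase a) s)) else 0)
      + ∑ m ∈ M, if m ∈ J ∧ a ∉ J ∧ m < a then (-q) ^ below M m *
          ((q - q⁻¹) * (-q) ^ (-(mid J m a : ℤ)) *
          r (qMinor k n q I (insert a (J.erase m))) (qMinor k n q (M.erase m) s)) else 0 := by
  have key : ∀ m, r (qMinor k n q I J) (X k n q m a * qMinor k n q (M.erase m) s) =
      (if m = a then (if a ∈ J then q else 1) *
        r (qMinor k n q I J) (qMinor k n q (M.erase a) s) else 0)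
      + if m ∈ J ∧ a ∉ J ∧ m < a then
          (q - q⁻¹) * (-q) ^ (-(mid J m a : ℤ)) *
          r (qMinor k n q I (insert a (J.erase m))) (qMinor k n q (M.erase m) s) else 0 := by
    intro m
    rw [r_qMinor_mul hq hΔ hr]
    simp only [r_qMinor_X hq hΔ hε hr, gval, mul_add, Finset.sum_add_distrib]
    congr 1
    · by_cases hm : m = a
      · subst hm
        simp [mul_comm]
      · simp [hm]
    · by_cases hm : m ∈ J ∧ a ∉ J ∧ m < a
      · rw [if_pos hm, Finset.sum_eq_single (insert a (J.erase m))]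
        · rw [if_pos ⟨hm.1, hm.2.1, hm.2.2, rfl⟩, mul_comm]
        · intro K _ hK
          rw [if_neg (fun h' => hK h'.2.2.2), mul_zero]
        · simp
      · rw [if_neg hm]
        refine Finset.sum_eq_zero fun K _ => ?_
        rw [if_neg (fun h' => hm ⟨h'.1, h'.2.1, h'.2.2.1⟩), mul_zero]
  rw [qMinor_insert M s a h]
  simp only [map_sum, map_smul, key, smul_eq_mul, mul_add, Finset.sum_add_distrib, mul_ite,
    mul_zero]
  congr 1
  rw [Finset.sum_ite_eq']

end Pairing

/-! ### Bookkeeping for the closed formula -/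

section Bookkeeping

variable {n : ℕ}

/-- `above S x = #{y ∈ S : y > x}`. -/
def above (S : Finset (Fin n)) (x : Fin n) : ℕ := (S.filter fun y => x < y).card

lemma above_eq (S : Finset (Fin n)) {m a : Fin n} (hm : m < a) :
    above S m = mid S m a + (if a ∈ S then 1 else 0) + above S a := by
  have h1 : (if a ∈ S then 1 else 0) = (S.filter fun y => y = a).card := by
    rw [Finset.filter_eq']
    split_ifs <;> simp
  unfold above mid
  rw [h1, ← Finset.card_union_of_disjoint, ← Finset.card_union_of_disjoint]
  · congr 1
    ext y
    simp only [Finset.mem_union, Finset.mem_filter]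
    grind
  · rw [Finset.disjoint_left]
    intro y
    simp only [Finset.mem_union, Finset.mem_filter]
    grind
  · rw [Finset.disjoint_left]
    intro y
    simp only [Finset.mem_filter]
    grind

lemma ell_eq_sum_left (S U : Finset (Fin n)) : ell n S U = ∑ p ∈ S, below U p := by
  unfold ell below
  rw [Finset.card_filter, Finset.sum_product]
  simp only [Finset.card_filter]

lemma ell_eq_sum_right (S U : Finset (Fin n)) : ell n S U = ∑ t ∈ U, above S t := by
  unfold ell above
  rw [Finset.card_filter, Finset.sum_product_right]
  simp only [Finset.card_filter]

lemma ell_insert_left {S : Finset (Fin n)} {p : Fin n} (h : p ∉ S) (U : Finset (Fin n)) :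
    ell n (insert p S) U = ell n S U + below U p := by
  rw [ell_eq_sum_left, ell_eq_sum_left, Finset.sum_insert h, add_comm]

lemma ell_erase_left {S : Finset (Fin n)} {p : Fin n} (h : p ∈ S) (U : Finset (Fin n)) :
    ell n (S.erase p) U + below U p = ell n S U := by
  rw [ell_eq_sum_left, ell_eq_sum_left, Finset.sum_erase_add _ _ h]

lemma ell_insert_right (S : Finset (Fin n)) {U : Finset (Fin n)} {t : Fin n} (h : t ∉ U) :
    ell n S (insert t U) = ell n S U + above S t := by
  rw [ell_eq_sum_right, ell_eq_sum_right, Finset.sum_insert h, add_comm]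

lemma ell_erase_right (S : Finset (Fin n)) {U : Finset (Fin n)} {t : Fin n} (h : t ∈ U) :
    ell n S (U.erase t) + above S t = ell n S U := by
  rw [ell_eq_sum_right, ell_eq_sum_right, Finset.sum_erase_add _ _ h]

lemma below_congr {S U : Finset (Fin n)} {x : Fin n} (h : ∀ y < x, y ∈ S ↔ y ∈ U) :
    below S x = below U x := by
  unfold below
  congr 1
  ext y
  simp only [Finset.mem_filter]
  exact ⟨fun h' => ⟨(h y h'.2).1 h'.1, h'.2⟩, fun h' => ⟨(h y h'.2).2 h'.1, h'.2⟩⟩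

lemma mid_congr {S U : Finset (Fin n)} {m x : Fin n} (h : ∀ y < x, y ∈ S ↔ y ∈ U) :
    mid S m x = mid U m x := by
  unfold mid
  congr 1
  ext y
  simp only [Finset.mem_filter]
  exact ⟨fun h' => ⟨(h y h'.2.2).1 h'.1, h'.2⟩, fun h' => ⟨(h y h'.2.2).2 h'.1, h'.2⟩⟩

lemma below_add_of_union {S U V : Finset (Fin n)} {x : Fin n}
    (h : ∀ y < x, y ∈ S ↔ y ∈ U ∨ y ∈ V) (hd : ∀ y < x, y ∈ U → y ∉ V) :
    below S x = below U x + below V x := by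
  unfold below
  rw [← Finset.card_union_of_disjoint]
  · congr 1
    ext y
    simp only [Finset.mem_union, Finset.mem_filter]
    constructor
    · rintro ⟨h1, h2⟩
      rcases (h y h2).1 h1 with h3 | h3
      · exact Or.inl ⟨h3, h2⟩
      · exact Or.inr ⟨h3, h2⟩
    · rintro (⟨h1, h2⟩ | ⟨h1, h2⟩)
      · exact ⟨(h y h2).2 (Or.inl h1), h2⟩
      · exact ⟨(h y h2).2 (Or.inr h1), h2⟩
  · rw [Finset.disjoint_left]
    intro y
    simp only [Finset.mem_filter]
    exact fun h1 h2 => hd y h1.2 h1.1 h2.1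

/-- The nonvanishing condition in counting form: the first part expresses `J ≤ I`, and the second
says that `I + M = J + N` as multisets, i.e. `I ∩ M = J ∩ N` and `I ∪ M = J ∪ N`. -/
def Adm (I J M N : Finset (Fin n)) : Prop :=
  (∀ x, below I x ≤ below J x) ∧
    ∀ x, (if x ∈ I then 1 else 0) + (if x ∈ M then 1 else 0)
      = (if x ∈ J then 1 else 0) + (if x ∈ N then 1 else 0 : ℕ)

lemma below_eq_card_emb {t : ℕ} (I : Finset (Fin n)) (hI : I.card = t) (x : Fin n) :
    below I x = (Finset.univ.filter fun l : Fin t => I.orderEmbOfFin hI l < x).card := by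
  unfold below
  have : (I.filter fun y => y < x)
      = (Finset.univ.filter fun l : Fin t => I.orderEmbOfFin hI l < x).map
        (I.orderEmbOfFin hI).toEmbedding := by
    ext y
    simp only [Finset.mem_filter, Finset.mem_map, Finset.mem_univ, true_and,
      RelEmbedding.coe_toEmbedding]
    constructor
    · rintro ⟨hy, hlt⟩
      have : y ∈ Set.range (I.orderEmbOfFin hI) := by simpa using hy
      obtain ⟨a, rfl⟩ := this
      exact ⟨a, hlt, rfl⟩
    · rintro ⟨a, ha, rfl⟩
      exact ⟨Finset.orderEmbOfFin_mem _ _ _, ha⟩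
  rw [this, Finset.card_map]

/-- The componentwise order in terms of counting functions. -/
lemma setLE_iff (I J : Finset (Fin n)) (h : I.card = J.card) :
    setLE n J I ↔ ∀ x, below I x ≤ below J x := by
  constructor
  · rintro ⟨h1, h2⟩ x
    rw [below_eq_card_emb I h, below_eq_card_emb J rfl]
    refine Finset.card_le_card fun l hl => ?_
    simp only [Finset.mem_filter, Finset.mem_univ, true_and] at hl ⊢
    exact (h2 h1 l).trans_lt hl
  · intro hx
    refine ⟨h.symm, fun h1 l => ?_⟩
    change J.orderEmbOfFin rfl l ≤ I.orderEmbOfFin h l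
    by_contra hlt
    rw [not_le] at hlt
    have e1 := hx (J.orderEmbOfFin rfl l)
    have e2 := below_add_mid I hlt
    rw [below_orderEmb] at e1
    rw [below_orderEmb, if_pos (Finset.orderEmbOfFin_mem _ _ _)] at e2
    omega

lemma adm_iff (I J M N : Finset (Fin n)) (h : I.card = J.card) :
    Adm I J M N ↔ setLE n J I ∧ I ∩ M = J ∩ N ∧ I ∪ M = J ∪ N := by
  rw [setLE_iff I J h, Adm]
  refine and_congr_right fun _ => ?_
  simp only [Finset.ext_iff, Finset.mem_inter, Finset.mem_union]
  rw [← forall_and]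
  refine forall_congr' fun x => ?_
  by_cases h1 : x ∈ I <;> by_cases h2 : x ∈ M <;> by_cases h3 : x ∈ J <;>
    by_cases h4 : x ∈ N <;> simp [h1, h2, h3, h4]

variable {k : Type*} [Field k] {q : k}

/-- `ξ_q(R;S)` for disjoint `R`, `S` of equal cardinality, as a product over the elements of
`R` rather than over their ranks. -/
def xi (q : k) (R S : Finset (Fin n)) : k := ∏ x ∈ R, negqInt k q (below S x - below R x)

/-- For `x` the element of rank `l` in `R` (zero-based), `below R x = l`, and `x ∉ S` makes
`{y ∈ S : y ≤ x}` the same as `{y ∈ S : y < x}`. -/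
lemma xiq_eq_xi (R S : Finset (Fin n)) (h : R.card = S.card) (hd : ∀ x ∈ R, x ∉ S) :
    xiq k n q R S = xi q R S := by
  unfold xiq xi
  rw [dif_pos h]
  have hmap : R = Finset.univ.map (R.orderEmbOfFin rfl).toEmbedding := by
    ext y; simp
  have e : ∏ x ∈ R, negqInt k q (below S x - below R x) = ∏ x ∈ Finset.univ.map
      (R.orderEmbOfFin rfl).toEmbedding, negqInt k q (below S x - below R x) := by
    rw [← hmap]
  rw [e, Finset.prod_map]
  refine Finset.prod_congr rfl fun l _ => ?_
  simp only [RelEmbedding.coe_toEmbedding, below_orderEmb]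
  congr 2
  unfold below
  congr 1
  ext y
  simp only [Finset.mem_filter]
  refine and_congr_right fun hy => ?_
  change y ≤ R.orderEmbOfFin rfl l ↔ _
  rw [le_iff_lt_or_eq, or_iff_left]
  rintro rfl
  exact hd _ (Finset.orderEmbOfFin_mem _ _ _) hy

/-- The exponent `λ` of `-q`. -/
def lam (I J M N : Finset (Fin n)) : ℤ :=
  (ell n ((J \ N) ∪ (M \ I)) (I \ J) : ℤ) - (ell n ((J \ N) ∪ (M \ I)) (J \ I) : ℤ)

/-- The claimed nonzero value of `r([I|J],[M|N])`. -/
def val (q : k) (I J M N : Finset (Fin n)) : k :=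
  q ^ (I ∩ M).card * (q - q⁻¹) ^ (I \ J).card * (-q) ^ lam I J M N * xi q (I \ J) (J \ I)

end Bookkeeping

/-! ### The closed formula satisfies the recursion -/

section Recursion

variable {n : ℕ} {I J M s : Finset (Fin n)} {a : Fin n}

lemma notMem_of_lt (h : ∀ x ∈ s, a < x) {y : Fin n} (hy : y ≤ a) : y ∉ s :=
  fun h' => absurd (h y h') (not_lt.2 hy)

/-- The nonvanishing condition is preserved by the diagonal term of the recursion. -/
lemma adm_diag (h : ∀ x ∈ s, a < x) (haM : a ∈ M) :
    Adm I J (M.erase a) s ↔ Adm I J M (insert a s) := by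
  have ha := notMem_of_lt h le_rfl
  refine and_congr_right fun _ => forall_congr' fun x => ?_
  by_cases hx : x = a
  · subst hx; simp [ha, haM]
  · simp [hx]

/-- Below the least column index, `M` is the disjoint complement of `I` in `J`. -/
lemma Adm.low (h : ∀ x ∈ s, a < x) (hA : Adm I J M (insert a s)) {y : Fin n} (hy : y < a) :
    (y ∈ M ↔ y ∈ J ∧ y ∉ I) ∧ (y ∈ I → y ∈ J) := by
  have h1 := hA.2 y
  have h2 : y ∉ insert a s := by
    simp [hy.ne, notMem_of_lt h hy.le]
  rw [if_neg h2] at h1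
  by_cases y ∈ I <;> by_cases y ∈ M <;> by_cases y ∈ J <;> simp_all

lemma Adm.below_eq (h : ∀ x ∈ s, a < x) (hA : Adm I J M (insert a s)) {y : Fin n} (hy : y ≤ a) :
    below M y = below (J \ I) y := by
  refine below_congr fun z hz => ?_
  rw [(hA.low h (hz.trans_le hy)).1, Finset.mem_sdiff]

lemma Adm.above_eq (h : ∀ x ∈ s, a < x) (hA : Adm I J M (insert a s)) {m : Fin n} (hm : m < a) :
    above ((J \ insert a s) ∪ (M \ I)) m = mid J m a
      + (if a ∈ (J \ insert a s) ∪ (M \ I) then 1 else 0)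
      + above ((J \ insert a s) ∪ (M \ I)) a := by
  rw [QMinorPairing.above_eq _ hm, mid_congr (S := (J \ insert a s) ∪ (M \ I)) (U := J)]
  intro y hy
  have h1 := hA.low h hy
  have h2 : y ∉ insert a s := by simp [hy.ne, notMem_of_lt h hy.le]
  simp only [Finset.mem_union, Finset.mem_sdiff, h2, not_false_eq_true, and_true]
  tauto

lemma Adm.le_of_mem (h : ∀ x ∈ s, a < x) (hA : Adm I J M (insert a s)) {y : Fin n}
    (hy : y ∈ I \ J) : a ≤ y := by
  by_contra hlt
  rw [Finset.mem_sdiff] at hy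
  exact hy.2 ((hA.low h (not_le.1 hlt)).2 hy.1)

/-- The nonvanishing condition is preserved by the moving terms of the recursion. -/
lemma adm_move (h : ∀ x ∈ s, a < x) {m : Fin n} (hmM : m ∈ M) (hmJ : m ∈ J) (haJ : a ∉ J)
    (hma : m < a) :
    Adm I (insert a (J.erase m)) (M.erase m) s ↔ Adm I J M (insert a s) := by
  have ha := notMem_of_lt h le_rfl
  have hms := notMem_of_lt h hma.le
  have haE : a ∉ J.erase m := fun h' => haJ (Finset.mem_of_mem_erase h')
  have hcount : (∀ x, (if x ∈ I then 1 else 0) + (if x ∈ M.erase m then 1 else 0)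
      = (if x ∈ insert a (J.erase m) then 1 else 0) + (if x ∈ s then 1 else 0 : ℕ)) ↔
      ∀ x, (if x ∈ I then 1 else 0) + (if x ∈ M then 1 else 0)
      = (if x ∈ J then 1 else 0) + (if x ∈ insert a s then 1 else 0 : ℕ) := by
    refine forall_congr' fun x => ?_
    by_cases hx : x = a
    · subst hx
      simp [haJ, ha, hma.ne', add_comm]
    · by_cases hxm : x = m
      · subst hxm
        simp [hmM, hmJ, hms, hma.ne]
      · simp [hx, hxm]
  have hb : ∀ x, below (insert a (J.erase m)) x + (if m < x then 1 else 0)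
      = below J x + (if a < x then 1 else 0) := by
    intro x
    rw [below_insert haE, ← below_erase hmJ]
    omega
  constructor
  · rintro ⟨h1, h2⟩
    refine ⟨fun x => ?_, hcount.1 h2⟩
    have e1 := h1 x
    have e2 := hb x
    by_cases hx : a < x
    · rw [if_pos hx, if_pos (hma.trans hx)] at e2; omega
    · rw [if_neg hx] at e2; omega
  · intro hA
    refine ⟨fun x => ?_, hcount.2 hA.2⟩
    have e1 := hA.1 x
    have e2 := hb x
    by_cases hx : a < x
    · rw [if_pos hx, if_pos (hma.trans hx)] at e2; omega
    · rw [if_neg hx] at e2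
      by_cases hmx : m < x
      · have hlow : ∀ y < x, y ∈ J ↔ y ∈ I ∨ y ∈ J \ I := by
          intro y hy
          have := (hA.low h (hy.trans_le (not_lt.1 hx))).2
          rw [Finset.mem_sdiff]
          tauto
        have e3 := below_add_of_union hlow (fun y _ h1 h2 => (Finset.mem_sdiff.1 h2).2 h1)
        have e4 := below_add_mid (J \ I) hmx
        rw [if_pos (Finset.mem_sdiff.2 ((hA.low h hma).1.1 hmM))] at e4
        rw [if_pos hmx] at e2
        omega
      · rw [if_neg hmx] at e2; omega

variable {k : Type*} [Field k] {q : k}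

/-- Diagonal step when the least column `a` lies in `J`. -/
lemma val_diag_mem (hq : q ≠ 0) (h : ∀ x ∈ s, a < x) (hA : Adm I J M (insert a s)) (haM : a ∈ M)
    (haJ : a ∈ J) :
    (-q) ^ below M a * (q * val q I J (M.erase a) s) = val q I J M (insert a s) := by
  have hq' : -q ≠ 0 := neg_ne_zero.2 hq
  have ha := notMem_of_lt h le_rfl
  have haI : a ∈ I := by
    have := hA.2 a
    by_contra haI
    simp [haM, haJ, haI] at this
  have e1 : (I ∩ M).card = (I ∩ M.erase a).card + 1 := by
    rw [Finset.inter_erase, Finset.card_erase_add_one (Finset.mem_inter.2 ⟨haI, haM⟩)]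
  have e2 : (J \ s) ∪ (M.erase a \ I) = insert a ((J \ insert a s) ∪ (M \ I)) := by
    ext y
    by_cases hy : y = a
    · subst hy; simp [haJ, ha]
    · simp [hy]
  have e3 : lam I J (M.erase a) s = lam I J M (insert a s) - below M a := by
    unfold lam
    have h0 : a ∉ (J \ insert a s) ∪ (M \ I) := by simp [haI]
    rw [e2, ell_insert_left h0, ell_insert_left h0, hA.below_eq h le_rfl,
      below_eq_zero (S := I \ J) (fun y hy => hA.le_of_mem h hy)]
    push_cast; ring
  unfold val
  rw [e1, e3, zpow_sub₀ hq', zpow_natCast]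
  field_simp
  ring

/-- Diagonal step when the least column `a` lies in `M` but not in `J`. -/
lemma val_diag_notMem (hq : q ≠ 0) (h : ∀ x ∈ s, a < x) (hA : Adm I J M (insert a s))
    (haM : a ∈ M) (haJ : a ∉ J) :
    (-q) ^ below M a * val q I J (M.erase a) s
      = (-q) ^ (2 * (below (J \ I) a : ℤ)) * val q I J M (insert a s) := by
  have hq' : -q ≠ 0 := neg_ne_zero.2 hq
  have ha := notMem_of_lt h le_rfl
  have haI : a ∉ I := by
    have := hA.2 a
    intro haI
    simp [haM, haJ, haI] at this
  have e1 : I ∩ M.erase a = I ∩ M := by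
    rw [Finset.inter_erase, Finset.erase_eq_of_notMem (by simp [haI])]
  have e2 : (J \ s) ∪ (M.erase a \ I) = ((J \ insert a s) ∪ (M \ I)).erase a := by
    ext y
    by_cases hy : y = a
    · subst hy; simp [haJ]
    · simp [hy]
  have e3 : lam I J (M.erase a) s = lam I J M (insert a s) + below (J \ I) a := by
    unfold lam
    have h0 : a ∈ (J \ insert a s) ∪ (M \ I) := by simp [haI, haM]
    have f1 := ell_erase_left h0 (I \ J)
    have f2 := ell_erase_left h0 (J \ I)
    rw [below_eq_zero (S := I \ J) (fun y hy => hA.le_of_mem h hy)] at f1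
    rw [e2]
    omega
  unfold val
  rw [e1, e3, hA.below_eq h le_rfl, ← zpow_natCast,
    show (2 * (below (J \ I) a : ℤ)) = below (J \ I) a + below (J \ I) a by ring,
    zpow_add₀ hq', zpow_add₀ hq']
  ring

/-- Moving step when the least column `a` lies in `M`: the factor `ξ` does not change. -/
lemma val_move_mem (hq : q ≠ 0) (h : ∀ x ∈ s, a < x) (hA : Adm I J M (insert a s))
    (haM : a ∈ M) (haJ : a ∉ J) {m : Fin n} (hmM : m ∈ M) (hmJ : m ∈ J) (hma : m < a) :
    (-q) ^ below M m * ((q - q⁻¹) * (-q) ^ (-(mid J m a : ℤ)) *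
        val q I (insert a (J.erase m)) (M.erase m) s)
      = (q - q⁻¹) * (-q) ^ (2 * (below (J \ I) m : ℤ) + 1) * val q I J M (insert a s) := by
  have hq' : -q ≠ 0 := neg_ne_zero.2 hq
  have ha := notMem_of_lt h le_rfl
  have hms := notMem_of_lt h hma.le
  have haI : a ∉ I := by
    have := hA.2 a
    intro haI
    simp [haM, haJ, haI] at this
  have hmI : m ∉ I := ((hA.low h hma).1.1 hmM).2
  have hmS : m ∈ J \ I := Finset.mem_sdiff.2 ⟨hmJ, hmI⟩
  have haS : a ∉ (J \ I).erase m := by simp [haJ]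
  have e1 : I ∩ M.erase m = I ∩ M := by
    rw [Finset.inter_erase, Finset.erase_eq_of_notMem (by simp [hmI])]
  have e2 : (insert a (J.erase m) \ s) ∪ (M.erase m \ I)
      = ((J \ insert a s) ∪ (M \ I)).erase m := by
    ext y
    by_cases hy : y = m
    · subst hy; simp [hma.ne]
    · by_cases hya : y = a
      · subst hya; simp [ha, haM, haI, hma.ne']
      · simp [hy, hya]
  have e4 : I \ insert a (J.erase m) = I \ J := by
    ext y
    by_cases hy : y = m
    · subst hy; simp [hmI]
    · by_cases hya : y = a
      · subst hya; simp [haI]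
      · simp [hy, hya]
  have e5 : insert a (J.erase m) \ I = insert a ((J \ I).erase m) := by
    ext y
    by_cases hy : y = m
    · subst hy; simp [hma.ne]
    · by_cases hya : y = a
      · subst hya; simp [haI]
      · simp [hy, hya]
  have hR : ∀ y ∈ I \ J, a < y := by
    intro y hy
    refine lt_of_le_of_ne (hA.le_of_mem h hy) ?_
    rintro rfl
    exact haI (Finset.mem_sdiff.1 hy).1
  have e6 : xi q (I \ J) (insert a ((J \ I).erase m)) = xi q (I \ J) (J \ I) := by
    refine Finset.prod_congr rfl fun y hy => ?_
    have hay := hR y hy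
    have f1 := below_insert haS y
    have f2 := below_erase hmS y
    rw [if_pos hay] at f1
    rw [if_pos (hma.trans hay)] at f2
    rw [f1, f2]
  have e3 : lam I (insert a (J.erase m)) (M.erase m) s
      = lam I J M (insert a s) + mid J m a + 1 + below (J \ I) m := by
    unfold lam
    have h0 : m ∈ (J \ insert a s) ∪ (M \ I) := by simp [hmM, hmI]
    have h1 : a ∈ (J \ insert a s) ∪ (M \ I) := by simp [haI, haM]
    have f1 := ell_erase_left h0 (I \ J)
    have f2 := ell_erase_left h0 (insert a ((J \ I).erase m))
    have f3 := ell_insert_right ((J \ insert a s) ∪ (M \ I)) haS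
    have f4 := ell_erase_right ((J \ insert a s) ∪ (M \ I)) hmS
    have f5 := hA.above_eq h hma
    rw [below_eq_zero (S := I \ J) (fun y hy => (hma.trans (hR y hy)).le)] at f1
    rw [below_insert_le hma.le, below_erase_le le_rfl] at f2
    rw [if_pos h1] at f5
    rw [e2, e4, e5]
    omega
  have key : (-q) ^ below M m * (-q) ^ (-(mid J m a : ℤ))
        * (-q) ^ lam I (insert a (J.erase m)) (M.erase m) s
      = (-q) ^ (2 * (below (J \ I) m : ℤ) + 1) * (-q) ^ lam I J M (insert a s) := by
    rw [← zpow_natCast, ← zpow_add₀ hq', ← zpow_add₀ hq', ← zpow_add₀ hq', e3,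
      hA.below_eq h hma.le]
    congr 1
    ring
  unfold val
  rw [e1, e4, e5, e6]
  linear_combination (q - q⁻¹) * q ^ (I ∩ M).card * (q - q⁻¹) ^ (I \ J).card
    * xi q (I \ J) (J \ I) * key

/-- The claimed value with the factor of `ξ` belonging to `a` removed. -/
def valRed (q : k) (I J M N : Finset (Fin n)) (a : Fin n) : k :=
  q ^ (I ∩ M).card * (q - q⁻¹) ^ (I \ J).card * (-q) ^ lam I J M N *
    ∏ x ∈ (I \ J).erase a, negqInt k q (below (J \ I) x - below (I \ J) x)

lemma Adm.mem_of_notMem (hA : Adm I J M (insert a s)) (haM : a ∉ M) : a ∈ I ∧ a ∉ J := by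
  have := hA.2 a
  by_cases haI : a ∈ I <;> by_cases haJ : a ∈ J <;> simp [haM, haJ, haI] at this ⊢

/-- If the least column `a` is not in `M`, then `a` is the least element of `I \ J`, and the first
factor of `ξ` is `[d₁]` with `d₁` the number of elements of `J \ I` below `a`. -/
lemma val_eq_mul_valRed (h : ∀ x ∈ s, a < x) (hA : Adm I J M (insert a s)) (haM : a ∉ M) :
    val q I J M (insert a s)
      = negqInt k q (below (J \ I) a) * valRed q I J M (insert a s) a := by
  have haR : a ∈ I \ J := Finset.mem_sdiff.2 (hA.mem_of_notMem haM)
  unfold val valRed xi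
  rw [← Finset.mul_prod_erase _ _ haR,
    below_eq_zero (S := I \ J) (fun y hy => hA.le_of_mem h hy), Nat.sub_zero]
  ring

/-- Moving step when the least column `a` is not in `M`. -/
lemma val_move_notMem (hq : q ≠ 0) (h : ∀ x ∈ s, a < x) (hA : Adm I J M (insert a s))
    (haM : a ∉ M) (haJ : a ∉ J) {m : Fin n} (hmM : m ∈ M) (hmJ : m ∈ J) (hma : m < a) :
    (-q) ^ below M m * ((q - q⁻¹) * (-q) ^ (-(mid J m a : ℤ)) *
        val q I (insert a (J.erase m)) (M.erase m) s)
      = (-q) ^ (2 * (below (J \ I) m : ℤ) - below (J \ I) a + 1)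
        * valRed q I J M (insert a s) a := by
  have hq' : -q ≠ 0 := neg_ne_zero.2 hq
  have ha := notMem_of_lt h le_rfl
  have hms := notMem_of_lt h hma.le
  have haI : a ∈ I := (hA.mem_of_notMem haM).1
  have hmI : m ∉ I := ((hA.low h hma).1.1 hmM).2
  have hmS : m ∈ J \ I := Finset.mem_sdiff.2 ⟨hmJ, hmI⟩
  have haR : a ∈ I \ J := Finset.mem_sdiff.2 ⟨haI, haJ⟩
  have e1 : I ∩ M.erase m = I ∩ M := by
    rw [Finset.inter_erase, Finset.erase_eq_of_notMem (by simp [hmI])]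
  have e2 : (insert a (J.erase m) \ s) ∪ (M.erase m \ I)
      = insert a (((J \ insert a s) ∪ (M \ I)).erase m) := by
    ext y
    by_cases hy : y = m
    · subst hy; simp [hma.ne]
    · by_cases hya : y = a
      · subst hya; simp [ha]
      · simp [hy, hya]
  have e4 : I \ insert a (J.erase m) = (I \ J).erase a := by
    ext y
    by_cases hy : y = m
    · subst hy; simp [hmI]
    · by_cases hya : y = a
      · subst hya; simp
      · simp [hy, hya]
  have e5 : insert a (J.erase m) \ I = (J \ I).erase m := by
    ext y
    by_cases hy : y = m
    · subst hy; simp [hma.ne]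
    · by_cases hya : y = a
      · subst hya; simp [haI]
      · simp [hy, hya]
  have hR : ∀ y ∈ (I \ J).erase a, a < y := by
    intro y hy
    exact lt_of_le_of_ne (hA.le_of_mem h (Finset.mem_of_mem_erase hy))
      (Finset.ne_of_mem_erase hy).symm
  have e6 : xi q ((I \ J).erase a) ((J \ I).erase m)
      = ∏ x ∈ (I \ J).erase a, negqInt k q (below (J \ I) x - below (I \ J) x) := by
    refine Finset.prod_congr rfl fun y hy => ?_
    have hay := hR y hy
    have f1 := below_erase haR y
    have f2 := below_erase hmS y
    rw [if_pos hay] at f1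
    rw [if_pos (hma.trans hay)] at f2
    rw [← f1, ← f2, Nat.add_sub_add_right]
  have e7 : (I \ J).card = ((I \ J).erase a).card + 1 := (Finset.card_erase_add_one haR).symm
  have e3 : lam I (insert a (J.erase m)) (M.erase m) s
      = lam I J M (insert a s) + mid J m a + below (J \ I) m - below (J \ I) a + 1 := by
    unfold lam
    have h0 : m ∈ (J \ insert a s) ∪ (M \ I) := by simp [hmM, hmI]
    have h1 : a ∉ (J \ insert a s) ∪ (M \ I) := by simp [haI]
    have h2 : a ∉ ((J \ insert a s) ∪ (M \ I)).erase m :=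
      fun h' => h1 (Finset.mem_of_mem_erase h')
    have f1 := ell_insert_left h2 ((I \ J).erase a)
    have f2 := ell_insert_left h2 ((J \ I).erase m)
    have f3 := ell_erase_left h0 ((I \ J).erase a)
    have f4 := ell_erase_left h0 ((J \ I).erase m)
    have f5 := ell_erase_right ((J \ insert a s) ∪ (M \ I)) haR
    have f6 := ell_erase_right ((J \ insert a s) ∪ (M \ I)) hmS
    have f7 := hA.above_eq h hma
    have f8 := below_erase hmS a
    rw [below_eq_zero (S := (I \ J).erase a) (fun y hy => (hR y hy).le)] at f1
    rw [below_eq_zero (S := (I \ J).erase a) (fun y hy => (hma.trans (hR y hy)).le)] at f3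
    rw [below_erase_le le_rfl] at f4
    rw [if_neg h1] at f7
    rw [if_pos hma] at f8
    rw [e2, e4, e5]
    omega
  have key : (-q) ^ below M m * (-q) ^ (-(mid J m a : ℤ))
        * (-q) ^ lam I (insert a (J.erase m)) (M.erase m) s
      = (-q) ^ (2 * (below (J \ I) m : ℤ) - below (J \ I) a + 1)
        * (-q) ^ lam I J M (insert a s) := by
    rw [← zpow_natCast, ← zpow_add₀ hq', ← zpow_add₀ hq', ← zpow_add₀ hq', e3,
      hA.below_eq h hma.le]
    congr 1
    ring
  unfold val valRed
  rw [e1, e4, e5, e6, e7, pow_succ]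
  linear_combination (q - q⁻¹) * q ^ (I ∩ M).card * (q - q⁻¹) ^ ((I \ J).erase a).card
    * (∏ x ∈ (I \ J).erase a, negqInt k q (below (J \ I) x - below (I \ J) x)) * key

end Recursion

/-! ### Evaluation of the form -/

section Main

variable {n : ℕ} {k : Type*} [Field k] {q : k}

/-- Evaluation of a sum over the elements of `J \ I` below `a`. -/
lemma sum_move {I J M s : Finset (Fin n)} {a : Fin n} (h : ∀ x ∈ s, a < x)
    (hA : Adm I J M (insert a s)) (haJ : a ∉ J) (f : Fin n → k) (φ : ℕ → k)
    (hf : ∀ m ∈ M, m ∈ J → m < a → f m = φ (below (J \ I) m)) :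
    ∑ m ∈ M, (if m ∈ J ∧ a ∉ J ∧ m < a then f m else 0)
      = ∑ b ∈ Finset.range (below (J \ I) a), φ b := by
  rw [← sum_below_filter, ← Finset.sum_filter]
  have hset : M.filter (fun m => m ∈ J ∧ a ∉ J ∧ m < a) = (J \ I).filter (fun m => m < a) := by
    ext m
    simp only [Finset.mem_filter, Finset.mem_sdiff, haJ, not_false_eq_true, true_and]
    constructor
    · rintro ⟨h1, h2, h3⟩
      exact ⟨(hA.low h h3).1.1 h1, h3⟩
    · rintro ⟨h1, h3⟩
      exact ⟨(hA.low h h3).1.2 h1, h1.1, h3⟩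
  rw [hset]
  refine Finset.sum_congr rfl fun m hm => ?_
  simp only [Finset.mem_filter, Finset.mem_sdiff] at hm
  exact hf m ((hA.low h hm.2).1.2 hm.1) hm.1.1 hm.2

/-- The sum defining `[S]_{-q}` in the opposite order. -/
lemma negqInt_reflect (S : ℕ) :
    ∑ b ∈ Finset.range S, (-q) ^ (2 * (b : ℤ) - S + 1) = negqInt k q S := by
  unfold negqInt
  rw [← Finset.sum_range_reflect]
  refine Finset.sum_congr rfl fun b hb => ?_
  have := Finset.mem_range.1 hb
  congr 1
  omega

/-- Evaluation of `r` on a pair of minors, by induction on the columns of the second one. -/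
theorem r_qMinor_qMinor (hq : q ≠ 0)
    {Δ : A k n q →ₐ[k] A k n q ⊗[k] A k n q} {ε : A k n q →ₐ[k] k}
    (hΔ : IsComul k n q Δ) (hε : IsCounit k n q ε)
    {r : A k n q →ₗ[k] A k n q →ₗ[k] k} (hr : IsRForm k n q Δ ε r) (N : Finset (Fin n)) :
    ∀ I J M : Finset (Fin n), M.card = N.card →
      r (qMinor k n q I J) (qMinor k n q M N) = if Adm I J M N then val q I J M N else 0 := by
  induction N using Finset.induction_on_min with
  | empty =>
    intro I J M hM
    rw [Finset.card_empty, Finset.card_eq_zero] at hM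
    subst hM
    rw [qMinor_empty, if_pos rfl, (hr.2.2.2.1 _).1, counit_qMinor hε]
    have hA : Adm I J ∅ ∅ ↔ I = J := by
      constructor
      · intro hA
        ext x
        have := hA.2 x
        by_cases h1 : x ∈ I <;> by_cases h2 : x ∈ J <;> simp [h1, h2] at this ⊢
      · rintro rfl
        exact ⟨fun _ => le_rfl, fun _ => rfl⟩
    rw [hA]
    split_ifs with hIJ
    · subst hIJ
      simp [val, lam, xi]
    · rfl
  | insert a s h ih =>
    intro I J M hM
    have has : a ∉ s := notMem_of_lt h le_rfl
    rw [Finset.card_insert_of_notMem has] at hM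
    have ihM : ∀ I J : Finset (Fin n), ∀ m ∈ M,
        r (qMinor k n q I J) (qMinor k n q (M.erase m) s)
          = if Adm I J (M.erase m) s then val q I J (M.erase m) s else 0 := by
      intro I J m hm
      refine ih I J _ ?_
      rw [Finset.card_erase_of_mem hm, hM, Nat.add_sub_cancel]
    rw [r_rec hq hΔ hε hr I J M s a h]
    by_cases hA : Adm I J M (insert a s)
    swap
    · rw [if_neg hA, Finset.sum_eq_zero, add_zero]
      · split_ifs with haM h2
        · rw [ihM _ _ a haM, if_neg (mt (adm_diag h haM).1 hA)]; simp
        · rw [ihM _ _ a haM, if_neg (mt (adm_diag h haM).1 hA)]; simp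
        · rfl
      · intro m hm
        split_ifs with h1
        · rw [ihM _ _ m hm, if_neg (mt (adm_move h hm h1.1 h1.2.1 h1.2.2).1 hA)]; simp
        · rfl
    rw [if_pos hA]
    by_cases haM : a ∈ M
    · rw [if_pos haM, ihM _ _ a haM, if_pos ((adm_diag h haM).2 hA)]
      by_cases haJ : a ∈ J
      · rw [if_pos haJ, val_diag_mem hq h hA haM haJ, Finset.sum_eq_zero, add_zero]
        intro m _
        rw [if_neg (fun h' => h'.2.1 haJ)]
      · rw [if_neg haJ, one_mul, val_diag_notMem hq h hA haM haJ,
          sum_move h hA haJ _ (fun b => (q - q⁻¹) * (-q) ^ (2 * (b : ℤ) + 1)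
            * val q I J M (insert a s))]
        ·
          -- the off-diagonal terms form a geometric progression complementing the diagonal one
          rw [← Finset.sum_mul, ← Finset.mul_sum, geom_key hq]
          ring
        · intro m hm hmJ hma
          rw [ihM _ _ m hm, if_pos ((adm_move h hm hmJ haJ hma).2 hA)]
          exact val_move_mem hq h hA haM haJ hm hmJ hma
    · have haJ := (hA.mem_of_notMem haM).2
      rw [if_neg haM, zero_add, val_eq_mul_valRed h hA haM, ← negqInt_reflect, Finset.sum_mul]
      -- the sum over `m` reproduces the missing factor of `ξ`
      refine sum_move h hA haJ _ (fun b => (-q) ^ (2 * (b : ℤ) - below (J \ I) a + 1)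
        * valRed q I J M (insert a s) a) ?_
      intro m hm hmJ hma
      rw [ihM _ _ m hm, if_pos ((adm_move h hm hmJ haJ hma).2 hA)]
      exact val_move_notMem hq h hA haM haJ hm hmJ hma

end Main

end QMinorPairing

/-- Theorem 4.6: vanishing criterion and closed formula for `r([I|J],[M|N])`. -/
theorem stmt14 (k : Type*) [Field k] (n : ℕ) (hn : 0 < n) (q : k) (hq : q ≠ 0)
    (Δ : A k n q →ₐ[k] A k n q ⊗[k] A k n q) (ε : A k n q →ₐ[k] k)
    (hΔ : IsComul k n q Δ) (hε : IsCounit k n q ε)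
    (r : A k n q →ₗ[k] A k n q →ₗ[k] k) (hr : IsRForm k n q Δ ε r)
    (I J M N : Finset (Fin n)) (hIJ : I.card = J.card) (hMN : M.card = N.card) :
    (r (qMinor k n q I J) (qMinor k n q M N) ≠ 0 →
      setLE n J I ∧ I ∩ M = J ∩ N ∧ I ∪ M = J ∪ N) ∧
    (setLE n J I → I ∩ M = J ∩ N → I ∪ M = J ∪ N →
      r (qMinor k n q I J) (qMinor k n q M N) =
        q ^ (I ∩ M).card * (q - q⁻¹) ^ (I \ J).card *
          (-q) ^ ((ell n ((J \ N) ∪ (M \ I)) (I \ J) : ℤ)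
              - (ell n ((J \ N) ∪ (M \ I)) (J \ I) : ℤ)) *
          xiq k n q (I \ J) (J \ I)) := by
  rw [QMinorPairing.r_qMinor_qMinor hq hΔ hε hr N I J M hMN]
  have hadm := QMinorPairing.adm_iff I J M N hIJ
  refine ⟨fun h => hadm.1 ?_, fun h1 h2 h3 => ?_⟩
  · by_contra hA
    exact h (if_neg hA)
  · have hcard : (I \ J).card = (J \ I).card := Finset.card_sdiff_comm hIJ
    have hdisj : ∀ x ∈ I \ J, x ∉ J \ I := fun x hx hx' =>
      (Finset.mem_sdiff.1 hx).2 (Finset.mem_sdiff.1 hx').1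
    rw [if_pos (hadm.2 ⟨h1, h2, h3⟩), QMinorPairing.xiq_eq_xi _ _ hcard hdisj]
    rfl

end
end

section
/- Let I,J,M,N ⊆ {1,…,n} with |I| = |J| and |M| = |N|. Then in A: q^{|I∩M|} [I|J][M|N] + q^{|I∩M|} Σ_{S ∈ S_<(I,M)} λ_S [S|J][S^♮|N] = q^{|J∩N|} [M|N][I|J] + q^{|J∩N|} Σ_{T ∈ S_>(J,N)} μ_T [M|T^♮][I|T], where λ_S = q̂^{|I∖S|} (−q)^{L(S,I,M)} ξ_q(I∖S; S∖I) for S ∈ S_<(I,M) (with S^♮ taken relative to (I,M)) and μ_T = q̂^{|T∖J|} (−q)^{L^♮(T,J,N)} ξ_q(T∖J; J∖T) for T ∈ S_>(J,N) (with T^♮ taken relative to (J,N)). -/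
/-!
The relation comes from computing one product in two ways. Take two quantum exterior algebras, with
generators `e_i` and `f_i`, subject to the exchange relations `f_i e_i = q e_i f_i`,
`f_i e_j = e_j f_i + (q - q⁻¹) e_i f_j` and `f_j e_i = e_i f_j` for `i < j`. Tensoring with
`O_q(M_n)`, the elements `η_j = ∑ i, X_{ij} e_i` and `φ_j = ∑ i, X_{ij} f_i` satisfy the same
relations (`coact_ext`, `coact_cross`), and the ordered monomials expand as
`η_N = ∑ M, [M|N] e_M` and `φ_J = ∑ I, [I|J] f_I` (`oprod_coact`).

The exchange formula (`exchange`) writes `f_J e_N` as a combination of the monomials `e_{T^♮} f_T`.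
It is proved by induction on the largest index, for the more general elements `D^{(d)}(f_J) e_N`,
where `D^{(d)}` are the divided powers of the twisted derivation with `D f_i = e_i`; the
`(-q)`-integers in `ξ_q` arise from `D D^{(d)} = [d+1] D^{(d+1)}`. The coefficient `rho` automatically
vanishes unless `J ≤ T` (`setLE_of_xprod_ne`).

Now `φ_J η_N` may be expanded in minors and then exchanged, or exchanged and then expanded. Since
the monomials `e_M f_I` have dual functionals in a concrete model, built from iterated `4 × 4`
matrices (`exists_model`), the coefficients of `e_M f_I` agree (`coeff_compare`). They are the two
sides of the relation (`left_side`, `right_side`).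
-/

open scoped TensorProduct
open scoped Classical

noncomputable section

open QMat

/-! ### Quantum exterior algebras and divided powers -/

namespace QMat

/-- Product of the `e i`, `i ∈ N`, taken in increasing order of the indices. -/
def oprod {n : ℕ} {B : Type*} [Monoid B] (e : Fin n → B) (N : Finset (Fin n)) : B :=
  (N.sort (· ≥ ·)).foldr (fun x b => b * e x) 1

theorem oprod_empty {n : ℕ} {B : Type*} [Monoid B] (e : Fin n → B) : oprod e ∅ = 1 := by
  simp [oprod]

theorem sort_insert_max {n : ℕ} {N : Finset (Fin n)} {x : Fin n} (h : ∀ y ∈ N, y < x) :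
    (insert x N).sort (· ≥ ·) = x :: N.sort (· ≥ ·) :=
  Finset.sort_insert (r := (· ≥ ·)) (fun b hb => (h b hb).le) (fun hx => lt_irrefl _ (h x hx))

theorem oprod_insert {n : ℕ} {B : Type*} [Monoid B] (e : Fin n → B) {N : Finset (Fin n)}
    {x : Fin n} (h : ∀ y ∈ N, y < x) : oprod e (insert x N) = oprod e N * e x := by
  simp [oprod, sort_insert_max h]

/-- The relations of the quantum exterior algebra, for the generators indexed by `U`. -/
structure ExtRel {k : Type*} [Field k] {n : ℕ} {B : Type*} [Ring B] [Algebra k B] (q : k)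
    (U : Finset (Fin n)) (e : Fin n → B) : Prop where
  sq : ∀ i ∈ U, e i * e i = 0
  comm : ∀ i ∈ U, ∀ j ∈ U, i < j → e j * e i = (-q) • (e i * e j)

/-- The exchange relations between two quantum exterior algebras, given by the standard
`R`-matrix, for the generators indexed by `U`. -/
structure CrossRel {k : Type*} [Field k] {n : ℕ} {B : Type*} [Ring B] [Algebra k B] (q : k)
    (U : Finset (Fin n)) (e f : Fin n → B) : Prop where
  diag : ∀ i ∈ U, f i * e i = q • (e i * f i)
  lt : ∀ i ∈ U, ∀ j ∈ U, i < j → f i * e j = e j * f i + (q - q⁻¹) • (e i * f j)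
  gt : ∀ i ∈ U, ∀ j ∈ U, i < j → f j * e i = e i * f j

/-- The divided powers `D^{(d)} f_J` of the `q`-derivation `D` with `D f_i = e_i`, for `J` given
as the decreasing list of its elements. -/
def gList {k : Type*} [Field k] {n : ℕ} {B : Type*} [Ring B] [Algebra k B] (q : k)
    (e f : Fin n → B) : List (Fin n) → ℕ → B
  | [], 0 => 1
  | [], _ + 1 => 0
  | x :: l, 0 => gList q e f l 0 * f x
  | x :: l, d + 1 => gList q e f l (d + 1) * f x
      + ((-q) ^ (-(l.length : ℤ) - d)) • (gList q e f l d * e x)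

/-- The divided power `D^{(d)} f_J` as a function of the index set `J`. -/
def gPow {k : Type*} [Field k] {n : ℕ} {B : Type*} [Ring B] [Algebra k B] (q : k)
    (e f : Fin n → B) (d : ℕ) (J : Finset (Fin n)) : B :=
  gList q e f (J.sort (· ≥ ·)) d

section Exchange

variable {k : Type*} [Field k] {n : ℕ} {B : Type*} [Ring B] [Algebra k B] {q : k}
  {e f : Fin n → B}

theorem gPow_insert_zero {J : Finset (Fin n)} {x : Fin n} (h : ∀ y ∈ J, y < x) :
    gPow q e f 0 (insert x J) = gPow q e f 0 J * f x := by
  simp [gPow, sort_insert_max h, gList]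

theorem gPow_insert_succ {J : Finset (Fin n)} {x : Fin n} (h : ∀ y ∈ J, y < x) (d : ℕ) :
    gPow q e f (d + 1) (insert x J) = gPow q e f (d + 1) J * f x
      + ((-q) ^ (-(J.card : ℤ) - d)) • (gPow q e f d J * e x) := by
  simp [gPow, sort_insert_max h, gList]

theorem gPow_zero (J : Finset (Fin n)) : gPow q e f 0 J = oprod f J := by
  induction J using Finset.induction_on_max with
  | empty => simp [gPow, oprod, gList]
  | insert x J h ih => rw [gPow_insert_zero h, oprod_insert _ h, ih]

theorem negqInt_zero : negqInt k q 0 = 0 := by simp [negqInt]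

theorem negqInt_succ (hq : q ≠ 0) (d : ℕ) :
    negqInt k q (d + 1) = (-q) ^ (d : ℤ) + (-q) ^ (-1 : ℤ) * negqInt k q d := by
  have hp : -q ≠ 0 := neg_ne_zero.mpr hq
  unfold negqInt
  rw [Finset.sum_range_succ', Finset.mul_sum, add_comm]
  congr 1
  · congr 1; push_cast; ring
  · refine Finset.sum_congr rfl fun s _ => ?_
    rw [← zpow_add₀ hp]
    congr 1; push_cast; ring

theorem qhat_mul_negqInt (hq : q ≠ 0) (d : ℕ) :
    (q - q⁻¹) * negqInt k q d = (-q) ^ (-(d : ℤ)) - (-q) ^ (d : ℤ) := by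
  have hp : -q ≠ 0 := neg_ne_zero.mpr hq
  induction d with
  | zero => simp [negqInt_zero]
  | succ d ih =>
    rw [negqInt_succ hq, mul_add, mul_left_comm, ih]
    have h1 : (-q) ^ (-((d + 1 : ℕ) : ℤ)) = (-q) ^ (-(d : ℤ)) * (-q)⁻¹ := by
      rw [← zpow_sub_one₀ hp]; congr 1; push_cast; ring
    have h2 : (-q) ^ (((d + 1 : ℕ) : ℤ)) = (-q) ^ (d : ℤ) * (-q) := by
      rw [← zpow_add_one₀ hp]; congr 1
    rw [h1, h2, zpow_neg_one]
    field_simp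
    ring

/-- A generator of index larger than `N` moved across `e_N`. -/
theorem ext_mul_max (he : ExtRel q Finset.univ e) {N : Finset (Fin n)} {x : Fin n}
    (h : ∀ y ∈ N, y < x) : e x * oprod e N = ((-q) ^ (N.card : ℤ)) • (oprod e N * e x) := by
  induction N using Finset.induction_on_max with
  | empty => simp [oprod_empty]
  | insert y N hN ih =>
    have hy : y < x := h y (Finset.mem_insert_self _ _)
    have hyN : y ∉ N := fun hh => lt_irrefl _ (hN y hh)
    rw [oprod_insert _ hN, ← mul_assoc, ih fun z hz => h z (Finset.mem_insert_of_mem hz),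
      smul_mul_assoc, mul_assoc, he.comm y (by simp) x (by simp) hy, Finset.card_insert_of_notMem hyN,
      mul_smul_comm, smul_smul, mul_assoc]
    congr 1
    norm_cast
    exact (pow_succ _ _).symm

theorem cross_mul_max (hc : CrossRel q Finset.univ e f) {N : Finset (Fin n)} {x : Fin n}
    (h : ∀ y ∈ N, y < x) : f x * oprod e N = oprod e N * f x := by
  induction N using Finset.induction_on_max with
  | empty => simp [oprod_empty]
  | insert y N hN ih =>
    have hy : y < x := h y (Finset.mem_insert_self _ _)
    rw [oprod_insert _ hN, ← mul_assoc, ih fun z hz => h z (Finset.mem_insert_of_mem hz),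
      mul_assoc, hc.gt y (by simp) x (by simp) hy, mul_assoc]

/-- `D^{(d)}` is a twisted derivation; together with `D D^{(d)} = [d+1] D^{(d+1)}` this gives the
exchange of `D^{(d)} f_J` with a generator `e_x` of index larger than `J`. -/
theorem gPow_mul_max (hq : q ≠ 0) (he : ExtRel q Finset.univ e) (hf : ExtRel q Finset.univ f)
    (hc : CrossRel q Finset.univ e f)
    {J : Finset (Fin n)} {x : Fin n} (h : ∀ y ∈ J, y < x) (d : ℕ) :
    gPow q e f d J * e x = ((-q) ^ (-(d : ℤ))) • (e x * gPow q e f d J)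
      + ((q - q⁻¹) * (-q) ^ ((J.card : ℤ) - 1) * negqInt k q (d + 1)) •
        (gPow q e f (d + 1) J * f x) := by
  have hp : -q ≠ 0 := neg_ne_zero.mpr hq
  induction J using Finset.induction_on_max generalizing d with
  | empty => cases d <;> simp [gPow, gList]
  | insert y J hJ ih =>
    have hy : y < x := h y (Finset.mem_insert_self _ _)
    have hyJ : y ∉ J := fun hh => lt_irrefl _ (hJ y hh)
    have ih' := ih fun z hz => h z (Finset.mem_insert_of_mem hz)
    have r1 := hc.lt y (by simp) x (by simp) hy
    have r2 := hc.gt y (by simp) x (by simp) hy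
    have r3 := he.comm y (by simp) x (by simp) hy
    have r4 := hf.comm y (by simp) x (by simp) hy
    have r5 : e y * e x = ((-q)⁻¹) • (e x * e y) := by
      rw [r3, smul_smul, inv_mul_cancel₀ hp, one_smul]
    have k1 : ∀ Y : B, Y * f y * e x = Y * e x * f y + (q - q⁻¹) • (Y * e y * f x) := by
      intro Y; rw [mul_assoc, r1, mul_add, mul_smul_comm, mul_assoc, mul_assoc]
    have k2 : ∀ Y : B, Y * e y * e x = ((-q)⁻¹) • (Y * e x * e y) := by
      intro Y; rw [mul_assoc, r5, mul_smul_comm, mul_assoc]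
    have k3 : ∀ Y : B, Y * f x * f y = (-q) • (Y * f y * f x) := by
      intro Y; rw [mul_assoc, r4, mul_smul_comm, mul_assoc]
    have k4 : ∀ Y : B, Y * f x * e y = Y * e y * f x := by
      intro Y; rw [mul_assoc, r2, mul_assoc]
    rw [Finset.card_insert_of_notMem hyJ]
    cases d with
    | zero =>
      rw [gPow_insert_zero hJ, gPow_insert_succ hJ, k1, ih']
      simp only [add_mul, smul_mul_assoc, k3, ← mul_assoc]
      have e1 : ((J.card + 1 : ℕ) : ℤ) - 1 = J.card := by push_cast; ring
      have e2 : (-q) ^ ((J.card : ℤ) - 1) = (-q) ^ (J.card : ℤ) * (-q)⁻¹ := zpow_sub_one₀ hp _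
      have e3 : (-q) ^ (-(J.card : ℤ) - ((0:ℕ) : ℤ)) = ((-q) ^ (J.card : ℤ))⁻¹ := by
        rw [← zpow_neg]; simp
      have e4 : negqInt k q (0 + 1) = 1 := by simp [negqInt]
      rw [e1, e2, e3, e4]
      have hz : (-q) ^ (J.card : ℤ) ≠ 0 := zpow_ne_zero _ hp
      generalize (-q) ^ (J.card : ℤ) = c at *
      match_scalars <;> field_simp
    | succ d =>
      rw [gPow_insert_succ hJ, gPow_insert_succ hJ, add_mul, k1, ih', smul_mul_assoc, k2, ih']
      simp only [add_mul, smul_mul_assoc, k3, k4, mul_add, mul_smul_comm, ← mul_assoc]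
      have e1 : ((J.card + 1 : ℕ) : ℤ) - 1 = J.card := by push_cast; ring
      have e2 : (-q) ^ ((J.card : ℤ) - 1) = (-q) ^ (J.card : ℤ) * (-q)⁻¹ := zpow_sub_one₀ hp _
      have e3 : (-q) ^ (-(J.card : ℤ) - (d : ℤ)) = ((-q) ^ (J.card : ℤ))⁻¹ * ((-q) ^ (d : ℤ))⁻¹ := by
        rw [← zpow_neg, ← zpow_neg, ← zpow_add₀ hp]; congr 1
      have e5 : (-q) ^ (-(J.card : ℤ) - ((d + 1 : ℕ) : ℤ)) =
          ((-q) ^ (J.card : ℤ))⁻¹ * ((-q) ^ (d : ℤ))⁻¹ * (-q)⁻¹ := by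
        rw [← zpow_neg, ← zpow_neg, ← zpow_add₀ hp, ← zpow_sub_one₀ hp]; congr 1; push_cast; ring
      have e6 : (-q) ^ (-((d + 1 : ℕ) : ℤ)) = ((-q) ^ (d : ℤ))⁻¹ * (-q)⁻¹ := by
        rw [← zpow_neg, ← zpow_sub_one₀ hp]; congr 1; push_cast; ring
      have e7 : (-q) ^ (-(d : ℤ)) = ((-q) ^ (d : ℤ))⁻¹ := zpow_neg _ _
      have e8 : negqInt k q (d + 1 + 1) = (-q) ^ (d : ℤ) * (-q) + (-q)⁻¹ * negqInt k q (d + 1) := by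
        rw [negqInt_succ hq, zpow_neg_one, ← zpow_add_one₀ hp]; push_cast; rfl
      rw [e1, e2, e3, e5, e6, e7, e8]
      have hz : (-q) ^ (J.card : ℤ) ≠ 0 := zpow_ne_zero _ hp
      have hz' : (-q) ^ (d : ℤ) ≠ 0 := zpow_ne_zero _ hp
      generalize (-q) ^ (J.card : ℤ) = c at *
      generalize (-q) ^ (d : ℤ) = c' at *
      generalize negqInt k q (d + 1) = m
      match_scalars <;> field_simp <;> ring

end Exchange
end QMat

/-! ### Recursions for the coefficients -/

namespace QMat

section Combinatorics

variable {n : ℕ}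

theorem ell_eq_sum (S T : Finset (Fin n)) :
    ell n S T = ∑ s ∈ S, (T.filter (· < s)).card := by
  simp only [ell, Finset.card_filter, Finset.sum_product]

theorem ell_insert_left {S T : Finset (Fin n)} {x : Fin n} (hS : x ∉ S) (hT : ∀ y ∈ T, y < x) :
    ell n (insert x S) T = T.card + ell n S T := by
  rw [ell_eq_sum, ell_eq_sum, Finset.sum_insert hS, Finset.filter_true_of_mem hT]

theorem ell_insert_right {S T : Finset (Fin n)} {x : Fin n} (hS : ∀ y ∈ S, y ≤ x) :
    ell n S (insert x T) = ell n S T := by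
  rw [ell_eq_sum, ell_eq_sum]
  refine Finset.sum_congr rfl fun s hs => ?_
  rw [Finset.filter_insert, if_neg (hS s hs).not_gt]

/-- The product `ξ_q(V;W)`, written over the elements of `V`. -/
def xprod {k : Type*} [Field k] (q : k) (V W : Finset (Fin n)) : k :=
  ∏ r ∈ V, negqInt k q ((W.filter (· ≤ r)).card - (V.filter (· < r)).card)

variable {k : Type*} [Field k] {q : k}

theorem xprod_insert_left {V W : Finset (Fin n)} {x : Fin n} (hV : ∀ y ∈ V, y < x)
    (hW : ∀ y ∈ W, y < x) :
    xprod q (insert x V) W = negqInt k q (W.card - V.card) * xprod q V W := by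
  have hx : x ∉ V := fun hh => lt_irrefl _ (hV x hh)
  rw [xprod, Finset.prod_insert hx, xprod]
  congr 1
  · rw [Finset.filter_insert, if_neg (lt_irrefl x), Finset.filter_true_of_mem hV,
      Finset.filter_true_of_mem fun y hy => (hW y hy).le]
  · refine Finset.prod_congr rfl fun r hr => ?_
    rw [Finset.filter_insert, if_neg (hV r hr).not_gt]

theorem xprod_insert_right {V W : Finset (Fin n)} {x : Fin n} (hV : ∀ y ∈ V, y < x) :
    xprod q V (insert x W) = xprod q V W := by
  refine Finset.prod_congr rfl fun r hr => ?_
  rw [Finset.filter_insert, if_neg (hV r hr).not_ge]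

/-- The `l`-th element of `V` has exactly `l` elements of `V` below it; this turns the enumeration in
`xiq` into counting. -/
theorem card_filter_orderEmb {V : Finset (Fin n)} {m : ℕ} (h : V.card = m) (l : Fin m) :
    (V.filter (· < V.orderEmbOfFin h l)).card = l := by
  have : V.filter (· < V.orderEmbOfFin h l)
      = (Finset.univ.filter (· < l)).map (V.orderEmbOfFin h).toEmbedding := by
    ext y
    simp only [Finset.mem_filter, Finset.mem_map, Finset.mem_univ, true_and,
      RelEmbedding.coe_toEmbedding]
    constructor
    · rintro ⟨hy, hlt⟩
      obtain ⟨m, rfl⟩ : y ∈ Set.range (V.orderEmbOfFin h) := by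
        rw [Finset.range_orderEmbOfFin]; exact hy
      exact ⟨m, by simpa using hlt, rfl⟩
    · rintro ⟨m, hm, rfl⟩
      exact ⟨Finset.orderEmbOfFin_mem _ _ _, by simpa using hm⟩
  rw [this, Finset.card_map, show Finset.univ.filter (· < l) = Finset.Iio l by ext; simp,
    Fin.card_Iio]

theorem card_filter_orderIso {V : Finset (Fin n)} {m : ℕ} (h : V.card = m) (l : Fin m) :
    (V.filter (· < (↑((V.orderIsoOfFin h) l) : Fin n))).card = l :=
  card_filter_orderEmb h l

theorem xiq_eq_xprod {V W : Finset (Fin n)} (h : V.card = W.card) :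
    xiq k n q V W = xprod q V W := by
  rw [xiq, dif_pos h, xprod, ← Finset.prod_coe_sort V,
    ← (V.orderIsoOfFin rfl).toEquiv.prod_comp]
  refine Finset.prod_congr rfl fun l _ => ?_
  change _ = negqInt k q ((W.filter (· ≤ (↑((V.orderIsoOfFin rfl) l) : Fin n))).card
    - (V.filter (· < (↑((V.orderIsoOfFin rfl) l) : Fin n))).card)
  rw [card_filter_orderIso]

/-- Nonvanishing of `ξ_q` forces the componentwise order: otherwise one of the truncated
differences is `0`, and `[0]_{-q} = 0`. -/
theorem setLE_of_xprod_ne {J T : Finset (Fin n)} (h : T.card = J.card)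
    (hx : xprod q (T \ J) (J \ T) ≠ 0) : setLE n J T := by
  refine ⟨h.symm, fun h' l => ?_⟩
  by_contra hlt
  rw [not_le] at hlt
  set t : Fin n := ↑((T.orderIsoOfFin h'.symm) l) with ht
  set j : Fin n := ↑((J.orderIsoOfFin rfl) l) with hj
  have c1 : (J.filter (· < j)).card = l := card_filter_orderIso rfl l
  have c2 : (T.filter (· < t)).card = l := card_filter_orderIso h'.symm l
  have htT : t ∈ T := Subtype.coe_prop _
  have c3 : (T.filter (· ≤ t)).card = l + 1 := by
    have : T.filter (· ≤ t) = insert t (T.filter (· < t)) := by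
      ext y; simp only [Finset.mem_filter, Finset.mem_insert]; grind
    rw [this, Finset.card_insert_of_notMem (by simp), c2]
  have c4 : (J.filter (· ≤ t)).card ≤ l := by
    rw [← c1]
    refine Finset.card_le_card fun y hy => ?_
    simp only [Finset.mem_filter] at hy ⊢
    exact ⟨hy.1, hy.2.trans_lt hlt⟩
  -- the largest element `r` of `T ∖ J` below `t` has a vanishing factor
  have d1 := Finset.card_sdiff_add_card_inter (T.filter (· ≤ t)) (J.filter (· ≤ t))
  have d2 := Finset.card_sdiff_add_card_inter (J.filter (· ≤ t)) (T.filter (· ≤ t))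
  rw [Finset.inter_comm] at d2
  have e1 : T.filter (· ≤ t) \ J.filter (· ≤ t) = (T \ J).filter (· ≤ t) := by
    ext y; simp only [Finset.mem_filter, Finset.mem_sdiff]; tauto
  have e2 : J.filter (· ≤ t) \ T.filter (· ≤ t) = (J \ T).filter (· ≤ t) := by
    ext y; simp only [Finset.mem_filter, Finset.mem_sdiff]; tauto
  rw [e1] at d1
  rw [e2] at d2
  have hlt2 : ((J \ T).filter (· ≤ t)).card < ((T \ J).filter (· ≤ t)).card := by omega
  have hne : ((T \ J).filter (· ≤ t)).Nonempty := Finset.card_pos.mp (by omega)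
  set r := ((T \ J).filter (· ≤ t)).max' hne with hr
  have hrm : r ∈ (T \ J).filter (· ≤ t) := Finset.max'_mem _ _
  have hrm' := Finset.mem_filter.mp hrm
  refine hx (Finset.prod_eq_zero hrm'.1 ?_)
  have f1 : (T \ J).filter (· ≤ t) ⊆ insert r ((T \ J).filter (· < r)) := by
    intro y hy
    have := Finset.le_max' _ y hy
    rw [← hr] at this
    simp only [Finset.mem_filter, Finset.mem_insert] at hy ⊢
    rcases this.lt_or_eq with h1 | h1
    · exact Or.inr ⟨hy.1, h1⟩
    · exact Or.inl h1
  have f2 := (Finset.card_le_card f1).trans (Finset.card_insert_le _ _)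
  have f3 : ((J \ T).filter (· ≤ r)).card ≤ ((J \ T).filter (· ≤ t)).card := by
    refine Finset.card_le_card fun y hy => ?_
    simp only [Finset.mem_filter] at hy ⊢
    exact ⟨hy.1, hy.2.trans hrm'.2⟩
  rw [Nat.sub_eq_zero_of_le (by omega), negqInt_zero]

/-- The coefficient of `e_{T^♮} f_T` in `D^{(d)}(f_J) e_N`. For `d = 0` it is `q^{|J ∩ N|}` times
the coefficient `μ_T` of the theorem; the parameter `d` is what makes the recursion on the largest
index close up. -/
def rho (q : k) (d : ℕ) (J N T : Finset (Fin n)) : k :=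
  if J ∩ N ⊆ T ∧ T.card + d = J.card then
    q ^ (J ∩ N).card * (q - q⁻¹) ^ (T \ J).card
      * (-q) ^ (Lnat n T J N + d * ((N.card : ℤ) - J.card) + ((d + 1).choose 2 : ℕ))
      * xprod q (T \ J) (J \ T)
  else 0

/-- The set `(T^♮ ∖ T) ∪ (J ∖ N)` whose inversions against `T ∖ J` and `J ∖ T` are counted by `Lnat`. -/
def uset (J N T : Finset (Fin n)) : Finset (Fin n) := (snat n J N T \ T) ∪ (J \ N)

theorem Lnat_eq (J N T : Finset (Fin n)) :
    Lnat n T J N = (ell n (uset J N T) (T \ J) : ℤ) - ell n (uset J N T) (J \ T) := rfl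

theorem uset_subset (J N T : Finset (Fin n)) : uset J N T ⊆ J ∪ N := by
  intro y; simp only [uset, snat, Finset.mem_union, Finset.mem_sdiff, Finset.mem_inter]; tauto

theorem card_sdiff_eq {d : ℕ} {J T : Finset (Fin n)} (h : T.card + d = J.card) :
    (J \ T).card = (T \ J).card + d := by
  have h1 := Finset.card_sdiff_add_card_inter T J
  have h2 := Finset.card_sdiff_add_card_inter J T
  rw [Finset.inter_comm] at h2
  omega

/-! #### Recursions for `rho` when a new largest index `x` is adjoined -/

section Rec

variable {J N T : Finset (Fin n)} {x : Fin n}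
  (hJ : ∀ y ∈ J, y < x) (hN : ∀ y ∈ N, y < x) (hT : T ⊆ J ∪ N)
include hJ hN hT

theorem lt_of_mem_T : ∀ y ∈ T, y < x := fun y hy => by
  rcases Finset.mem_union.mp (hT hy) with h | h
  exacts [hJ y h, hN y h]

theorem rho_N_notMem (d : ℕ) : rho q d J (insert x N) T = rho q d J N T := by
  have hxJ : x ∉ J := fun hh => lt_irrefl _ (hJ x hh)
  have hxN : x ∉ N := fun hh => lt_irrefl _ (hN x hh)
  have hT' := lt_of_mem_T hJ hN hT
  have hxT : x ∉ T := fun hh => lt_irrefl _ (hT' x hh)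
  have i1 : J ∩ insert x N = J ∩ N := by grind
  unfold rho
  rw [i1]
  split_ifs with hc
  swap; · rfl
  have u1 : uset J (insert x N) T = insert x (uset J N T) := by
    ext y; simp only [uset, snat, Finset.mem_union, Finset.mem_sdiff, Finset.mem_inter,
      Finset.mem_insert]; grind
  have hxU : x ∉ uset J N T := fun hh => by
    rcases Finset.mem_union.mp (uset_subset _ _ _ hh) with h | h <;> contradiction
  have hcard := card_sdiff_eq hc.2
  rw [Lnat_eq, Lnat_eq, u1, ell_insert_left hxU fun y hy => hT' y (Finset.mem_sdiff.mp hy).1,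
    ell_insert_left hxU fun y hy => hJ y (Finset.mem_sdiff.mp hy).1, hcard,
    Finset.card_insert_of_notMem hxN]
  congr 3
  push_cast; ring

theorem rho_N_mem (hq : q ≠ 0) (d : ℕ) : rho q d J (insert x N) (insert x T)
    = (q - q⁻¹) * (-q) ^ ((J.card : ℤ) - N.card - 1) * negqInt k q (d + 1)
      * rho q (d + 1) J N T := by
  have hp : -q ≠ 0 := neg_ne_zero.mpr hq
  have hxJ : x ∉ J := fun hh => lt_irrefl _ (hJ x hh)
  have hxN : x ∉ N := fun hh => lt_irrefl _ (hN x hh)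
  have hT' := lt_of_mem_T hJ hN hT
  have hxT : x ∉ T := fun hh => lt_irrefl _ (hT' x hh)
  have i1 : J ∩ insert x N = J ∩ N := by grind
  have i2 : J ∩ N ⊆ insert x T ↔ J ∩ N ⊆ T := by grind
  have ic : (J ∩ insert x N ⊆ insert x T ∧ (insert x T).card + d = J.card) ↔ (J ∩ N ⊆ T ∧ T.card + (d + 1) = J.card) := by
    rw [i1, i2, Finset.card_insert_of_notMem hxT, add_right_comm T.card 1 d, add_assoc]
  unfold rho
  by_cases hc : J ∩ N ⊆ T ∧ T.card + (d + 1) = J.card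
  swap
  · rw [if_neg (mt ic.1 hc), if_neg hc, mul_zero]
  rw [if_pos (ic.2 hc), if_pos hc, i1]
  have u1 : uset J (insert x N) (insert x T) = uset J N T := by
    ext y; simp only [uset, snat, Finset.mem_union, Finset.mem_sdiff, Finset.mem_inter,
      Finset.mem_insert]; grind
  have hU : ∀ y ∈ uset J N T, y ≤ x := fun y hy => by
    rcases Finset.mem_union.mp (uset_subset _ _ _ hy) with h | h
    exacts [(hJ y h).le, (hN y h).le]
  have s1 : insert x T \ J = insert x (T \ J) := by grind
  have s2 : J \ insert x T = J \ T := by grind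
  have hcard := card_sdiff_eq hc.2
  rw [Lnat_eq, Lnat_eq, u1, s1, s2, ell_insert_right hU,
    xprod_insert_left (fun y hy => hT' y (Finset.mem_sdiff.mp hy).1)
      (fun y hy => hJ y (Finset.mem_sdiff.mp hy).1), hcard,
    Finset.card_insert_of_notMem hxN, Finset.card_insert_of_notMem (by simp [hxT]),
    Nat.add_sub_cancel_left, pow_succ]
  have c1 : (d + 1 + 1).choose 2 = (d + 1) + (d + 1).choose 2 := by
    rw [Nat.choose_succ_succ' (d + 1) 1]; simp
  rw [c1]
  generalize (ell n (uset J N T) (T \ J) : ℤ) - ell n (uset J N T) (J \ T) = L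
  have z1 : L + (d : ℤ) * (((N.card + 1 : ℕ) : ℤ) - J.card) + (((d + 1).choose 2 : ℕ) : ℤ)
    = ((J.card : ℤ) - N.card - 1) + (L + ((d + 1 : ℕ) : ℤ) * ((N.card : ℤ) - J.card)
      + ((d + 1 + (d + 1).choose 2 : ℕ) : ℤ)) := by push_cast; ring
  rw [z1, zpow_add₀ hp]
  ring

theorem rho_J_mem (hq : q ≠ 0) (d : ℕ) : rho q d (insert x J) N (insert x T)
    = (-q) ^ (-2 * (d : ℤ)) * rho q d J N T := by
  have hp : -q ≠ 0 := neg_ne_zero.mpr hq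
  have hxJ : x ∉ J := fun hh => lt_irrefl _ (hJ x hh)
  have hxN : x ∉ N := fun hh => lt_irrefl _ (hN x hh)
  have hT' := lt_of_mem_T hJ hN hT
  have hxT : x ∉ T := fun hh => lt_irrefl _ (hT' x hh)
  have i1 : insert x J ∩ N = J ∩ N := by grind
  have i2 : J ∩ N ⊆ insert x T ↔ J ∩ N ⊆ T := by grind
  have ic : (insert x J ∩ N ⊆ insert x T ∧ (insert x T).card + d = (insert x J).card) ↔ (J ∩ N ⊆ T ∧ T.card + d = J.card) := by
    rw [i1, i2, Finset.card_insert_of_notMem hxT, Finset.card_insert_of_notMem hxJ,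
      add_right_comm T.card 1 d, add_left_inj]
  unfold rho
  by_cases hc : J ∩ N ⊆ T ∧ T.card + d = J.card
  swap
  · rw [if_neg (mt ic.1 hc), if_neg hc, mul_zero]
  rw [if_pos (ic.2 hc), if_pos hc, i1]
  have u1 : uset (insert x J) N (insert x T) = insert x (uset J N T) := by
    ext y; simp only [uset, snat, Finset.mem_union, Finset.mem_sdiff, Finset.mem_inter,
      Finset.mem_insert]; grind
  have hxU : x ∉ uset J N T := fun hh => by
    rcases Finset.mem_union.mp (uset_subset _ _ _ hh) with h | h <;> contradiction
  have s1 : insert x T \ insert x J = T \ J := by grind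
  have s2 : insert x J \ insert x T = J \ T := by grind
  have hcard := card_sdiff_eq hc.2
  rw [Lnat_eq, Lnat_eq, u1, s1, s2, Finset.card_insert_of_notMem hxJ,
    ell_insert_left hxU fun y hy => hT' y (Finset.mem_sdiff.mp hy).1,
    ell_insert_left hxU fun y hy => hJ y (Finset.mem_sdiff.mp hy).1, hcard]
  have z1 : ((((T \ J).card + ell n (uset J N T) (T \ J) : ℕ) : ℤ)
        - (((T \ J).card + d + ell n (uset J N T) (J \ T) : ℕ) : ℤ))
        + (d : ℤ) * ((N.card : ℤ) - ((J.card + 1 : ℕ) : ℤ)) + (((d + 1).choose 2 : ℕ) : ℤ)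
      = -2 * (d : ℤ) + ((ell n (uset J N T) (T \ J) : ℤ) - ell n (uset J N T) (J \ T)
        + (d : ℤ) * ((N.card : ℤ) - J.card) + (((d + 1).choose 2 : ℕ) : ℤ)) := by
    push_cast; ring
  rw [z1, zpow_add₀ hp]
  ring

theorem rho_J_notMem_succ (hq : q ≠ 0) (d : ℕ) : rho q (d + 1) (insert x J) N T
    = (-q) ^ ((N.card : ℤ) - J.card - d) * rho q d J N T := by
  have hp : -q ≠ 0 := neg_ne_zero.mpr hq
  have hxJ : x ∉ J := fun hh => lt_irrefl _ (hJ x hh)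
  have hxN : x ∉ N := fun hh => lt_irrefl _ (hN x hh)
  have hT' := lt_of_mem_T hJ hN hT
  have hxT : x ∉ T := fun hh => lt_irrefl _ (hT' x hh)
  have i1 : insert x J ∩ N = J ∩ N := by grind
  have ic : (insert x J ∩ N ⊆ T ∧ T.card + (d + 1) = (insert x J).card) ↔ (J ∩ N ⊆ T ∧ T.card + d = J.card) := by
    rw [i1, Finset.card_insert_of_notMem hxJ, ← add_assoc T.card d 1, add_left_inj]
  unfold rho
  by_cases hc : J ∩ N ⊆ T ∧ T.card + d = J.card
  swap
  · rw [if_neg (mt ic.1 hc), if_neg hc, mul_zero]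
  rw [if_pos (ic.2 hc), if_pos hc, i1]
  have u1 : uset (insert x J) N T = insert x (uset J N T) := by
    ext y; simp only [uset, snat, Finset.mem_union, Finset.mem_sdiff, Finset.mem_inter,
      Finset.mem_insert]; grind
  have hxU : x ∉ uset J N T := fun hh => by
    rcases Finset.mem_union.mp (uset_subset _ _ _ hh) with h | h <;> contradiction
  have hU : ∀ y ∈ insert x (uset J N T), y ≤ x := fun y hy => by
    rcases Finset.mem_insert.mp hy with rfl | hy
    · exact le_rfl
    rcases Finset.mem_union.mp (uset_subset _ _ _ hy) with h | h
    exacts [(hJ y h).le, (hN y h).le]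
  have s1 : T \ insert x J = T \ J := by grind
  have s2 : insert x J \ T = insert x (J \ T) := by grind
  have hcard := card_sdiff_eq hc.2
  rw [Lnat_eq, Lnat_eq, u1, s1, s2, Finset.card_insert_of_notMem hxJ, ell_insert_right hU,
    ell_insert_left hxU fun y hy => hT' y (Finset.mem_sdiff.mp hy).1,
    ell_insert_left hxU fun y hy => hJ y (Finset.mem_sdiff.mp hy).1, hcard,
    xprod_insert_right (fun y hy => hT' y (Finset.mem_sdiff.mp hy).1)]
  have c1 : (d + 1 + 1).choose 2 = (d + 1) + (d + 1).choose 2 := by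
    rw [Nat.choose_succ_succ' (d + 1) 1]; simp
  rw [c1]
  have z1 : ((((T \ J).card + ell n (uset J N T) (T \ J) : ℕ) : ℤ)
        - (((T \ J).card + d + ell n (uset J N T) (J \ T) : ℕ) : ℤ))
        + ((d + 1 : ℕ) : ℤ) * ((N.card : ℤ) - ((J.card + 1 : ℕ) : ℤ))
        + ((d + 1 + (d + 1).choose 2 : ℕ) : ℤ)
      = ((N.card : ℤ) - J.card - d) + ((ell n (uset J N T) (T \ J) : ℤ) - ell n (uset J N T) (J \ T)
        + (d : ℤ) * ((N.card : ℤ) - J.card) + (((d + 1).choose 2 : ℕ) : ℤ)) := by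
    push_cast; ring
  rw [z1, zpow_add₀ hp]
  ring

theorem rho_J_notMem_zero : rho q 0 (insert x J) N T = 0 := by
  have hxJ : x ∉ J := fun hh => lt_irrefl _ (hJ x hh)
  have hT' := lt_of_mem_T hJ hN hT
  have hxT : x ∉ T := fun hh => lt_irrefl _ (hT' x hh)
  rw [rho]
  split_ifs with hc
  swap; · rfl
  -- `x` is larger than every element of `T`, so `insert x J ≤ T` is impossible
  by_contra hne
  have hle := setLE_of_xprod_ne (by simpa using hc.2) (right_ne_zero_of_mul hne)
  have hx : x ∈ insert x J := Finset.mem_insert_self _ _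
  have := hle.2 hle.1 (((insert x J).orderIsoOfFin rfl).symm ⟨x, hx⟩)
  rw [OrderIso.apply_symm_apply] at this
  exact absurd (hT' _ (Subtype.coe_prop _)) this.not_gt

theorem rho_both_mem (d : ℕ) : rho q d (insert x J) (insert x N) (insert x T)
    = q * rho q d J N T := by
  have hxJ : x ∉ J := fun hh => lt_irrefl _ (hJ x hh)
  have hxN : x ∉ N := fun hh => lt_irrefl _ (hN x hh)
  have hT' := lt_of_mem_T hJ hN hT
  have hxT : x ∉ T := fun hh => lt_irrefl _ (hT' x hh)
  have i1 : insert x J ∩ insert x N = insert x (J ∩ N) := by grind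
  have i2 : insert x (J ∩ N) ⊆ insert x T ↔ J ∩ N ⊆ T :=
    Finset.insert_subset_insert_iff (by simp [hxJ])
  have ic : (insert x J ∩ insert x N ⊆ insert x T ∧ (insert x T).card + d = (insert x J).card) ↔ (J ∩ N ⊆ T ∧ T.card + d = J.card) := by
    rw [i1, i2, Finset.card_insert_of_notMem hxT, Finset.card_insert_of_notMem hxJ,
      add_right_comm T.card 1 d, add_left_inj]
  unfold rho
  by_cases hc : J ∩ N ⊆ T ∧ T.card + d = J.card
  swap
  · rw [if_neg (mt ic.1 hc), if_neg hc, mul_zero]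
  rw [if_pos (ic.2 hc), if_pos hc, i1]
  have u1 : uset (insert x J) (insert x N) (insert x T) = uset J N T := by
    ext y; simp only [uset, snat, Finset.mem_union, Finset.mem_sdiff, Finset.mem_inter,
      Finset.mem_insert]; grind
  have s1 : insert x T \ insert x J = T \ J := by grind
  have s2 : insert x J \ insert x T = J \ T := by grind
  rw [Lnat_eq, Lnat_eq, u1, s1, s2, Finset.card_insert_of_notMem hxJ,
    Finset.card_insert_of_notMem hxN, Finset.card_insert_of_notMem (by simp [hxJ]), pow_succ]
  push_cast
  rw [add_sub_add_right_eq_sub]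
  ring

theorem rho_both_notMem (d : ℕ) : rho q d (insert x J) (insert x N) T = 0 := by
  have hxT : x ∉ T := fun hh => lt_irrefl _ (lt_of_mem_T hJ hN hT x hh)
  rw [rho, if_neg]
  exact fun hc => hxT (hc.1 (by simp))

end Rec

end Combinatorics
end QMat

/-! ### The exchange formula -/

namespace QMat

section Formula

variable {k : Type*} [Field k] {n : ℕ} {B : Type*} [Ring B] [Algebra k B] {q : k}
  {e f : Fin n → B} {J N T : Finset (Fin n)} {x : Fin n}

theorem snat_insert_right (hJ : x ∉ J) (hT : x ∉ T) :
    snat n J (insert x N) T = insert x (snat n J N T) := by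
  unfold snat; grind

theorem snat_insert_right_mem (hJ : x ∉ J) (hN : x ∉ N) :
    snat n J (insert x N) (insert x T) = snat n J N T := by
  unfold snat; grind

theorem snat_insert_left (hN : x ∉ N) (hT : x ∉ T) :
    snat n (insert x J) N T = insert x (snat n J N T) := by
  unfold snat; grind

theorem snat_insert_left_mem (hJ : x ∉ J) (hN : x ∉ N) :
    snat n (insert x J) N (insert x T) = snat n J N T := by
  unfold snat; grind

theorem snat_insert_both_mem (hJ : x ∉ J) (hN : x ∉ N) :
    snat n (insert x J) (insert x N) (insert x T) = insert x (snat n J N T) := by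
  unfold snat; grind

theorem snat_subset : snat n J N T ⊆ J ∪ N := by
  unfold snat; grind

theorem card_snat (hT : T ⊆ J ∪ N) (hK : J ∩ N ⊆ T) :
    (snat n J N T).card + T.card = J.card + N.card := by
  have h1 : Disjoint (J ∩ N) ((J ∪ N) \ T) := by
    rw [Finset.disjoint_left]; intro y hy hy'
    exact (Finset.mem_sdiff.mp hy').2 (hK hy)
  rw [snat, Finset.card_union_of_disjoint h1, add_assoc, Finset.card_sdiff_add_card_eq_card hT,
    add_comm, Finset.card_union_add_card_inter]

/-- The factor `e_x` moved into place in front of `e_{T^♮}`: whenever the coefficient is nonzero,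
`T^♮` has `|N| + d` elements. -/
theorem rho_smul_mul_left (hq : q ≠ 0) (he : ExtRel q Finset.univ e) (hJ : ∀ y ∈ J, y < x)
    (hN : ∀ y ∈ N, y < x) (hT : T ⊆ J ∪ N) (d : ℕ) :
    rho q d J N T • (e x * oprod e (snat n J N T))
      = (rho q d J N T * (-q) ^ ((N.card : ℤ) + d)) • oprod e (insert x (snat n J N T)) := by
  have hlt : ∀ y ∈ snat n J N T, y < x := fun y hy => by
    rcases Finset.mem_union.mp (snat_subset hy) with h | h
    exacts [hJ y h, hN y h]
  by_cases hc : J ∩ N ⊆ T ∧ T.card + d = J.card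
  · have h1 := card_snat hT hc.1
    have h2 : (snat n J N T).card = N.card + d := by omega
    rw [ext_mul_max he hlt, h2, oprod_insert _ hlt, smul_smul]
    push_cast; rfl
  · rw [rho, if_neg hc, zero_smul, zero_mul, zero_smul]

section Steps

variable (hq : q ≠ 0) (he : ExtRel q Finset.univ e) (hf : ExtRel q Finset.univ f)
  (hc : CrossRel q Finset.univ e f) (hJ : ∀ y ∈ J, y < x) (hN : ∀ y ∈ N, y < x)
include hq he hf hc hJ hN

/-- Adjoining the largest index `x` to `N` only. -/
theorem gPow_mul_step_N (d : ℕ) :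
    gPow q e f d J * oprod e N * e x
      = ((-q) ^ (-(N.card : ℤ) - d)) • (e x * (gPow q e f d J * oprod e N))
        + ((q - q⁻¹) * (-q) ^ ((J.card : ℤ) - N.card - 1) * negqInt k q (d + 1)) •
          (gPow q e f (d + 1) J * oprod e N * f x) := by
  have hp : -q ≠ 0 := neg_ne_zero.mpr hq
  have h1 : oprod e N * e x = ((-q) ^ (-(N.card : ℤ))) • (e x * oprod e N) := by
    rw [ext_mul_max he hN, smul_smul, ← zpow_add₀ hp, neg_add_cancel, zpow_zero, one_smul]
  rw [mul_assoc, h1, mul_smul_comm, ← mul_assoc, gPow_mul_max hq he hf hc hJ, add_mul,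
    smul_mul_assoc, smul_mul_assoc, mul_assoc (gPow q e f (d + 1) J) (f x), cross_mul_max hc hN,
    smul_add, smul_smul, smul_smul, ← mul_assoc, ← mul_assoc, sub_eq_add_neg (-(N.card : ℤ)),
    zpow_add₀ hp, show (J.card : ℤ) - N.card - 1 = -(N.card : ℤ) + (J.card - 1) by ring,
    zpow_add₀ hp (-(N.card : ℤ)) (J.card - 1)]
  congr 1
  · rw [mul_assoc (e x)]
  · rw [mul_assoc _ (oprod e N) (f x)]
    exact congrArg (· • _) (by ring)

omit hq he hf in
/-- Adjoining the largest index `x` to `J` only, without derivation. -/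
theorem gPow_mul_step_J_zero :
    gPow q e f 0 (insert x J) * oprod e N = gPow q e f 0 J * oprod e N * f x := by
  rw [gPow_insert_zero hJ, mul_assoc, cross_mul_max hc hN, mul_assoc]

/-- Adjoining the largest index `x` to `J` only: the term `D^{(d+1)}(f_J) f_x` receives one
contribution directly and one from reordering `D^{(d)}(f_J) e_x`. -/
theorem gPow_mul_step_J_succ (d : ℕ) :
    gPow q e f (d + 1) (insert x J) * oprod e N
      = ((-q) ^ (-2 * ((d : ℤ) + 1))) • (gPow q e f (d + 1) J * oprod e N * f x)
        + ((-q) ^ (-(J.card : ℤ) - 2 * d)) • (e x * (gPow q e f d J * oprod e N)) := by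
  have hp : -q ≠ 0 := neg_ne_zero.mpr hq
  rw [gPow_insert_succ hJ, gPow_mul_max hq he hf hc hJ, add_mul, smul_mul_assoc, add_mul,
    smul_mul_assoc, smul_mul_assoc, mul_assoc _ (f x), cross_mul_max hc hN, smul_add, smul_smul,
    smul_smul, ← zpow_add₀ hp, ← mul_assoc, ← mul_assoc (e x)]
  have h1 := qhat_mul_negqInt (k := k) hq (d + 1)
  have h2 : (-q) ^ (-(J.card : ℤ) - d) * ((q - q⁻¹) * (-q) ^ ((J.card : ℤ) - 1)
      * negqInt k q (d + 1)) = (-q) ^ (-2 * ((d : ℤ) + 1)) - 1 := by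
    rw [mul_right_comm (q - q⁻¹), h1, sub_mul, mul_sub, ← zpow_add₀ hp, ← zpow_add₀ hp,
      ← zpow_add₀ hp, ← zpow_add₀ hp]
    congr 1
    · congr 1; push_cast; ring
    · rw [← zpow_zero (-q)]; congr 1; push_cast; ring
  rw [h2, show -(J.card : ℤ) - d + -(d : ℤ) = -(J.card : ℤ) - 2 * d by ring]
  module

/-- Adjoining the largest index `x` to both `J` and `N`; `e_x² = f_x² = 0` leaves a single term. -/
theorem gPow_mul_step_both (d : ℕ) :
    gPow q e f d (insert x J) * oprod e N * e x
      = (q * (-q) ^ (-(N.card : ℤ) - d)) • (e x * (gPow q e f d J * oprod e N) * f x) := by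
  have hp : -q ≠ 0 := neg_ne_zero.mpr hq
  have r1 := hc.diag x (by simp)
  have r2 := hf.sq x (by simp)
  have r3 := he.sq x (by simp)
  -- the common rewriting of `P f_x e_x`
  have key : ∀ d : ℕ, gPow q e f d J * oprod e N * f x * e x
      = (q * (-q) ^ (-(N.card : ℤ) - d)) • (e x * (gPow q e f d J * oprod e N) * f x) := by
    intro d
    rw [mul_assoc _ (f x), r1, mul_smul_comm, ← mul_assoc, gPow_mul_step_N hq he hf hc hJ hN,
      add_mul, smul_mul_assoc, smul_mul_assoc, mul_assoc _ (f x) (f x), r2, mul_zero, smul_zero,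
      add_zero, smul_smul]
  cases d with
  | zero => rw [gPow_mul_step_J_zero hc hJ hN, key]
  | succ d =>
    rw [gPow_mul_step_J_succ hq he hf hc hJ hN, add_mul, smul_mul_assoc, smul_mul_assoc, key,
      mul_assoc (e x) _ (e x), gPow_mul_step_N hq he hf hc hJ hN, mul_add (e x), mul_smul_comm,
      mul_smul_comm, ← mul_assoc (e x) (e x), r3, zero_mul, smul_zero, zero_add, smul_smul,
      smul_smul, ← mul_assoc (e x) _ (f x), ← add_smul]
    congr 1
    have h1 := qhat_mul_negqInt (k := k) hq (d + 1)
    have h2 : (-q) ^ (-(J.card : ℤ) - 2 * d) * ((q - q⁻¹) * (-q) ^ ((J.card : ℤ) - N.card - 1)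
        * negqInt k q (d + 1)) = (-q) ^ (-(N.card : ℤ) - 3 * d - 2) - (-q) ^ (-(N.card : ℤ) - d) := by
      rw [mul_right_comm (q - q⁻¹), h1, sub_mul, mul_sub, ← zpow_add₀ hp, ← zpow_add₀ hp,
        ← zpow_add₀ hp, ← zpow_add₀ hp]
      congr 2 <;> push_cast <;> ring
    have h3 : (-q) ^ (-2 * ((d : ℤ) + 1)) * (q * (-q) ^ (-(N.card : ℤ) - ((d + 1 : ℕ) : ℤ)))
        = - (-q) ^ (-(N.card : ℤ) - 3 * d - 2) := by
      rw [show -(N.card : ℤ) - 3 * d - 2 = -2 * ((d : ℤ) + 1)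
        + (-(N.card : ℤ) - ((d + 1 : ℕ) : ℤ)) + 1 by push_cast; ring, zpow_add_one₀ hp,
        zpow_add₀ hp]
      ring
    have h4 : (-q) ^ (-(N.card : ℤ) - d) = (-q) ^ (-(N.card : ℤ) - ((d + 1 : ℕ) : ℤ)) * (-q) := by
      rw [← zpow_add_one₀ hp]; congr 1; push_cast; ring
    rw [h2, h3, h4]
    ring

end Steps

/-- Exchange formula: `D^{(d)}(f_J) e_N` in terms of the ordered monomials `e_{T^♮} f_T`. The
case `d = 0` is the one used later; the proof by induction on the largest index needs all `d`. -/
theorem exchange (hq : q ≠ 0) (he : ExtRel q Finset.univ e) (hf : ExtRel q Finset.univ f)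
    (hc : CrossRel q Finset.univ e f) (J N : Finset (Fin n)) (d : ℕ) :
    gPow q e f d J * oprod e N
      = ∑ T ∈ (J ∪ N).powerset, rho q d J N T • (oprod e (snat n J N T) * oprod f T) := by
  have hp : -q ≠ 0 := neg_ne_zero.mpr hq
  suffices H : ∀ U J N : Finset (Fin n), J ⊆ U → N ⊆ U → ∀ d, gPow q e f d J * oprod e N
      = ∑ T ∈ (J ∪ N).powerset, rho q d J N T • (oprod e (snat n J N T) * oprod f T) from
    H Finset.univ J N (Finset.subset_univ _) (Finset.subset_univ _) d
  clear J N d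
  intro U
  induction U using Finset.induction_on_max with
  | empty =>
    intro J N hJ hN d
    obtain rfl := Finset.subset_empty.mp hJ
    obtain rfl := Finset.subset_empty.mp hN
    cases d <;> simp [gPow, gList, oprod_empty, rho, snat, Lnat, ell, xprod]
  | insert x U hU ih =>
    have hxU : x ∉ U := fun hh => lt_irrefl _ (hU x hh)
    have split : ∀ J : Finset (Fin n), J ⊆ insert x U →
        J ⊆ U ∨ ∃ J', J' ⊆ U ∧ J = insert x J' := by
      intro J hJ
      by_cases hx : x ∈ J
      · exact Or.inr ⟨J.erase x, by grind, (Finset.insert_erase hx).symm⟩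
      · exact Or.inl ((Finset.subset_insert_iff_of_notMem hx).mp hJ)
    have hlt : ∀ J : Finset (Fin n), J ⊆ U → ∀ y ∈ J, y < x := fun J hJ y hy => hU y (hJ hy)
    intro J N gJ gN d
    rcases split J gJ with hJ | ⟨J, hJ, rfl⟩ <;> rcases split N gN with hN | ⟨N, hN, rfl⟩
    · exact ih J N hJ hN d
    · have lJ := hlt J hJ
      have lN := hlt N hN
      have nJ : x ∉ J := fun h => hxU (hJ h)
      have nN : x ∉ N := fun h => hxU (hN h)
      rw [Finset.union_insert, Finset.sum_powerset_insert (by simp [nJ, nN]), oprod_insert _ lN,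
        ← mul_assoc, gPow_mul_step_N hq he hf hc lJ lN, ih J N hJ hN, ih J N hJ hN, Finset.mul_sum,
        Finset.sum_mul, Finset.smul_sum, Finset.smul_sum]
      congr 1 <;> refine Finset.sum_congr rfl fun T hT => ?_ <;> rw [Finset.mem_powerset] at hT
      · have hT' : x ∉ T := fun h => lt_irrefl _ (lt_of_mem_T lJ lN hT x h)
        rw [rho_N_notMem lJ lN hT, snat_insert_right nJ hT', mul_smul_comm, ← mul_assoc,
          ← smul_mul_assoc (rho q d J N T), rho_smul_mul_left hq he lJ lN hT, smul_mul_assoc,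
          smul_smul]
        congr 1
        rw [mul_left_comm, ← zpow_add₀ hp]
        ring_nf
        simp
      · rw [rho_N_mem lJ lN hT hq, snat_insert_right_mem nJ nN, smul_mul_assoc, smul_smul,
          oprod_insert f (lt_of_mem_T lJ lN hT), mul_assoc (oprod e _)]
    · have lJ := hlt J hJ
      have lN := hlt N hN
      have nJ : x ∉ J := fun h => hxU (hJ h)
      have nN : x ∉ N := fun h => hxU (hN h)
      rw [Finset.insert_union, Finset.sum_powerset_insert (by simp [nJ, nN])]
      cases d with
      | zero =>
        rw [gPow_mul_step_J_zero hc lJ lN, ih J N hJ hN, Finset.sum_mul,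
          Finset.sum_eq_zero (s := (J ∪ N).powerset) (f := fun T =>
            rho q 0 (insert x J) N T • _) fun T hT => by
            rw [rho_J_notMem_zero lJ lN (Finset.mem_powerset.mp hT), zero_smul], zero_add]
        refine Finset.sum_congr rfl fun T hT => ?_
        rw [Finset.mem_powerset] at hT
        rw [rho_J_mem lJ lN hT hq, snat_insert_left_mem nJ nN, smul_mul_assoc,
          oprod_insert f (lt_of_mem_T lJ lN hT), mul_assoc (oprod e _)]
        simp
      | succ d =>
        rw [gPow_mul_step_J_succ hq he hf hc lJ lN, ih J N hJ hN, ih J N hJ hN, add_comm,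
          Finset.mul_sum, Finset.sum_mul, Finset.smul_sum, Finset.smul_sum]
        congr 1 <;> refine Finset.sum_congr rfl fun T hT => ?_ <;> rw [Finset.mem_powerset] at hT
        · have hT' : x ∉ T := fun h => lt_irrefl _ (lt_of_mem_T lJ lN hT x h)
          rw [rho_J_notMem_succ lJ lN hT hq, snat_insert_left nN hT', mul_smul_comm, ← mul_assoc,
            ← smul_mul_assoc (rho q d J N T), rho_smul_mul_left hq he lJ lN hT, smul_mul_assoc,
            smul_smul]
          congr 1
          rw [mul_left_comm, ← zpow_add₀ hp, mul_comm]
          congr 2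
          ring
        · rw [rho_J_mem lJ lN hT hq, snat_insert_left_mem nJ nN, smul_mul_assoc, smul_smul,
            oprod_insert f (lt_of_mem_T lJ lN hT), mul_assoc (oprod e _)]
          push_cast; rfl
    · have lJ := hlt J hJ
      have lN := hlt N hN
      have nJ : x ∉ J := fun h => hxU (hJ h)
      have nN : x ∉ N := fun h => hxU (hN h)
      rw [Finset.insert_union, Finset.union_insert, Finset.insert_idem,
        Finset.sum_powerset_insert (by simp [nJ, nN]), oprod_insert _ lN, ← mul_assoc,
        gPow_mul_step_both hq he hf hc lJ lN, ih J N hJ hN, Finset.mul_sum, Finset.sum_mul,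
        Finset.smul_sum, Finset.sum_eq_zero (s := (J ∪ N).powerset) (f := fun T =>
          rho q d (insert x J) (insert x N) T • _) fun T hT => by
            rw [rho_both_notMem lJ lN (Finset.mem_powerset.mp hT), zero_smul], zero_add]
      refine Finset.sum_congr rfl fun T hT => ?_
      rw [Finset.mem_powerset] at hT
      rw [rho_both_mem lJ lN hT, snat_insert_both_mem nJ nN, mul_smul_comm, ← mul_assoc,
        ← smul_mul_assoc (rho q d J N T), rho_smul_mul_left hq he lJ lN hT, smul_mul_assoc,
        smul_mul_assoc, smul_smul, oprod_insert f (lt_of_mem_T lJ lN hT), mul_assoc (oprod e _)]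
      congr 1
      rw [mul_left_comm, mul_assoc q, ← zpow_add₀ hp, mul_comm]
      ring_nf
      simp

end Formula

end QMat

/-! ### A model with linearly independent ordered monomials -/

namespace QMat

section Model

variable {k : Type*} [Field k] {n : ℕ} {B : Type*} [Ring B] [Algebra k B]

/-- Left multiplication by `e_i`, `i < x`, on the free right module with basis
`1, e_x, f_x, e_x f_x`; here `a = e_i`. -/
def matE (q : k) (a : B) : Matrix (Fin 4) (Fin 4) B :=
  !![a, 0, 0, 0; 0, (-q)⁻¹ • a, 0, 0; 0, 0, a, 0; 0, 0, 0, (-q)⁻¹ • a]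

/-- Left multiplication by `f_i`, `i < x`, in the basis `1, e_x, f_x, e_x f_x`; here `a = e_i`
and `b = f_i`. -/
def matF (q : k) (a b : B) : Matrix (Fin 4) (Fin 4) B :=
  !![b, 0, 0, 0; 0, b, 0, 0; 0, (q - q⁻¹) • a, (-q)⁻¹ • b, 0; 0, 0, 0, (-q)⁻¹ • b]

/-- Left multiplication by `e_x` in the basis `1, e_x, f_x, e_x f_x`. -/
def matEx (B : Type*) [Ring B] : Matrix (Fin 4) (Fin 4) B :=
  !![0, 0, 0, 0; 1, 0, 0, 0; 0, 0, 0, 0; 0, 0, 1, 0]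

/-- Left multiplication by `f_x` in the basis `1, e_x, f_x, e_x f_x`. -/
def matFx (B : Type*) [Ring B] [Algebra k B] (q : k) : Matrix (Fin 4) (Fin 4) B :=
  !![0, 0, 0, 0; 0, 0, 0, 0; 1, 0, 0, 0; 0, q • 1, 0, 0]

variable {q : k} {a a' b b' : B}

theorem matE_comm (c : k) (h : a' * a = c • (a * a')) :
    matE q a' * matE q a = c • (matE q a * matE q a') := by
  ext i j
  fin_cases i <;> fin_cases j <;>
    simp [matE, Matrix.mul_apply, Fin.sum_univ_four, h, smul_smul, mul_comm, mul_left_comm]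

theorem matEx_matE (hq : q ≠ 0) : matEx B * matE q a = (-q) • (matE q a * matEx B) := by
  ext i j
  fin_cases i <;> fin_cases j <;>
    simp [matE, matEx, Matrix.mul_apply, Fin.sum_univ_four, smul_smul, hq]

theorem matF_sq (hq : q ≠ 0) (hb : b * b = 0) (hab : b * a = q • (a * b)) :
    matF q a b * matF q a b = 0 := by
  ext i j
  fin_cases i <;> fin_cases j <;>
    simp [matF, Matrix.mul_apply, Fin.sum_univ_four, smul_smul, hb, hab, hq]

theorem matF_comm (hq : q ≠ 0) (hb : b' * b = (-q) • (b * b'))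
    (h1 : b * a' = a' * b + (q - q⁻¹) • (a * b')) (h2 : b' * a = a * b') :
    matF q a' b' * matF q a b = (-q) • (matF q a b * matF q a' b') := by
  ext i j
  fin_cases i <;> fin_cases j <;>
    simp [matF, Matrix.mul_apply, Fin.sum_univ_four, smul_smul, hb, h1, h2, mul_comm, mul_left_comm]
  match_scalars <;> field_simp <;> ring

theorem matFx_matF (hq : q ≠ 0) : matFx B q * matF q a b = (-q) • (matF q a b * matFx B q) := by
  ext i j
  fin_cases i <;> fin_cases j <;>
    simp [matF, matFx, Matrix.mul_apply, Fin.sum_univ_four, smul_smul, hq]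

theorem matF_matE_diag (hab : b * a = q • (a * b)) (ha : a * a = 0) :
    matF q a b * matE q a = q • (matE q a * matF q a b) := by
  ext i j
  fin_cases i <;> fin_cases j <;>
    simp [matE, matF, Matrix.mul_apply, Fin.sum_univ_four, smul_smul, hab, ha, mul_comm,
      mul_left_comm]

theorem matF_matE_lt (hq : q ≠ 0) (ha : a' * a = (-q) • (a * a'))
    (h1 : b * a' = a' * b + (q - q⁻¹) • (a * b')) :
    matF q a b * matE q a' = matE q a' * matF q a b + (q - q⁻¹) • (matE q a * matF q a' b') := by
  ext i j
  fin_cases i <;> fin_cases j <;>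
    simp [matE, matF, Matrix.mul_apply, Fin.sum_univ_four, smul_smul, h1, ha]
  all_goals match_scalars <;> field_simp <;> ring

theorem matF_matE_gt (hq : q ≠ 0) (ha : a' * a = (-q) • (a * a')) (h2 : b' * a = a * b') :
    matF q a' b' * matE q a = matE q a * matF q a' b' := by
  ext i j
  fin_cases i <;> fin_cases j <;>
    simp [matE, matF, Matrix.mul_apply, Fin.sum_univ_four, smul_smul, h2, ha]
  all_goals match_scalars <;> field_simp

theorem matF_matEx (hq : q ≠ 0) :
    matF q a b * matEx B = matEx B * matF q a b + (q - q⁻¹) • (matE q a * matFx B q) := by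
  ext i j
  fin_cases i <;> fin_cases j <;>
    simp [matE, matF, matEx, matFx, Matrix.mul_apply, Fin.sum_univ_four, smul_smul, hq]

theorem matFx_matE (hq : q ≠ 0) : matFx B q * matE q a = matE q a * matFx B q := by
  ext i j
  fin_cases i <;> fin_cases j <;>
    simp [matE, matFx, Matrix.mul_apply, Fin.sum_univ_four, smul_smul, hq]

theorem matFx_matEx : matFx B q * matEx B = q • (matEx B * matFx B q) := by
  ext i j
  fin_cases i <;> fin_cases j <;>
    simp [matEx, matFx, Matrix.mul_apply, Fin.sum_univ_four]

theorem matEx_sq : matEx B * matEx B = 0 := by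
  ext i j
  fin_cases i <;> fin_cases j <;> simp [matEx, Matrix.mul_apply, Fin.sum_univ_four]

theorem matFx_sq : matFx B q * matFx B q = 0 := by
  ext i j
  fin_cases i <;> fin_cases j <;> simp [matFx, Matrix.mul_apply, Fin.sum_univ_four]

variable {e f : Fin n → B} {U : Finset (Fin n)} {x : Fin n}
  {e' f' : Fin n → Matrix (Fin 4) (Fin 4) B}

theorem oprod_matE (M : Finset (Fin n)) (he' : ∀ i ∈ M, e' i = matE q (e i)) :
    oprod e' M = !![oprod e M, 0, 0, 0; 0, ((-q)⁻¹ ^ M.card) • oprod e M, 0, 0;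
      0, 0, oprod e M, 0; 0, 0, 0, ((-q)⁻¹ ^ M.card) • oprod e M] := by
  induction M using Finset.induction_on_max with
  | empty =>
    ext i j
    fin_cases i <;> fin_cases j <;> simp [oprod_empty]
  | insert y M hM ih =>
    have hy : y ∉ M := fun hh => lt_irrefl _ (hM y hh)
    rw [oprod_insert _ hM, oprod_insert _ hM, ih fun i hi => he' i (Finset.mem_insert_of_mem hi),
      he' y (Finset.mem_insert_self _ _), Finset.card_insert_of_notMem hy]
    ext i j
    fin_cases i <;> fin_cases j <;>
      simp [matE, Matrix.mul_apply, Fin.sum_univ_four, smul_smul, pow_succ, mul_comm]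

/-- Only the columns of `1` and `f_x` are needed: the first column of `e_M f_I` never sees the others. -/
theorem oprod_matF_col (I : Finset (Fin n)) (hf' : ∀ i ∈ I, f' i = matF q (e i) (f i)) :
    (∀ t, oprod f' I t 0 = ![oprod f I, 0, 0, 0] t) ∧
      ∀ t, oprod f' I t 2 = ![0, 0, ((-q)⁻¹ ^ I.card) • oprod f I, 0] t := by
  induction I using Finset.induction_on_max with
  | empty =>
    constructor <;> intro i <;> fin_cases i <;> simp [oprod_empty]
  | insert y I hI ih =>
    have hy : y ∉ I := fun hh => lt_irrefl _ (hI y hh)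
    obtain ⟨ih1, ih2⟩ := ih fun i hi => hf' i (Finset.mem_insert_of_mem hi)
    rw [oprod_insert _ hI, oprod_insert _ hI, hf' y (Finset.mem_insert_self _ _),
      Finset.card_insert_of_notMem hy]
    constructor <;> intro i <;> fin_cases i <;>
      simp [matF, Matrix.mul_apply, Fin.sum_univ_four, ih1, ih2, smul_smul, pow_succ, mul_comm]


/-- The row of the basis vector `1`, `e_x`, `f_x` or `e_x f_x` occurring in `e_M f_I`. -/
def rowIdx (x : Fin n) (M I : Finset (Fin n)) : Fin 4 :=
  if x ∈ M then (if x ∈ I then 3 else 1) else (if x ∈ I then 2 else 0)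

/-- The power of `-q` produced when `e_x`, `f_x` are moved to the front of `e_M f_I`. -/
def rowCoeff (q : k) (x : Fin n) (M I : Finset (Fin n)) : k :=
  (if x ∈ M then (-q)⁻¹ ^ (M.erase x).card else 1) * (if x ∈ I then (-q)⁻¹ ^ (I.erase x).card else 1)

/-- The image of the basis vector `1` under `e_M f_I` is a nonzero multiple of a single basis vector,
namely the part of `e_M f_I` in `e_x`, `f_x`, with coefficient the monomial without `x`. -/
theorem model_col (hU : ∀ y ∈ U, y < x) (he' : ∀ i ∈ U, e' i = matE q (e i))
    (hf' : ∀ i ∈ U, f' i = matF q (e i) (f i)) (hex : e' x = matEx B) (hfx : f' x = matFx B q)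
    {M I : Finset (Fin n)} (hM : M ⊆ insert x U) (hI : I ⊆ insert x U) (t : Fin 4) :
    (oprod e' M * oprod f' I) t 0 = if t = rowIdx x M I then
      rowCoeff q x M I • (oprod e (M.erase x) * oprod f (I.erase x)) else 0 := by
  have hxU : x ∉ U := fun hh => lt_irrefl _ (hU x hh)
  have key : ∀ J : Finset (Fin n), J ⊆ insert x U → J.erase x ⊆ U := by
    intro J hJ; grind
  have h1 := oprod_matE (M.erase x) fun i hi => he' i (key M hM hi)
  obtain ⟨h2, h3⟩ := oprod_matF_col (I.erase x) fun i hi => hf' i (key I hI hi)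
  have split : ∀ (g : Fin n → Matrix (Fin 4) (Fin 4) B) (J : Finset (Fin n)), J ⊆ insert x U →
      x ∈ J → oprod g J = oprod g (J.erase x) * g x := by
    intro g J hJ hx
    rw [← oprod_insert g fun y hy => hU y (key J hJ hy), Finset.insert_erase hx]
  by_cases hxM : x ∈ M <;> by_cases hxI : x ∈ I
  · rw [split e' M hM hxM, split f' I hI hxI, hex, hfx, h1]
    fin_cases t <;>
      simp [Matrix.mul_apply, Fin.sum_univ_four, rowIdx, rowCoeff, hxM, hxI, matEx, matFx, h2, h3,
        smul_smul, mul_comm]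
  · rw [split e' M hM hxM, hex, h1, ← Finset.erase_eq_of_notMem hxI]
    fin_cases t <;>
      simp [Matrix.mul_apply, Fin.sum_univ_four, rowIdx, rowCoeff, hxM, matEx, h2]
  · rw [split f' I hI hxI, hfx, ← Finset.erase_eq_of_notMem hxM, h1]
    fin_cases t <;>
      simp [Matrix.mul_apply, Fin.sum_univ_four, rowIdx, rowCoeff, hxI, matFx, h3]
  · rw [← Finset.erase_eq_of_notMem hxM, ← Finset.erase_eq_of_notMem hxI, h1]
    fin_cases t <;>
      simp [Matrix.mul_apply, Fin.sum_univ_four, rowIdx, rowCoeff, h2]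

end Model

/-- The algebra generated by two quantum exterior algebras subject to the exchange relations has
the ordered monomials `e_M f_I` linearly independent: there is a model in which they have dual
functionals. -/
theorem exists_model.{u} {k : Type u} [Field k] {n : ℕ} {q : k} (hq : q ≠ 0) (U : Finset (Fin n)) :
    ∃ (B : Type u) (_ : Ring B) (_ : Algebra k B) (e f : Fin n → B),
      ExtRel q U e ∧ ExtRel q U f ∧ CrossRel q U e f ∧
      ∃ φ : Finset (Fin n) → Finset (Fin n) → (B →ₗ[k] k),
        ∀ M I M' I', M ⊆ U → I ⊆ U → M' ⊆ U → I' ⊆ U →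
          φ M I (oprod e M' * oprod f I') = if M = M' ∧ I = I' then 1 else 0 := by
  induction U using Finset.induction_on_max with
  | empty =>
    refine ⟨k, inferInstance, inferInstance, 0, 0, ⟨by simp, by simp⟩, ⟨by simp, by simp⟩,
      ⟨by simp, by simp, by simp⟩, fun _ _ => LinearMap.id, ?_⟩
    intro M I M' I' h1 h2 h3 h4
    simp only [Finset.subset_empty] at h1 h2 h3 h4
    subst h1 h2 h3 h4
    simp [oprod_empty]
  | insert x U hU ih =>
    obtain ⟨B, _, _, e, f, he, hf, hc, φ, hφ⟩ := ih
    have hxU : x ∉ U := fun hh => lt_irrefl _ (hU x hh)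
    let e' : Fin n → Matrix (Fin 4) (Fin 4) B := fun i => if i = x then matEx B else matE q (e i)
    let f' : Fin n → Matrix (Fin 4) (Fin 4) B :=
      fun i => if i = x then matFx B q else matF q (e i) (f i)
    have hex : e' x = matEx B := if_pos rfl
    have hfx : f' x = matFx B q := if_pos rfl
    have he' : ∀ i ∈ U, e' i = matE q (e i) := fun i hi => if_neg (hU i hi).ne
    have hf' : ∀ i ∈ U, f' i = matF q (e i) (f i) := fun i hi => if_neg (hU i hi).ne
    refine ⟨Matrix (Fin 4) (Fin 4) B, inferInstance, inferInstance, e', f', ⟨?_, ?_⟩, ⟨?_, ?_⟩,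
      ⟨?_, ?_, ?_⟩, ?_⟩
    · intro i hi
      rcases Finset.mem_insert.mp hi with rfl | hi
      · rw [hex, matEx_sq]
      · have := matE_comm (q := q) (0 : k) (by rw [he.sq i hi, smul_zero] : e i * e i = _)
        rw [he' i hi, this, zero_smul]
    · intro i gi j gj hij
      rcases Finset.mem_insert.mp gi with rfl | hi <;> rcases Finset.mem_insert.mp gj with rfl | hj
      · exact absurd hij (lt_irrefl _)
      · exact absurd hij (hU j hj).not_gt
      · rw [hex, he' i hi, matEx_matE hq]
      · rw [he' i hi, he' j hj, matE_comm _ (he.comm i hi j hj hij)]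
    · intro i hi
      rcases Finset.mem_insert.mp hi with rfl | hi
      · rw [hfx, matFx_sq]
      · rw [hf' i hi, matF_sq hq (hf.sq i hi) (hc.diag i hi)]
    · intro i gi j gj hij
      rcases Finset.mem_insert.mp gi with rfl | hi <;> rcases Finset.mem_insert.mp gj with rfl | hj
      · exact absurd hij (lt_irrefl _)
      · exact absurd hij (hU j hj).not_gt
      · rw [hfx, hf' i hi, matFx_matF hq]
      · rw [hf' i hi, hf' j hj, matF_comm hq (hf.comm i hi j hj hij) (hc.lt i hi j hj hij)
          (hc.gt i hi j hj hij)]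
    · intro i hi
      rcases Finset.mem_insert.mp hi with rfl | hi
      · rw [hex, hfx, matFx_matEx]
      · rw [he' i hi, hf' i hi, matF_matE_diag (hc.diag i hi) (he.sq i hi)]
    · intro i gi j gj hij
      rcases Finset.mem_insert.mp gi with rfl | hi <;> rcases Finset.mem_insert.mp gj with rfl | hj
      · exact absurd hij (lt_irrefl _)
      · exact absurd hij (hU j hj).not_gt
      · rw [hex, hfx, he' i hi, hf' i hi, matF_matEx hq]
      · rw [he' i hi, hf' i hi, he' j hj, hf' j hj,
          matF_matE_lt hq (he.comm i hi j hj hij) (hc.lt i hi j hj hij)]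
    · intro i gi j gj hij
      rcases Finset.mem_insert.mp gi with rfl | hi <;> rcases Finset.mem_insert.mp gj with rfl | hj
      · exact absurd hij (lt_irrefl _)
      · exact absurd hij (hU j hj).not_gt
      · rw [hfx, he' i hi, matFx_matE hq]
      · rw [he' i hi, hf' j hj, matF_matE_gt hq (he.comm i hi j hj hij) (hc.gt i hi j hj hij)]
    · refine ⟨fun M I => (rowCoeff q x M I)⁻¹ •
        (φ (M.erase x) (I.erase x) ∘ₗ
          (LinearMap.proj 0 ∘ₗ LinearMap.proj (rowIdx x M I) :
            Matrix (Fin 4) (Fin 4) B →ₗ[k] B)), ?_⟩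
      intro M I M' I' hM hI hM' hI'
      have hp : -q ≠ 0 := neg_ne_zero.mpr hq
      have key : ∀ J : Finset (Fin n), J ⊆ insert x U → J.erase x ⊆ U := by
        intro J hJ; grind
      have hcoef : rowCoeff q x M I ≠ 0 := by
        unfold rowCoeff
        refine mul_ne_zero ?_ ?_ <;> split_ifs <;> simp [hq]
      have hcol := model_col hU he' hf' hex hfx hM' hI' (rowIdx x M I)
      change (rowCoeff q x M I)⁻¹ * φ (M.erase x) (I.erase x)
        ((oprod e' M' * oprod f' I') (rowIdx x M I) 0) = _
      rw [hcol]
      by_cases hrow : rowIdx x M I = rowIdx x M' I'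
      · have hmem : (x ∈ M ↔ x ∈ M') ∧ (x ∈ I ↔ x ∈ I') := by
          unfold rowIdx at hrow
          split_ifs at hrow <;> simp_all
        rw [if_pos hrow, map_smul, hφ _ _ _ _ (key M hM) (key I hI) (key M' hM') (key I' hI')]
        have e1 : (M.erase x = M'.erase x ∧ I.erase x = I'.erase x) ↔ M = M' ∧ I = I' := by
          constructor
          · rintro ⟨h1, h2⟩
            constructor
            · ext y
              have := Finset.ext_iff.mp h1 y
              grind
            · ext y
              have := Finset.ext_iff.mp h2 y
              grind
          · rintro ⟨rfl, rfl⟩; exact ⟨rfl, rfl⟩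
        by_cases h : M = M' ∧ I = I'
        · rw [if_pos (e1.2 h), if_pos h]
          obtain ⟨rfl, rfl⟩ := h
          simp [hcoef]
        · rw [if_neg (mt e1.1 h), if_neg h]
          simp
      · rw [if_neg hrow, if_neg, map_zero, mul_zero]
        rintro ⟨rfl, rfl⟩
        exact hrow rfl

end QMat

/-! ### Quantum minors as coefficients of a coaction -/

namespace QMat

section Words

variable {k : Type*} [Field k] {n : ℕ} {B : Type*} [Ring B] [Algebra k B] {q : k}
  {e : Fin n → B}

/-- A generator multiplied into an ordered monomial, sorted by moving it past smaller indices. -/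
theorem ext_mul_oprod (he : ExtRel q Finset.univ e) (i : Fin n) (M : Finset (Fin n)) :
    e i * oprod e M = if i ∈ M then 0 else
      ((-q) ^ (M.filter (· < i)).card) • oprod e (insert i M) := by
  induction M using Finset.induction_on_max with
  | empty =>
    have := oprod_insert (N := ∅) (x := i) e (by simp)
    rw [this]
    simp [oprod_empty]
  | insert y M hM ih =>
    rcases lt_trichotomy i y with hlt | rfl | hlt
    · rw [oprod_insert _ hM, ← mul_assoc, ih]
      by_cases hi : i ∈ M
      · rw [if_pos hi, if_pos (Finset.mem_insert_of_mem hi), zero_mul]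
      · have h1 : i ∉ insert y M := by simp [hi, hlt.ne]
        have h2 : ∀ z ∈ insert i M, z < y := by
          intro z hz
          rcases Finset.mem_insert.mp hz with rfl | hz
          exacts [hlt, hM z hz]
        rw [if_neg hi, if_neg h1, Finset.insert_comm, oprod_insert _ h2, Finset.filter_insert,
          if_neg hlt.not_gt, smul_mul_assoc]
    · rw [if_pos (Finset.mem_insert_self _ _), oprod_insert _ hM, ← mul_assoc,
        ext_mul_max he hM, smul_mul_assoc, mul_assoc, he.sq i (by simp), mul_zero, smul_zero]
    · have h1 : ∀ z ∈ insert y M, z < i := by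
        intro z hz
        rcases Finset.mem_insert.mp hz with rfl | hz
        exacts [hlt, (hM z hz).trans hlt]
      rw [if_neg fun h => lt_irrefl _ (h1 i h), ext_mul_max he h1, Finset.filter_true_of_mem h1,
        oprod_insert _ h1, zpow_natCast]

/-- The number of inversions of a word. -/
def wordInv {n t : ℕ} (a : Fin t → Fin n) : ℕ :=
  (Finset.univ.filter fun p : Fin t × Fin t => p.1 < p.2 ∧ a p.2 < a p.1).card

theorem wordInv_succ {t : ℕ} (a : Fin (t + 1) → Fin n) (ha : Function.Injective a) :
    wordInv a = ((Finset.univ.image fun l : Fin t => a l.succ).filter (· < a 0)).card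
      + wordInv fun l : Fin t => a l.succ := by
  have hs : Function.Injective fun l : Fin t => a l.succ :=
    ha.comp (Fin.succ_injective _)
  rw [Finset.filter_image, Finset.card_image_of_injective _ hs]
  unfold wordInv
  simp only [Finset.card_filter, ← Finset.univ_product_univ, Finset.sum_product, Fin.sum_univ_succ]
  simp [Fin.succ_lt_succ_iff]

/-- A word in the quantum exterior algebra is `(-q)` to the number of its inversions times the ordered
monomial, and vanishes if a letter repeats. -/
theorem prod_word (he : ExtRel q Finset.univ e) {t : ℕ} (a : Fin t → Fin n) :
    (List.ofFn fun l => e (a l)).prod = if Function.Injective a then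
      ((-q) ^ wordInv a) • oprod e (Finset.univ.image a) else 0 := by
  induction t with
  | zero => simp [oprod_empty, wordInv, Function.injective_of_subsingleton]
  | succ t ih =>
    have him : Finset.univ.image a
        = insert (a 0) (Finset.univ.image fun l : Fin t => a l.succ) := by
      ext y; simp [Fin.exists_fin_succ, eq_comm]
    have hinj : Function.Injective a ↔ (a 0 ∉ Finset.univ.image fun l : Fin t => a l.succ) ∧
        Function.Injective fun l : Fin t => a l.succ := by
      have := Fin.cons_injective_iff (x₀ := a 0) (x := fun l : Fin t => a l.succ)
      rw [show (Fin.cons (a 0) fun l : Fin t => a l.succ) = a from Fin.cons_self_tail a] at this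
      rw [this]; simp
    rw [List.ofFn_succ, List.prod_cons, ih fun l => a l.succ]
    by_cases h2 : Function.Injective fun l : Fin t => a l.succ
    · rw [if_pos h2, mul_smul_comm, ext_mul_oprod he]
      by_cases h1 : a 0 ∈ Finset.univ.image fun l : Fin t => a l.succ
      · rw [if_pos h1, if_neg fun h => (hinj.1 h).1 h1, smul_zero]
      · have h3 := hinj.2 ⟨h1, h2⟩
        rw [if_neg h1, if_pos h3, smul_smul, him, wordInv_succ a h3, pow_add, mul_comm]
    · rw [if_neg h2, if_neg fun h => h2 (hinj.1 h).2, mul_zero]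

theorem wordInv_orderEmb {t : ℕ} {M : Finset (Fin n)} (hM : M.card = t) (σ : Equiv.Perm (Fin t)) :
    wordInv (fun l => M.orderEmbOfFin hM (σ l)) = inversions σ := by
  simp [wordInv, inversions]

theorem image_orderEmb {t : ℕ} {M : Finset (Fin n)} (hM : M.card = t) (σ : Equiv.Perm (Fin t)) :
    Finset.univ.image (fun l => M.orderEmbOfFin hM (σ l)) = M := by
  ext y
  have : y ∈ M ↔ y ∈ Set.range (M.orderEmbOfFin hM) := by
    rw [Finset.range_orderEmbOfFin, Finset.mem_coe]
  rw [this]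
  simp only [Finset.mem_image, Finset.mem_univ, true_and, Set.mem_range]
  exact (σ.surjective.exists (p := fun l => M.orderEmbOfFin hM l = y)).symm

theorem oprod_eq_prod (he : ExtRel q Finset.univ e) {t : ℕ} {M : Finset (Fin n)}
    (hM : M.card = t) : oprod e M = (List.ofFn fun l : Fin t => e (M.orderEmbOfFin hM l)).prod := by
  have h1 := wordInv_orderEmb hM (1 : Equiv.Perm (Fin t))
  have h2 := image_orderEmb hM (1 : Equiv.Perm (Fin t))
  simp only [Equiv.Perm.coe_one, id_eq] at h1 h2
  have h3 : inversions (1 : Equiv.Perm (Fin t)) = 0 := by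
    rw [inversions, Finset.card_eq_zero, Finset.filter_eq_empty_iff]
    rintro ⟨a, b⟩ -
    simpa using fun h : a < b => h.le
  rw [prod_word he, if_pos (M.orderEmbOfFin hM).injective, h1, h2, h3, pow_zero, one_smul]

theorem prod_ofFn_sum {R : Type*} [Ring R] {x : Fin n → Fin n → R} {e : Fin n → R}
    (hx : ∀ i j l, Commute (x i j) (e l)) {t : ℕ} (c : Fin t → Fin n) :
    (List.ofFn fun l => ∑ i, x i (c l) * e i).prod
      = ∑ a : Fin t → Fin n, (List.ofFn fun l => x (a l) (c l)).prod
        * (List.ofFn fun l => e (a l)).prod := by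
  induction t with
  | zero => simp
  | succ t ih =>
    rw [List.ofFn_succ, List.prod_cons, ih fun l => c l.succ, Finset.sum_mul_sum,
      ← (Fin.consEquiv fun _ : Fin (t + 1) => Fin n).sum_comp, Fintype.sum_prod_type]
    refine Finset.sum_congr rfl fun i _ => Finset.sum_congr rfl fun a _ => ?_
    have hcom : Commute (e i) (List.ofFn fun l => x (a l) (c l.succ)).prod := by
      refine Commute.list_prod_right _ _ fun y hy => ?_
      obtain ⟨l, rfl⟩ := (List.mem_ofFn' _ _).mp hy
      exact (hx _ _ _).symm
    simp only [List.ofFn_succ, List.prod_cons, Fin.consEquiv_apply, Fin.cons_zero, Fin.cons_succ]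
    rw [mul_assoc, ← mul_assoc (e i), hcom.eq]
    simp only [mul_assoc]

theorem qMinor_eq {t : ℕ} {M N : Finset (Fin n)} (hM : M.card = t) (hN : N.card = t) :
    qMinor k n q M N = ∑ σ : Equiv.Perm (Fin t), ((-q) ^ inversions σ) •
      (List.ofFn fun l : Fin t =>
        X k n q (M.orderEmbOfFin hM (σ l)) (N.orderEmbOfFin hN l)).prod := by
  subst hM
  rw [qMinor, dif_pos hN.symm]
  rfl

end Words

section Coaction

variable {k : Type*} [Field k] {n : ℕ} {R : Type*} [Ring R] [Algebra k R] {q : k}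
  {e f : Fin n → R} (ι : A k n q →ₐ[k] R)

/-- The coaction `e_j ↦ ∑ i, X_{ij} e_i`, inside an algebra `R` receiving both `O_q(M_n)` and the
`e_i`. -/
def coact (ι : A k n q →ₐ[k] R) (e : Fin n → R) (j : Fin n) : R := ∑ i, ι (X k n q i j) * e i

/-- The quantum minors are the matrix coefficients of the coaction on the quantum exterior
algebra. -/
theorem oprod_coact (he : ExtRel q Finset.univ e) (hη : ExtRel q Finset.univ (coact ι e))
    (hx : ∀ i j l, Commute (ι (X k n q i j)) (e l)) (N : Finset (Fin n)) :
    oprod (coact ι e) N = ∑ M : Finset (Fin n), ι (qMinor k n q M N) * oprod e M := by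
  rw [oprod_eq_prod hη (rfl : N.card = N.card)]
  unfold coact
  rw [prod_ofFn_sum hx, ← Finset.sum_fiberwise (s := Finset.univ)
    (g := fun a : Fin N.card → Fin n => Finset.univ.image a)]
  refine Finset.sum_congr rfl fun M _ => ?_
  by_cases hM : M.card = N.card
  · rw [qMinor_eq hM rfl, map_sum, Finset.sum_mul]
    symm
    refine Finset.sum_bij (fun σ _ l => M.orderEmbOfFin hM (σ l)) ?_ ?_ ?_ ?_
    · intro σ _
      simp [image_orderEmb hM σ]
    · intro σ _ τ _ h
      ext l
      have := congrFun h l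
      simpa [Fin.ext_iff] using this
    · intro a ha
      have him : Finset.univ.image a = M := (Finset.mem_filter.mp ha).2
      have hinj : Function.Injective a := by
        rw [← Set.injOn_univ, ← Finset.coe_univ, ← Finset.card_image_iff, him, hM]
        simp
      have hmem : ∀ l, a l ∈ M := fun l => him ▸ Finset.mem_image_of_mem a (Finset.mem_univ l)
      let σ : Fin N.card → Fin N.card := fun l => (M.orderIsoOfFin hM).symm ⟨a l, hmem l⟩
      have hσ : Function.Injective σ := by
        intro l l' h
        have := (M.orderIsoOfFin hM).symm.injective h
        exact hinj (congrArg Subtype.val this)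
      refine ⟨Equiv.ofBijective σ hσ.bijective_of_finite, Finset.mem_univ _, ?_⟩
      funext l
      change (((M.orderIsoOfFin hM) ((M.orderIsoOfFin hM).symm ⟨a l, hmem l⟩) : M) : Fin n) = a l
      rw [OrderIso.apply_symm_apply]
    · intro σ _
      have hinj : Function.Injective fun l => M.orderEmbOfFin hM (σ l) :=
        (M.orderEmbOfFin hM).injective.comp σ.injective
      rw [prod_word he, if_pos hinj, wordInv_orderEmb, image_orderEmb, map_smul,
        map_list_prod, List.map_ofFn, smul_mul_assoc, mul_smul_comm]
      rfl
  · rw [qMinor, dif_neg hM, map_zero, zero_mul]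
    refine Finset.sum_eq_zero fun a ha => ?_
    have him : Finset.univ.image a = M := (Finset.mem_filter.mp ha).2
    rw [prod_word he, if_neg, mul_zero]
    intro hinj
    apply hM
    rw [← him, Finset.card_image_of_injective _ hinj]
    simp

/-- Two double sums agree when their symmetrizations do; this is how quadratic relations for the
coaction are checked entry by entry. -/
theorem sum_pairs {R : Type*} [AddCommGroup R] {F G : Fin n → Fin n → R}
    (hd : ∀ a, F a a = G a a) (ho : ∀ a b, a < b → F a b + F b a = G a b + G b a) :
    ∑ a, ∑ b, F a b = ∑ a, ∑ b, G a b := by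
  rw [← sub_eq_zero, ← Finset.sum_sub_distrib]
  simp only [← Finset.sum_sub_distrib]
  rw [← Finset.sum_product' (f := fun a b => F a b - G a b)]
  refine Finset.sum_involution (fun p _ => p.swap) ?_ ?_ (by simp) (by simp)
  · rintro ⟨a, b⟩ -
    have : F a b + F b a = G a b + G b a := by
      rcases lt_trichotomy a b with h | rfl | h
      · exact ho a b h
      · rw [hd]
      · rw [add_comm (F a b), add_comm (G a b)]; exact ho b a h
    change F a b - G a b + (F b a - G b a) = 0
    rw [sub_add_sub_comm, this, sub_self]
  · rintro ⟨a, b⟩ - hne h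
    have : b = a := congrArg Prod.fst h
    subst this
    exact hne (by change F b b - G b b = 0; rw [hd, sub_self])

theorem coact_mul (hx : ∀ i j l, Commute (ι (X k n q i j)) (e l)) (j m : Fin n) :
    coact ι e j * coact ι f m
      = ∑ a, ∑ b, (ι (X k n q a j) * ι (X k n q b m)) * (e a * f b) := by
  unfold coact
  rw [Finset.sum_mul_sum]
  refine Finset.sum_congr rfl fun a _ => Finset.sum_congr rfl fun b _ => ?_
  rw [mul_assoc, ← mul_assoc (e a), ← (hx b m a).eq]
  simp only [mul_assoc]

theorem X_col {i l j : Fin n} (h : i < l) :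
    ι (X k n q i j) * ι (X k n q l j) = q • (ι (X k n q l j) * ι (X k n q i j)) := by
  have := RingQuot.mkAlgHom_rel k (Rel.col (k := k) (q := q) (j := j) h)
  simp only [map_mul, map_smul] at this
  have := congrArg ι this
  simp only [map_mul, map_smul] at this
  exact this

theorem X_row {i j m : Fin n} (h : j < m) :
    ι (X k n q i j) * ι (X k n q i m) = q • (ι (X k n q i m) * ι (X k n q i j)) := by
  have := RingQuot.mkAlgHom_rel k (Rel.row (k := k) (q := q) (i := i) h)
  simp only [map_mul, map_smul] at this
  have := congrArg ι this
  simp only [map_mul, map_smul] at this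
  exact this

theorem X_swap {i j l m : Fin n} (h1 : i < l) (h2 : m < j) :
    ι (X k n q i j) * ι (X k n q l m) = ι (X k n q l m) * ι (X k n q i j) := by
  have := RingQuot.mkAlgHom_rel k (Rel.swap (k := k) (q := q) h1 h2)
  simp only [map_mul] at this
  have := congrArg ι this
  simp only [map_mul] at this
  exact this

theorem X_mixed {i j l m : Fin n} (h1 : i < l) (h2 : j < m) :
    ι (X k n q i j) * ι (X k n q l m) = ι (X k n q l m) * ι (X k n q i j)
      + (q - q⁻¹) • (ι (X k n q l j) * ι (X k n q i m)) := by
  have := RingQuot.mkAlgHom_rel k (Rel.mixed (k := k) (q := q) h1 h2)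
  simp only [map_mul, map_smul, map_add] at this
  have := congrArg ι this
  simp only [map_mul, map_smul, map_add] at this
  rw [← X_swap ι h1 h2]
  exact this

/-- The coaction preserves the quantum exterior relations. -/
theorem coact_ext (hq : q ≠ 0) (he : ExtRel q Finset.univ e)
    (hx : ∀ i j l, Commute (ι (X k n q i j)) (e l)) : ExtRel q Finset.univ (coact ι e) := by
  constructor
  · intro j _
    rw [coact_mul ι hx, show (0 : R) = ∑ _a : Fin n, ∑ _b : Fin n, (0 : R) by simp]
    refine sum_pairs (fun a => ?_) fun a b h => ?_
    · rw [he.sq a (by simp), mul_zero]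
    · rw [he.comm a (by simp) b (by simp) h, X_col ι h, mul_smul_comm, smul_mul_assoc]
      module
  · intro j _ m _ hjm
    rw [coact_mul ι hx, coact_mul ι hx]
    simp only [Finset.smul_sum]
    refine sum_pairs (fun a => ?_) fun a b h => ?_
    · rw [he.sq a (by simp), mul_zero, mul_zero, smul_zero]
    · rw [he.comm a (by simp) b (by simp) h, X_swap ι h hjm, X_mixed ι h hjm]
      simp only [mul_smul_comm, smul_mul_assoc, add_mul]
      match_scalars <;> field_simp <;> ring

/-- The coaction preserves the exchange relations. -/
theorem coact_cross (hq : q ≠ 0) (hc : CrossRel q Finset.univ e f)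
    (hx : ∀ i j l, Commute (ι (X k n q i j)) (e l))
    (hx' : ∀ i j l, Commute (ι (X k n q i j)) (f l)) :
    CrossRel q Finset.univ (coact ι e) (coact ι f) := by
  constructor
  · intro j _
    rw [coact_mul ι hx', coact_mul ι hx]
    simp only [Finset.smul_sum]
    refine sum_pairs (fun a => ?_) fun a b h => ?_
    · rw [hc.diag a (by simp), mul_smul_comm]
    · rw [hc.lt a (by simp) b (by simp) h, hc.gt a (by simp) b (by simp) h, X_col ι h]
      simp only [mul_smul_comm, smul_mul_assoc, mul_add]
      match_scalars <;> field_simp <;> ring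
  · intro j _ m _ hjm
    rw [coact_mul ι hx', coact_mul ι hx, coact_mul ι hx]
    simp only [Finset.smul_sum, ← Finset.sum_add_distrib]
    refine sum_pairs (fun a => ?_) fun a b h => ?_
    · rw [hc.diag a (by simp), X_row ι hjm]
      simp only [mul_smul_comm, smul_mul_assoc]
      match_scalars <;> field_simp <;> ring
    · rw [hc.lt a (by simp) b (by simp) h, hc.gt a (by simp) b (by simp) h, X_swap ι h hjm,
        X_mixed ι h hjm]
      simp only [mul_smul_comm, smul_mul_assoc, mul_add, add_mul]
      match_scalars <;> field_simp <;> ring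
  · intro j _ m _ hjm
    rw [coact_mul ι hx', coact_mul ι hx]
    refine sum_pairs (fun a => ?_) fun a b h => ?_
    · rw [hc.diag a (by simp), X_row ι hjm]
      simp only [mul_smul_comm, smul_mul_assoc]
    · rw [hc.lt a (by simp) b (by simp) h, hc.gt a (by simp) b (by simp) h, X_swap ι h hjm,
        X_mixed ι h hjm]
      simp only [mul_smul_comm, smul_mul_assoc, mul_add, add_mul]
      match_scalars <;> field_simp

end Coaction
end QMat

/-! ### Comparison of coefficients -/

namespace QMat

section Final

variable {k : Type*} [Field k] {n : ℕ} {q : k}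

theorem map_oprod {B C : Type*} [Monoid B] [Monoid C] (g : B →* C)
    (e : Fin n → B) (N : Finset (Fin n)) : oprod (fun i => g (e i)) N = g (oprod e N) := by
  induction N using Finset.induction_on_max with
  | empty => simp [oprod_empty]
  | insert x N h ih => rw [oprod_insert _ h, oprod_insert _ h, ih, map_mul]

section Slice

variable {k : Type*} [Field k] (C B : Type*) [Ring C] [Algebra k C] [Ring B] [Algebra k B]

theorem tensor_commute (a : C) (b : B) :
    Commute ((Algebra.TensorProduct.includeLeft : C →ₐ[k] C ⊗[k] B) a)
      ((Algebra.TensorProduct.includeRight : B →ₐ[k] C ⊗[k] B) b) := by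
  simp [Commute, SemiconjBy]

/-- The slice map `c ⊗ b ↦ g(b) c`. -/
def sliceMap (g : B →ₗ[k] k) : C ⊗[k] B →ₗ[k] C :=
  (TensorProduct.rid k C).toLinearMap ∘ₗ LinearMap.lTensor C g

theorem sliceMap_apply (g : B →ₗ[k] k) (a : C) (b : B) :
    sliceMap C B g ((Algebra.TensorProduct.includeLeft : C →ₐ[k] C ⊗[k] B) a
      * (Algebra.TensorProduct.includeRight : B →ₐ[k] C ⊗[k] B) b) = g b • a := by
  simp [sliceMap]

end Slice

/-- The two expansions of `φ_J η_N` compared inside any algebra `R` that receives `O_q(M_n)` and the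
model `B` by commuting maps, through a functional `Φ` extracting the coefficient of `e_M f_I`. -/
theorem coeff_compare_aux {B R : Type*} [Ring B] [Algebra k B] [Ring R] [Algebra k R] (hq : q ≠ 0)
    {e f : Fin n → B} (he : ExtRel q Finset.univ e) (hf : ExtRel q Finset.univ f)
    (hc : CrossRel q Finset.univ e f) (ι : A k n q →ₐ[k] R) (κ : B →ₐ[k] R)
    (hcomm : ∀ a b, Commute (ι a) (κ b)) (I J M N : Finset (Fin n)) (Φ : R →ₗ[k] A k n q)
    (hΦ : ∀ a M' I', Φ (ι a * κ (oprod e M' * oprod f I')) = if M = M' ∧ I = I' then a else 0) :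
    ∑ S : Finset (Fin n), ∑ S' : Finset (Fin n), ∑ W ∈ (S ∪ S').powerset,
        (if M = snat n S S' W ∧ I = W then rho q 0 S S' W else 0) •
          (qMinor k n q S J * qMinor k n q S' N)
      = ∑ T ∈ (J ∪ N).powerset,
        rho q 0 J N T • (qMinor k n q M (snat n J N T) * qMinor k n q I T) := by
  let E : Fin n → R := fun i => κ (e i)
  let F : Fin n → R := fun i => κ (f i)
  have hE : ExtRel q Finset.univ E :=
    ⟨fun i hi => by simp only [E, ← map_mul, he.sq i hi, map_zero],
      fun i hi j hj h => by simp only [E, ← map_mul, he.comm i hi j hj h, map_smul]⟩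
  have hF : ExtRel q Finset.univ F :=
    ⟨fun i hi => by simp only [F, ← map_mul, hf.sq i hi, map_zero],
      fun i hi j hj h => by simp only [F, ← map_mul, hf.comm i hi j hj h, map_smul]⟩
  have hEF : CrossRel q Finset.univ E F :=
    ⟨fun i hi => by simp only [E, F, ← map_mul, hc.diag i hi, map_smul],
      fun i hi j hj h => by simp only [E, F, ← map_mul, hc.lt i hi j hj h, map_smul, map_add],
      fun i hi j hj h => by simp only [E, F, ← map_mul, hc.gt i hi j hj h]⟩
  have hxE : ∀ i j l, Commute (ι (X k n q i j)) (E l) := fun i j l => hcomm _ _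
  have hxF : ∀ i j l, Commute (ι (X k n q i j)) (F l) := fun i j l => hcomm _ _
  have hη := coact_ext ι hq hE hxE
  have hψ := coact_ext ι hq hF hxF
  have hηψ := coact_cross ι hq hEF hxE hxF
  have oE : ∀ N, oprod E N = κ (oprod e N) := map_oprod (κ : B →* R) e
  have oF : ∀ N, oprod F N = κ (oprod f N) := map_oprod (κ : B →* R) f
  -- expand both factors in quantum minors, then exchange
  have s1 : oprod (coact ι F) J * oprod (coact ι E) N
      = ∑ S : Finset (Fin n), ∑ S' : Finset (Fin n), ∑ W ∈ (S ∪ S').powerset,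
        rho q 0 S S' W • (ι (qMinor k n q S J * qMinor k n q S' N)
          * κ (oprod e (snat n S S' W) * oprod f W)) := by
    rw [oprod_coact ι hF hψ hxF, oprod_coact ι hE hη hxE, Finset.sum_mul_sum]
    refine Finset.sum_congr rfl fun S _ => Finset.sum_congr rfl fun S' _ => ?_
    have h1 := exchange hq hE hF hEF S S' 0
    rw [gPow_zero] at h1
    have h2 : Commute (ι (qMinor k n q S' N)) (oprod F S) := by rw [oF]; exact hcomm _ _
    rw [mul_assoc, ← mul_assoc (oprod F S), ← h2.eq, mul_assoc, h1, ← mul_assoc, Finset.mul_sum]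
    refine Finset.sum_congr rfl fun W _ => ?_
    rw [mul_smul_comm, map_mul, map_mul, oE, oF]
  -- exchange first, then expand
  have s2 : oprod (coact ι F) J * oprod (coact ι E) N
      = ∑ T ∈ (J ∪ N).powerset, rho q 0 J N T • ∑ M : Finset (Fin n), ∑ I : Finset (Fin n),
        (ι (qMinor k n q M (snat n J N T) * qMinor k n q I T)
          * κ (oprod e M * oprod f I)) := by
    have h1 := exchange hq hη hψ hηψ J N 0
    rw [gPow_zero] at h1
    rw [h1]
    refine Finset.sum_congr rfl fun T _ => ?_
    rw [oprod_coact ι hF hψ hxF, oprod_coact ι hE hη hxE, Finset.sum_mul_sum]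
    congr 1
    refine Finset.sum_congr rfl fun M _ => Finset.sum_congr rfl fun I _ => ?_
    have h2 : Commute (ι (qMinor k n q I T)) (oprod E M) := by rw [oE]; exact hcomm _ _
    rw [mul_assoc, ← mul_assoc (oprod E M), ← h2.eq, mul_assoc, ← mul_assoc, map_mul, map_mul, oE,
      oF]
  have s3 := congrArg Φ (s1.symm.trans s2)
  simp only [map_sum, map_smul, hΦ] at s3
  convert s3 using 1
  · refine Finset.sum_congr rfl fun S _ => Finset.sum_congr rfl fun S' _ =>
      Finset.sum_congr rfl fun W _ => ?_
    split_ifs <;> simp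
  · refine Finset.sum_congr rfl fun T _ => ?_
    rw [Finset.sum_eq_single M, Finset.sum_eq_single I]
    · simp
    · intro b _ hb
      rw [if_neg fun h => hb h.2.symm]
    · simp
    · intro b _ hb
      exact Finset.sum_eq_zero fun c _ => if_neg fun h => hb h.1.symm
    · simp

/-- Comparison of the coefficients of `e_M f_I` in `φ_J η_N`, exchanging the two factors before
or after expanding them in quantum minors. -/
theorem coeff_compare (hq : q ≠ 0) (I J M N : Finset (Fin n)) :
    ∑ S : Finset (Fin n), ∑ S' : Finset (Fin n), ∑ W ∈ (S ∪ S').powerset,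
        (if M = snat n S S' W ∧ I = W then rho q 0 S S' W else 0) •
          (qMinor k n q S J * qMinor k n q S' N)
      = ∑ T ∈ (J ∪ N).powerset,
        rho q 0 J N T • (qMinor k n q M (snat n J N T) * qMinor k n q I T) := by
  obtain ⟨B, _, _, e, f, he, hf, hc, φ, hφ⟩ := exists_model hq (Finset.univ : Finset (Fin n))
  refine coeff_compare_aux (R := A k n q ⊗[k] B) hq he hf hc Algebra.TensorProduct.includeLeft
    Algebra.TensorProduct.includeRight (tensor_commute _ _) I J M N (sliceMap _ _ (φ M I)) ?_
  intro a M' I'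
  rw [sliceMap_apply, hφ _ _ _ _ (Finset.subset_univ _) (Finset.subset_univ _)
    (Finset.subset_univ _) (Finset.subset_univ _)]
  split_ifs <;> simp

/-- Exchanging `(S, S')` produces `(I, M)` exactly when `S'` is the complement `S^♮` of `S` relative
to `(I, M)`; the passage to complements is an involution. -/
theorem snat_condition (I M S S' : Finset (Fin n)) :
    (I ⊆ S ∪ S' ∧ M = snat n S S' I ∧ S ∩ S' ⊆ I) ↔
      (S' = snat n I M S ∧ I ∩ M ⊆ S ∧ S ⊆ I ∪ M) := by
  unfold snat
  simp only [Finset.subset_iff, Finset.ext_iff, Finset.mem_union, Finset.mem_inter,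
    Finset.mem_sdiff]
  rw [← forall_and, ← forall_and, ← forall_and, ← forall_and]
  exact forall_congr' fun y => by tauto

theorem Lnat_eq_Lfun {I M S : Finset (Fin n)} (h1 : I ∩ M ⊆ S) (h2 : S ⊆ I ∪ M) :
    Lnat n I S (snat n I M S) = Lfun n S I M := by
  have h := ((snat_condition I M S _).2 ⟨rfl, h1, h2⟩).2.1
  rw [Lnat, ← h, Lfun, Finset.union_comm (M \ I)]

theorem inter_snat {I M S : Finset (Fin n)} (h1 : I ∩ M ⊆ S) :
    S ∩ snat n I M S = I ∩ M := by
  unfold snat; grind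

theorem rho_zero_eq {J N T : Finset (Fin n)} (h1 : J ∩ N ⊆ T) (h2 : T.card = J.card) :
    rho q 0 J N T = q ^ (J ∩ N).card * ((q - q⁻¹) ^ (T \ J).card * (-q) ^ (Lnat n T J N)
      * xiq k n q (T \ J) (J \ T)) := by
  have h3 := card_sdiff_eq (d := 0) (J := J) (T := T) (by simpa using h2)
  rw [rho, if_pos ⟨h1, by simpa using h2⟩, xiq_eq_xprod (by simpa using h3.symm)]
  simp [mul_assoc]

theorem rho_self (J N : Finset (Fin n)) : rho q 0 J N J = q ^ (J ∩ N).card := by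
  rw [rho, if_pos ⟨Finset.inter_subset_left, by simp⟩]
  simp [Lnat, ell, xprod]

theorem snat_self (J N : Finset (Fin n)) : snat n J N J = N := by
  unfold snat; grind

theorem setLE_refl (J : Finset (Fin n)) : setLE n J J := ⟨rfl, fun _ _ => le_rfl⟩

/-- The side expanded after the exchange: only `T ≥ J` contribute, and `T = J` is the leading term. -/
theorem right_side (I J M N : Finset (Fin n)) :
    ∑ T ∈ (J ∪ N).powerset,
        rho q 0 J N T • (qMinor k n q M (snat n J N T) * qMinor k n q I T)
      = (q ^ (J ∩ N).card) • (qMinor k n q M N * qMinor k n q I J)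
      + (q ^ (J ∩ N).card) •
          ∑ T ∈ sGT n J N,
            ((q - q⁻¹) ^ (T \ J).card * (-q) ^ (Lnat n T J N) * xiq k n q (T \ J) (J \ T)) •
              (qMinor k n q M (snat n J N T) * qMinor k n q I T) := by
  have hmem : J ∈ sGE n J N := Finset.mem_filter.mpr
    ⟨Finset.mem_powerset.mpr Finset.subset_union_left, Finset.inter_subset_left, rfl, setLE_refl _⟩
  rw [← Finset.sum_subset (s₁ := sGE n J N) (Finset.filter_subset _ _), sGT, Finset.filter_ne',
    ← Finset.add_sum_erase _ _ hmem, rho_self, snat_self, Finset.smul_sum]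
  · congr 1
    refine Finset.sum_congr rfl fun T hT => ?_
    have hT' := (Finset.mem_filter.mp (Finset.mem_of_mem_erase hT)).2
    rw [rho_zero_eq hT'.1 hT'.2.1, smul_smul]
  · intro T hT hT'
    have : rho q 0 J N T = 0 := by
      by_contra hne
      refine hT' (Finset.mem_filter.mpr ⟨hT, ?_⟩)
      rw [rho] at hne
      split_ifs at hne with hc
      · have hcard : T.card = J.card := by simpa using hc.2
        exact ⟨hc.1, hcard, setLE_of_xprod_ne hcard (right_ne_zero_of_mul hne)⟩
      · exact absurd rfl hne
    rw [this, zero_smul]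

/-- The side expanded before the exchange: the coefficient of `e_M f_I` comes only from the pairs
`(S, S^♮)` with `S ≤ I`, and `S = I` is the leading term. -/
theorem left_side (I J M N : Finset (Fin n)) :
    ∑ S : Finset (Fin n), ∑ S' : Finset (Fin n), ∑ W ∈ (S ∪ S').powerset,
        (if M = snat n S S' W ∧ I = W then rho q 0 S S' W else 0) •
          (qMinor k n q S J * qMinor k n q S' N)
      = (q ^ (I ∩ M).card) • (qMinor k n q I J * qMinor k n q M N)
      + (q ^ (I ∩ M).card) •
          ∑ S ∈ sLT n I M,
            ((q - q⁻¹) ^ (I \ S).card * (-q) ^ (Lfun n S I M) * xiq k n q (I \ S) (S \ I)) •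
              (qMinor k n q S J * qMinor k n q (snat n I M S) N) := by
  have hmem : I ∈ sLE n I M := Finset.mem_filter.mpr
    ⟨Finset.mem_powerset.mpr Finset.subset_union_left, Finset.inter_subset_left, rfl, setLE_refl _⟩
  -- only `W = I` contributes, and then `S'` is determined by `S`
  have step1 : ∀ S S' : Finset (Fin n), ∑ W ∈ (S ∪ S').powerset,
        (if M = snat n S S' W ∧ I = W then rho q 0 S S' W else 0) •
          (qMinor k n q S J * qMinor k n q S' N)
      = if S' = snat n I M S then
          (if I ∩ M ⊆ S ∧ S ⊆ I ∪ M then rho q 0 S (snat n I M S) I else 0) •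
            (qMinor k n q S J * qMinor k n q (snat n I M S) N) else 0 := by
    intro S S'
    have a1 : ∑ W ∈ (S ∪ S').powerset,
        (if M = snat n S S' W ∧ I = W then rho q 0 S S' W else 0) •
          (qMinor k n q S J * qMinor k n q S' N)
        = (if I ⊆ S ∪ S' ∧ M = snat n S S' I ∧ S ∩ S' ⊆ I then rho q 0 S S' I else 0) •
          (qMinor k n q S J * qMinor k n q S' N) := by
      rw [← Finset.sum_smul]
      congr 1
      by_cases hI : I ⊆ S ∪ S'
      · rw [Finset.sum_eq_single_of_mem I (Finset.mem_powerset.mpr hI)]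
        · by_cases hK : S ∩ S' ⊆ I
          · simp [hI, hK]
          · have : rho q 0 S S' I = 0 := by rw [rho, if_neg fun h => hK h.1]
            simp [this]
        · intro W _ hW
          exact if_neg fun h => hW h.2.symm
      · rw [if_neg fun h => hI h.1]
        refine Finset.sum_eq_zero fun W hW => if_neg ?_
        rintro ⟨-, rfl⟩
        exact hI (Finset.mem_powerset.mp hW)
    rw [a1]
    by_cases hS : S' = snat n I M S
    · have hiff := snat_condition I M S S'
      by_cases hc : I ∩ M ⊆ S ∧ S ⊆ I ∪ M
      · rw [if_pos (hiff.2 ⟨hS, hc⟩), if_pos hS, if_pos hc, hS]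
      · rw [if_neg fun h => hc (hiff.1 h).2, if_pos hS, if_neg hc, zero_smul, zero_smul]
    · rw [if_neg fun h => hS ((snat_condition I M S S').1 h).1, if_neg hS, zero_smul]
  simp only [step1, Finset.sum_ite_eq', Finset.mem_univ, if_true]
  rw [← Finset.sum_subset (s₁ := sLE n I M) (Finset.subset_univ _), sLT, Finset.filter_ne',
    ← Finset.add_sum_erase _ _ hmem,
    if_pos ⟨Finset.inter_subset_left, Finset.subset_union_left⟩, rho_self, snat_self,
    Finset.smul_sum]
  · congr 1
    refine Finset.sum_congr rfl fun S hS => ?_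
    have hS' := Finset.mem_filter.mp (Finset.mem_of_mem_erase hS)
    have hS1 := Finset.mem_powerset.mp hS'.1
    have hc := (snat_condition I M S _).2 ⟨rfl, hS'.2.1, hS1⟩
    rw [if_pos ⟨hS'.2.1, hS1⟩, rho_zero_eq hc.2.2 hS'.2.2.1.symm, smul_smul,
      Lnat_eq_Lfun hS'.2.1 hS1, inter_snat hS'.2.1]
  · intro S _ hS'
    have : (if I ∩ M ⊆ S ∧ S ⊆ I ∪ M then rho q 0 S (snat n I M S) I else 0) = 0 := by
      by_contra hne
      split_ifs at hne with hc
      · refine hS' (Finset.mem_filter.mpr ⟨Finset.mem_powerset.mpr hc.2, hc.1, ?_⟩)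
        rw [rho] at hne
        split_ifs at hne with hc'
        · have hcard : I.card = S.card := by simpa using hc'.2
          exact ⟨hcard.symm, setLE_of_xprod_ne hcard (right_ne_zero_of_mul hne)⟩
        · exact absurd rfl hne
      · exact absurd rfl hne
    rw [this, zero_smul]

end Final

end QMat

/-- Theorem 5.2: the general commutation relation (5.4). -/
theorem stmt15 (k : Type*) [Field k] (n : ℕ) (hn : 0 < n) (q : k) (hq : q ≠ 0)
    (I J M N : Finset (Fin n)) (hIJ : I.card = J.card) (hMN : M.card = N.card) :
    (q ^ (I ∩ M).card) • (qMinor k n q I J * qMinor k n q M N)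
      + (q ^ (I ∩ M).card) •
          ∑ S ∈ sLT n I M,
            ((q - q⁻¹) ^ (I \ S).card * (-q) ^ (Lfun n S I M) * xiq k n q (I \ S) (S \ I)) •
              (qMinor k n q S J * qMinor k n q (snat n I M S) N)
    = (q ^ (J ∩ N).card) • (qMinor k n q M N * qMinor k n q I J)
      + (q ^ (J ∩ N).card) •
          ∑ T ∈ sGT n J N,
            ((q - q⁻¹) ^ (T \ J).card * (-q) ^ (Lnat n T J N) * xiq k n q (T \ J) (J \ T)) •
              (qMinor k n q M (snat n J N T) * qMinor k n q I T) := by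
  rw [← left_side, coeff_compare hq, right_side]

end
end
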